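/- arXiv:math/0308229 — 12 statements merged into one kernel-verified Lean document; each statement's English description precedes it below -/
import Mathlib

section
/- Let V ⊆ U be a right coideal (i.e., Δ(V) ⊆ V ⊗ U) and let ρ: V → X be a ℂ-linear map such that x·ρ(v) = Σ ρ(v₍₁₎)·(x ◁ v₍₂₎) holds in X for every v ∈ V and every x in a generating set X₀ of the algebra X. Then for every v ∈ V the element ξ(v) := Σ j(ρ(v₍₁₎))·i(S(v₍₂₎)) of A commutes with j(x) for every x ∈ X. -/
open scoped TensorProduct

noncomputable section

/-- For a right action `act` (`act f x = x ◁ f`), the Sweedler sum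
`Σ (x ◁ f₍₁₎) * (y ◁ f₍₂₎)`. -/
def sweedlerMulAct {U X : Type*} [AddCommMonoid U] [Module ℂ U]
    [Coalgebra ℂ U] [Ring X] [Algebra ℂ X]
    (act : U →ₗ[ℂ] X →ₗ[ℂ] X) (f : U) (x y : X) : X :=
  TensorProduct.lift ((LinearMap.mul ℂ X).compl₁₂ (act.flip x) (act.flip y))
    (Coalgebra.comul f)

/-- The Sweedler sum `Σ i(f₍₁₎) * j(x ◁ f₍₂₎)` appearing in the cross relation of the
cross product algebra `U ⋉ X` realized inside an ambient algebra `A`. -/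
def crossRHS {U X A : Type*} [Semiring U] [Algebra ℂ U] [Coalgebra ℂ U]
    [Ring X] [Algebra ℂ X] [Ring A] [Algebra ℂ A]
    (i : U →ₐ[ℂ] A) (j : X →ₐ[ℂ] A) (act : U →ₗ[ℂ] X →ₗ[ℂ] X) (x : X) (f : U) : A :=
  TensorProduct.lift
    ((LinearMap.mul ℂ A).compl₁₂ i.toLinearMap (j.toLinearMap ∘ₗ act.flip x))
    (Coalgebra.comul f)

/-- The Sweedler sum `Σ ρ(v₍₁₎) * (x ◁ v₍₂₎)`. -/
def rhoSweedler {U X : Type*} [AddCommMonoid U] [Module ℂ U] [Coalgebra ℂ U]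
    [Ring X] [Algebra ℂ X]
    (act : U →ₗ[ℂ] X →ₗ[ℂ] X) (ρ : U →ₗ[ℂ] X) (x : X) (v : U) : X :=
  TensorProduct.lift ((LinearMap.mul ℂ X).compl₁₂ ρ (act.flip x))
    (Coalgebra.comul v)

/-- The element `ξ(v) = Σ j(ρ(v₍₁₎)) * i(S(v₍₂₎))` of the ambient algebra `A`. -/
def xiElem {U X A : Type*} [Ring U] [HopfAlgebra ℂ U]
    [Ring X] [Algebra ℂ X] [Ring A] [Algebra ℂ A]
    (i : U →ₐ[ℂ] A) (j : X →ₐ[ℂ] A) (ρ : U →ₗ[ℂ] X) (v : U) : A :=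
  TensorProduct.lift
    ((LinearMap.mul ℂ A).compl₁₂ (j.toLinearMap ∘ₗ ρ)
      (i.toLinearMap ∘ₗ HopfAlgebra.antipode (R := ℂ)))
    (Coalgebra.comul v)

end

open WithConv in
theorem lift_eq_conv {U A : Type*} [Ring U] [HopfAlgebra ℂ U] [Ring A] [Algebra ℂ A]
    (f g : U →ₗ[ℂ] A) (v : U) :
    TensorProduct.lift ((LinearMap.mul ℂ A).compl₁₂ f g) (Coalgebra.comul v)
      = (toConv f * toConv g) v := by
  rw [LinearMap.convMul_apply]
  induction (Coalgebra.comul (R := ℂ) v) using TensorProduct.induction_on with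
  | zero => simp
  | tmul a b => simp
  | add a b ha hb => rw [map_add, ha, hb, map_add, map_add]

/-- The map `f ↦ ε(f) c`. -/
noncomputable def cstMap (U : Type*) {A : Type*} [Ring U] [HopfAlgebra ℂ U] [Ring A] [Algebra ℂ A]
    (c : A) : U →ₗ[ℂ] A := (Coalgebra.counit (R := ℂ) (A := U)).smulRight c

open WithConv in
theorem cst_conv {U A : Type*} [Ring U] [HopfAlgebra ℂ U] [Ring A] [Algebra ℂ A]
    (c : A) (f : U →ₗ[ℂ] A) (v : U) : (toConv (cstMap U c) * toConv f) v = c * f v := by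
  rw [(Coalgebra.Repr.arbitrary ℂ v).convMul_apply]
  conv_rhs => rw [← Coalgebra.sum_counit_smul (Coalgebra.Repr.arbitrary ℂ v)]
  simp [cstMap, Finset.mul_sum]

open WithConv in
theorem conv_cst {U A : Type*} [Ring U] [HopfAlgebra ℂ U] [Ring A] [Algebra ℂ A]
    (c : A) (f : U →ₗ[ℂ] A) (v : U) : (toConv f * toConv (cstMap U c)) v = f v * c := by
  have h : toConv f * toConv (cstMap U c)
      = toConv ((LinearMap.mulRight ℂ c) ∘ₗ (toConv f * 1).ofConv) := by
    ext w
    rw [(Coalgebra.Repr.arbitrary ℂ w).convMul_apply]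
    change _ = (toConv f * 1 : WithConv (U →ₗ[ℂ] A)) w * c
    rw [(Coalgebra.Repr.arbitrary ℂ w).convMul_apply]
    simp [cstMap, Finset.sum_mul, Algebra.algebraMap_eq_smul_one]
  rw [h, mul_one]
  rfl

open WithConv in
theorem conv_congr {U A : Type*} [Ring U] [HopfAlgebra ℂ U] [Ring A] [Algebra ℂ A]
    (V : Submodule ℂ U) (v : U) (hv : Coalgebra.comul (R := ℂ) v ∈
      LinearMap.range (TensorProduct.mapIncl V (⊤ : Submodule ℂ U)))
    (F G T : WithConv (U →ₗ[ℂ] A)) (h : ∀ w ∈ V, F w = G w) :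
    (F * T) v = (G * T) v := by
  obtain ⟨t, ht⟩ := hv
  rw [LinearMap.convMul_apply, LinearMap.convMul_apply, ← ht]
  clear ht
  induction t using TensorProduct.induction_on with
  | zero => simp
  | tmul a b => simp [TensorProduct.mapIncl, h a a.2]
  | add a b ha hb => simp only [map_add, ha, hb]

/-- Let `U` be a Hopf algebra over ℂ, `X` a unital right `U`-module algebra
(with right action `act f x = x ◁ f`), and let the cross product algebra `U ⋉ X` be
modelled inside an ambient unital ℂ-algebra `A` via unital algebra homomorphisms
`i : U → A`, `j : X → A` satisfying `j(x) i(f) = Σ i(f₍₁₎) j(x ◁ f₍₂₎)`.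
If `V ⊆ U` is a right coideal (`Δ(V) ⊆ V ⊗ U`) and `ρ : V → X` is a linear map
(here extended to `U`) with `x ρ(v) = Σ ρ(v₍₁₎)(x ◁ v₍₂₎)` for all `v ∈ V` and all `x`
in a generating set `X₀` of `X`, then for every `v ∈ V` the element
`ξ(v) = Σ j(ρ(v₍₁₎)) i(S(v₍₂₎))` commutes with `j(x)` for every `x ∈ X`. -/
theorem stmt_1 {U X A : Type*} [Ring U] [HopfAlgebra ℂ U]
    [Ring X] [Algebra ℂ X] [Ring A] [Algebra ℂ A]
    (act : U →ₗ[ℂ] X →ₗ[ℂ] X)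
    -- `X` is a right `U`-module:
    (hact_mul : ∀ (f g : U) (x : X), act (f * g) x = act g (act f x))
    (hact_one : ∀ x : X, act 1 x = x)
    -- `X` is a right `U`-module algebra:
    (hact_prod : ∀ (f : U) (x y : X), act f (x * y) = sweedlerMulAct act f x y)
    (hact_unit : ∀ f : U, act f 1 = Coalgebra.counit (R := ℂ) f • (1 : X))
    -- the ambient algebra model of the cross product algebra `U ⋉ X`:
    (i : U →ₐ[ℂ] A) (j : X →ₐ[ℂ] A)
    (hcross : ∀ (x : X) (f : U), j x * i f = crossRHS i j act x f)
    -- `V` is a right coideal of `U`: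
    (V : Submodule ℂ U)
    (hV : ∀ v ∈ V, Coalgebra.comul (R := ℂ) v ∈
      LinearMap.range (TensorProduct.mapIncl V (⊤ : Submodule ℂ U)))
    -- `X₀` generates `X` as an algebra:
    (X₀ : Set X) (hgen : Algebra.adjoin ℂ X₀ = ⊤)
    -- `ρ` satisfies `x ρ(v) = Σ ρ(v₍₁₎)(x ◁ v₍₂₎)` on `V` and `X₀`:
    (ρ : U →ₗ[ℂ] X)
    (hρ : ∀ v ∈ V, ∀ x ∈ X₀, x * ρ v = rhoSweedler act ρ x v) :
    ∀ v ∈ V, ∀ x : X, xiElem i j ρ v * j x = j x * xiElem i j ρ v := by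
  intro v hv x
  have hx : x ∈ Algebra.adjoin ℂ X₀ := hgen ▸ Algebra.mem_top
  induction hx using Algebra.adjoin_induction with
  | algebraMap r =>
    rw [AlgHom.commutes]
    exact (Algebra.commutes r _).symm
  | add x y _ _ h1 h2 => rw [map_add, mul_add, add_mul, h1, h2]
  | mul x y _ _ h1 h2 => rw [map_mul, ← mul_assoc, h1, mul_assoc, h2, mul_assoc]
  | mem x hx =>
    let I : WithConv (U →ₗ[ℂ] A) := WithConv.toConv i.toLinearMap
    let T : WithConv (U →ₗ[ℂ] A) :=
      WithConv.toConv (i.toLinearMap ∘ₗ HopfAlgebra.antipode (R := ℂ))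
    let J : WithConv (U →ₗ[ℂ] A) := WithConv.toConv (j.toLinearMap ∘ₗ act.flip x)
    let R : WithConv (U →ₗ[ℂ] A) := WithConv.toConv (j.toLinearMap ∘ₗ ρ)
    let C : WithConv (U →ₗ[ℂ] A) := WithConv.toConv (cstMap U (j x))
    have hTI : T * I = 1 := by
      ext w
      rw [(Coalgebra.Repr.arbitrary ℂ w).convMul_apply]
      have := congrArg i
        (HopfAlgebra.sum_antipode_mul_eq_algebraMap_counit (Coalgebra.Repr.arbitrary ℂ w))
      simpa [T, I] using this
    have hIT : I * T = 1 := by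
      ext w
      rw [(Coalgebra.Repr.arbitrary ℂ w).convMul_apply]
      have := congrArg i
        (HopfAlgebra.sum_mul_antipode_eq_algebraMap_counit (Coalgebra.Repr.arbitrary ℂ w))
      simpa [T, I] using this
    have hCI : C * I = I * J := by
      ext w
      have h1 := hcross x w
      rw [crossRHS, lift_eq_conv] at h1
      exact (cst_conv (j x) i.toLinearMap w).trans h1
    have hJT : J * T = T * C := by
      calc J * T = T * I * J * T := by rw [hTI, one_mul]
        _ = T * (C * I) * T := by rw [hCI, mul_assoc T I J]
        _ = T * C := by rw [mul_assoc, mul_assoc, hIT, mul_one]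
    have hCR : ∀ w ∈ V, (C * R) w = (R * J) w := by
      intro w hw
      refine (cst_conv (j x) (j.toLinearMap ∘ₗ ρ) w).trans ?_
      have h1 := congrArg j (hρ w hw x hx)
      rw [rhoSweedler, lift_eq_conv, (Coalgebra.Repr.arbitrary ℂ w).convMul_apply] at h1
      rw [(Coalgebra.Repr.arbitrary ℂ w).convMul_apply]
      simpa [R, J] using h1
    have hξ : xiElem i j ρ v = (R * T) v := lift_eq_conv _ _ v
    have e1 : (C * (R * T)) v = j x * (R * T) v := cst_conv (j x) (R * T).ofConv v
    have e2 : ((R * T) * C) v = (R * T) v * j x := conv_cst (j x) (R * T).ofConv v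
    rw [hξ, ← e1, ← e2, ← mul_assoc, conv_congr V v (hV v hv) _ _ T hCR, mul_assoc, mul_assoc, hJT]
end

section
/- With N := zX − γ and N̄ := X̄z̄ − γ, the following identities hold in A: zN = q²Nz, z̄N = Nz̄, N̄N = NN̄, and z̄zN̄N = N̄Nz̄z. -/
/-- In a unital ℂ-algebra `A` with elements `z, zb, X, Xb` satisfying the
defining relations of the cross product ∗-algebra `U₀ ⋉ O(C_q)` (with `q ≠ 0`, `q² ≠ 1`,
`γ = (1 - q²)⁻¹`), the elements `N := z*X - γ•1` and `Nb := Xb*zb - γ•1` satisfy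
`zN = q²Nz`, `zb N = N zb`, `Nb N = N Nb` and `zb z Nb N = Nb N zb z`. -/
theorem stmt_2 {A : Type*} [Ring A] [Algebra ℂ A]
    (q : ℂ) (hq : q ≠ 0) (hq2 : q ^ 2 ≠ 1)
    (z zb X Xb : A)
    (h1 : zb * z = q ^ 2 • (z * zb))
    (h2 : Xb * X = q ^ 2 • (X * Xb))
    (h3 : z * X = q ^ 2 • (X * z) + 1)
    (h4 : z * Xb = q ^ 2 • (Xb * z))
    (h5 : zb * X = (q ^ 2)⁻¹ • (X * zb))
    (h6 : zb * Xb = (q ^ 2)⁻¹ • (Xb * zb) - (q ^ 2)⁻¹ • (1 : A))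
    (N Nb : A)
    (hN : N = z * X - (1 - q ^ 2)⁻¹ • (1 : A))
    (hNb : Nb = Xb * zb - (1 - q ^ 2)⁻¹ • (1 : A)) :
    z * N = q ^ 2 • (N * z) ∧
    zb * N = N * zb ∧
    Nb * N = N * Nb ∧
    zb * z * (Nb * N) = Nb * N * (zb * z) := by
  have hp : q ^ 2 ≠ 0 := pow_ne_zero 2 hq
  have hd : 1 - q ^ 2 ≠ 0 := sub_ne_zero.mpr (Ne.symm hq2)
  generalize q ^ 2 = p at *
  have hN' : N = p • (X * z - (1 - p)⁻¹ • (1 : A)) := by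
    rw [hN, h3]
    have : (1 : A) = ((1 - p)⁻¹ - p * (1 - p)⁻¹) • (1 : A) := by
      have e : (1 - p)⁻¹ - p * (1 - p)⁻¹ = 1 := by field_simp
      rw [e, one_smul]
    nth_rewrite 1 [this]
    module
  have a1 : z * N = p • (N * z) := by
    rw [hN', mul_smul_comm, ← hN', hN]
    simp only [mul_sub, sub_mul, mul_assoc, mul_smul_comm, smul_mul_assoc, mul_one, one_mul]
  have a2 : zb * N = N * zb := by
    rw [hN, mul_sub, sub_mul, ← mul_assoc, h1, smul_mul_assoc, mul_assoc, h5, mul_smul_comm,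
      smul_smul, mul_inv_cancel₀ hp]
    simp [mul_assoc]
  have h4' : Xb * z = p⁻¹ • (z * Xb) := by
    rw [h4, smul_smul, inv_mul_cancel₀ hp, one_smul]
  have a3 : Xb * N = N * Xb := by
    rw [hN, mul_sub, sub_mul, ← mul_assoc, h4', smul_mul_assoc, mul_assoc, h2, mul_smul_comm,
      smul_smul, inv_mul_cancel₀ hp]
    simp [mul_assoc]
  have a4 : Nb * N = N * Nb := by
    rw [hNb, sub_mul, mul_sub, mul_assoc, a2, ← mul_assoc, a3]
    simp [mul_assoc]
  have a5 : z * Nb = Nb * z := by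
    rw [hNb, sub_mul, mul_sub, ← mul_assoc, h4, mul_assoc Xb, h1]
    simp [mul_assoc]
  have a6 : zb * Nb = p⁻¹ • (Nb * zb) := by
    have e : (1 - p)⁻¹ = p⁻¹ * (1 - p)⁻¹ - p⁻¹ := by field_simp; ring
    rw [hNb, mul_sub, ← mul_assoc, h6]
    simp only [sub_mul, mul_smul_comm, smul_mul_assoc, mul_one, one_mul]
    nth_rewrite 1 [e]
    module
  refine ⟨a1, a2, a4, ?_⟩
  calc zb * z * (Nb * N) = zb * (z * Nb) * N := by simp only [mul_assoc]
    _ = (zb * Nb) * (z * N) := by rw [a5]; simp only [mul_assoc]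
    _ = Nb * (zb * N) * z := by
      rw [a6, a1, smul_mul_assoc, mul_smul_comm, smul_smul, inv_mul_cancel₀ hp, one_smul]
      simp only [mul_assoc]
    _ = Nb * N * (zb * z) := by rw [a2]; simp only [mul_assoc]
end

section
/- There is a ∗-algebra isomorphism θ: U_q(e₂)⋉O(E_q(2)) → O(E_q(2))⋊U_q(e₂) determined on generators by θ(v) = v, θ(n) = n*, θ(K) = K⁻¹, θ(E) = F (hence θ(v*) = v*, θ(n*) = n, θ(K⁻¹) = K, θ(F) = E), and the map given by the same formulas in the opposite direction is its inverse. -/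
/-- The defining relations of the left cross product ∗-algebra `U_q(e₂) ⋉ O(E_q(2))` on
elements `v, n, E, F, K, K'` (`K'` playing the role of `K⁻¹`) of a ∗-algebra over ℂ,
including the involution conditions `K* = K`, `K'* = K'`, `E* = F`. -/
def Eq2LeftRel {A : Type} [Ring A] [Algebra ℂ A] [StarRing A]
    (q : ℝ) (v n E F K K' : A) : Prop :=
  star K = K ∧ star K' = K' ∧ star E = F ∧
  star v * v = 1 ∧ v * star v = 1 ∧ n * star n = star n * n ∧
  n * v = (q : ℂ) • (v * n) ∧
  K * K' = 1 ∧ K' * K = 1 ∧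
  K * F = (q : ℂ) • (F * K) ∧ K * E = (q : ℂ)⁻¹ • (E * K) ∧ E * F = F * E ∧
  v * F = (Real.sqrt q : ℂ) • (F * v) ∧
  v * E = (Real.sqrt q : ℂ) • (E * v) ∧
  v * K = (Real.sqrt q : ℂ) • (K * v) ∧
  star v * F = (Real.sqrt q : ℂ)⁻¹ • (F * star v) ∧
  star v * E = (Real.sqrt q : ℂ)⁻¹ • (E * star v) ∧
  star v * K = (Real.sqrt q : ℂ)⁻¹ • (K * star v) ∧
  n * F = (Real.sqrt q : ℂ) • (F * n) + K' * star v ∧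
  n * E = (Real.sqrt q : ℂ) • (E * n) ∧
  n * K = (Real.sqrt q : ℂ) • (K * n) ∧
  star n * F = (Real.sqrt q : ℂ)⁻¹ • (F * star n) ∧
  star n * E = (Real.sqrt q : ℂ)⁻¹ • (E * star n) - (q : ℂ)⁻¹ • (K' * v) ∧
  star n * K = (Real.sqrt q : ℂ)⁻¹ • (K * star n)

/-- The defining relations of the right cross product ∗-algebra `O(E_q(2)) ⋊ U_q(e₂)`. -/
def Eq2RightRel {B : Type} [Ring B] [Algebra ℂ B] [StarRing B]
    (q : ℝ) (v n E F K K' : B) : Prop :=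
  star K = K ∧ star K' = K' ∧ star E = F ∧
  star v * v = 1 ∧ v * star v = 1 ∧ n * star n = star n * n ∧
  n * v = (q : ℂ) • (v * n) ∧
  K * K' = 1 ∧ K' * K = 1 ∧
  K * F = (q : ℂ) • (F * K) ∧ K * E = (q : ℂ)⁻¹ • (E * K) ∧ E * F = F * E ∧
  F * v = (Real.sqrt q : ℂ)⁻¹ • (v * F) ∧
  E * v = (Real.sqrt q : ℂ)⁻¹ • (v * E) ∧
  K * v = (Real.sqrt q : ℂ) • (v * K) ∧
  F * star v = (Real.sqrt q : ℂ) • (star v * F) ∧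
  E * star v = (Real.sqrt q : ℂ) • (star v * E) ∧
  K * star v = (Real.sqrt q : ℂ)⁻¹ • (star v * K) ∧
  F * n = (Real.sqrt q : ℂ) • (n * F) + v * K ∧
  E * n = (Real.sqrt q : ℂ) • (n * E) ∧
  K * n = (Real.sqrt q : ℂ)⁻¹ • (n * K) ∧
  F * star n = (Real.sqrt q : ℂ)⁻¹ • (star n * F) ∧
  E * star n = (Real.sqrt q : ℂ)⁻¹ • (star n * E) - (q : ℂ)⁻¹ • (star v * K) ∧
  K * star n = (Real.sqrt q : ℂ) • (star n * K)

/-- `A` together with the elements `v, n, E, F, K, K'` is the universal unital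
ℂ-∗-algebra on these generators subject to the relations of `U_q(e₂) ⋉ O(E_q(2))`. -/
def IsUniversalEq2Left (q : ℝ) (A : Type) [Ring A] [Algebra ℂ A] [StarRing A]
    [StarModule ℂ A] (v n E F K K' : A) : Prop :=
  Eq2LeftRel q v n E F K K' ∧
  ∀ (B : Type) [Ring B] [Algebra ℂ B] [StarRing B] [StarModule ℂ B],
    ∀ v' n' E' F' L L' : B, Eq2LeftRel q v' n' E' F' L L' →
      ∃! φ : A →⋆ₐ[ℂ] B,
        φ v = v' ∧ φ n = n' ∧ φ E = E' ∧ φ F = F' ∧ φ K = L ∧ φ K' = L'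

/-- `B` together with `v, n, E, F, K, K'` is the universal unital ℂ-∗-algebra subject to
the relations of `O(E_q(2)) ⋊ U_q(e₂)`. -/
def IsUniversalEq2Right (q : ℝ) (B : Type) [Ring B] [Algebra ℂ B] [StarRing B]
    [StarModule ℂ B] (v n E F K K' : B) : Prop :=
  Eq2RightRel q v n E F K K' ∧
  ∀ (C : Type) [Ring C] [Algebra ℂ C] [StarRing C] [StarModule ℂ C],
    ∀ v' n' E' F' L L' : C, Eq2RightRel q v' n' E' F' L L' →
      ∃! φ : B →⋆ₐ[ℂ] C,
        φ v = v' ∧ φ n = n' ∧ φ E = E' ∧ φ F = F' ∧ φ K = L ∧ φ K' = L'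


theorem aux_inv {A : Type} [Ring A] [Algebra ℂ A] {K K' x : A} {a : ℂ}
    (h1 : K * K' = 1) (h2 : K' * K = 1) (h : K * x = a • (x * K)) :
    x * K' = a • (K' * x) := by
  have : K' * (K * x) * K' = K' * (a • (x * K)) * K' := by rw [h]
  simp only [mul_smul_comm, smul_mul_assoc, mul_assoc, h1, mul_one] at this
  rwa [← mul_assoc, h2, one_mul] at this

theorem aux_swap {A : Type} [Ring A] [Algebra ℂ A] {x y : A} {a b : ℂ}
    (hab : b * a = 1) (h : x * y = a • (y * x)) : y * x = b • (x * y) := by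
  rw [h, smul_smul, hab, one_smul]

theorem aux_nv {A : Type} [Ring A] [Algebra ℂ A] [StarRing A] [StarModule ℂ A] {q : ℝ} {n v : A}
    (h1 : star v * v = 1) (h2 : v * star v = 1) (h : n * v = (q : ℂ) • (v * n)) :
    star n * v = (q : ℂ) • (v * star n) := by
  have h' := congrArg star h
  simp only [star_mul, star_smul, Complex.star_def, Complex.conj_ofReal] at h'
  exact aux_inv h1 h2 h'

theorem aux_RL {B : Type} [Ring B] [Algebra ℂ B] [StarRing B] [StarModule ℂ B]
    {q : ℝ} (hq : 0 < q) {v n E F K K' : B} (h : Eq2RightRel q v n E F K K') :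
    Eq2LeftRel q v (star n) F E K' K := by
  obtain ⟨hK, hK', hE, v1, v2, nn, nv, k1, k2, KF, KE, EF, Fv, Ev, Kv, Fv', Ev', Kv',
    Fn, En, Kn, Fn', En', Kn'⟩ := h
  have hs0 : (Real.sqrt q : ℂ) ≠ 0 := by
    exact_mod_cast (Real.sqrt_pos.2 hq).ne'
  have hqs : (q : ℂ) = (Real.sqrt q : ℂ) * (Real.sqrt q : ℂ) := by
    exact_mod_cast (Real.mul_self_sqrt hq.le).symm
  have hq0 : (q : ℂ) ≠ 0 := by exact_mod_cast hq.ne'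
  have a1 := mul_inv_cancel₀ hs0
  have a2 := inv_mul_cancel₀ hs0
  have b1 := mul_inv_cancel₀ hq0
  have b2 := inv_mul_cancel₀ hq0
  refine ⟨hK', hK, by rw [← hE, star_star], v1, v2, by rw [star_star, nn],
    aux_nv v1 v2 nv, k2, k1, aux_swap b1 (aux_inv k1 k2 KE), aux_swap b2 (aux_inv k1 k2 KF),
    EF.symm, aux_swap a1 Ev, aux_swap a1 Fv, aux_inv k1 k2 Kv, aux_swap a2 Ev', aux_swap a2 Fv',
    aux_inv k1 k2 Kv', ?_, aux_swap a1 Fn', aux_inv k1 k2 Kn', ?_, ?_, ?_⟩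
  · rw [En', Kv', hqs, smul_sub, smul_smul, smul_smul, a1, mul_inv, ← mul_assoc, a1]
    simp
  · rw [star_star]; exact aux_swap a2 En
  · rw [star_star, Fn, Kv, hqs, smul_add, smul_smul, smul_smul, a2, mul_inv, mul_assoc, a2]
    simp
  · rw [star_star]; exact aux_inv k1 k2 Kn

theorem aux_LR {B : Type} [Ring B] [Algebra ℂ B] [StarRing B] [StarModule ℂ B]
    {q : ℝ} (hq : 0 < q) {v n E F K K' : B} (h : Eq2LeftRel q v n E F K K') :
    Eq2RightRel q v (star n) F E K' K := by
  obtain ⟨hK, hK', hE, v1, v2, nn, nv, k1, k2, KF, KE, EF, Fv, Ev, Kv, Fv', Ev', Kv',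
    Fn, En, Kn, Fn', En', Kn'⟩ := h
  have hs0 : (Real.sqrt q : ℂ) ≠ 0 := by
    exact_mod_cast (Real.sqrt_pos.2 hq).ne'
  have hqs : (q : ℂ) = (Real.sqrt q : ℂ) * (Real.sqrt q : ℂ) := by
    exact_mod_cast (Real.mul_self_sqrt hq.le).symm
  have hq0 : (q : ℂ) ≠ 0 := by exact_mod_cast hq.ne'
  have a1 := mul_inv_cancel₀ hs0
  have a2 := inv_mul_cancel₀ hs0
  have b1 := mul_inv_cancel₀ hq0
  have b2 := inv_mul_cancel₀ hq0
  have wv := aux_swap a1 (aux_inv k1 k2 (aux_swap a2 Kv))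
  have wv' := aux_swap a2 (aux_inv k1 k2 (aux_swap a1 Kv'))
  have wn := aux_swap a1 (aux_inv k1 k2 (aux_swap a2 Kn))
  have wn' := aux_swap a2 (aux_inv k1 k2 (aux_swap a1 Kn'))
  refine ⟨hK', hK, by rw [← hE, star_star], v1, v2, by rw [star_star, nn],
    aux_nv v1 v2 nv, k2, k1, aux_swap b1 (aux_inv k1 k2 KE), aux_swap b2 (aux_inv k1 k2 KF),
    EF.symm, aux_swap a2 Ev, aux_swap a2 Fv, wv, aux_swap a1 Ev', aux_swap a1 Fv',
    wv', ?_, aux_swap a1 Fn', wn', ?_, ?_, ?_⟩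
  · rw [En', wv, hqs, smul_sub, smul_smul, smul_smul, smul_smul, a1, mul_inv]
    have : (Real.sqrt q : ℂ) * ((Real.sqrt q : ℂ)⁻¹ * (Real.sqrt q : ℂ)⁻¹ * (Real.sqrt q : ℂ)) = 1 := by
      field_simp
    simp only [mul_assoc] at this ⊢
    rw [this]; simp
  · rw [star_star]; exact aux_swap a2 En
  · rw [star_star, Fn, wv', hqs, smul_add, smul_smul, smul_smul, a2, mul_inv]
    have : (Real.sqrt q : ℂ)⁻¹ * (Real.sqrt q : ℂ)⁻¹ = ((Real.sqrt q : ℂ) * (Real.sqrt q : ℂ))⁻¹ := by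
      rw [mul_inv]
    simp
  · rw [star_star]; exact wn

/-- There is a ∗-algebra isomorphism
`θ : U_q(e₂) ⋉ O(E_q(2)) → O(E_q(2)) ⋊ U_q(e₂)` with `θ(v) = v`, `θ(n) = n*`,
`θ(K) = K⁻¹`, `θ(E) = F` (hence `θ(v*) = v*`, `θ(n*) = n`, `θ(K⁻¹) = K`, `θ(F) = E`),
whose inverse is given by the same formulas in the opposite direction. -/
theorem stmt_3 (q : ℝ) (hq0 : 0 < q) (hq1 : q < 1)
    (A : Type) [Ring A] [Algebra ℂ A] [StarRing A] [StarModule ℂ A]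
    (B : Type) [Ring B] [Algebra ℂ B] [StarRing B] [StarModule ℂ B]
    (v n E F K K' : A) (v' n' E' F' L L' : B)
    (hA : IsUniversalEq2Left q A v n E F K K')
    (hB : IsUniversalEq2Right q B v' n' E' F' L L') :
    ∃ θ : A ≃⋆ₐ[ℂ] B,
      θ v = v' ∧ θ n = star n' ∧ θ K = L' ∧ θ E = F' ∧
      θ (star v) = star v' ∧ θ (star n) = n' ∧ θ K' = L ∧ θ F = E' ∧
      θ.symm v' = v ∧ θ.symm n' = star n ∧ θ.symm L = K' ∧ θ.symm F' = E ∧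
      θ.symm (star v') = star v ∧ θ.symm (star n') = n ∧
      θ.symm L' = K ∧ θ.symm E' = F := by
  obtain ⟨rA, uA⟩ := hA
  obtain ⟨rB, uB⟩ := hB
  obtain ⟨φ, ⟨p1, p2, p3, p4, p5, p6⟩, -⟩ := uA B _ _ _ _ _ _ (aux_RL hq0 rB)
  obtain ⟨ψ, ⟨r1, r2, r3, r4, r5, r6⟩, -⟩ := uB A _ _ _ _ _ _ (aux_LR hq0 rA)
  have e1 : ψ.comp φ = StarAlgHom.id ℂ A := by
    refine (uA A _ _ _ _ _ _ rA).unique ?_ ⟨rfl, rfl, rfl, rfl, rfl, rfl⟩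
    simp [p1, p2, p3, p4, p5, p6, r1, r2, r3, r4, r5, r6, map_star]
  have e2 : φ.comp ψ = StarAlgHom.id ℂ B := by
    refine (uB B _ _ _ _ _ _ rB).unique ?_ ⟨rfl, rfl, rfl, rfl, rfl, rfl⟩
    simp [p1, p2, p3, p4, p5, p6, r1, r2, r3, r4, r5, r6, map_star]
  let θ : A ≃⋆ₐ[ℂ] B := StarAlgEquiv.ofStarAlgHom φ ψ e1 e2
  have t : ∀ x, θ x = φ x := fun _ => rfl
  have t' : ∀ x, θ.symm x = ψ x := fun _ => rfl
  refine ⟨θ, ?_⟩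
  simp only [t, t', map_star, p1, p2, p3, p4, p5, p6, r1, r2, r3, r4, r5, r6, star_star, and_self]
end

section
/- Under these hypotheses, z and z† are injective on D: if zη = 0 for some η ∈ D then η = 0, and likewise if z†η = 0 then η = 0. -/
/-- Let `D` be a complex inner product space, `z, zd, X : D → D` linear maps
with `⟨zξ, η⟩ = ⟨ξ, zd η⟩`, satisfying `zd ∘ z = q² z ∘ zd` and `z ∘ X - q² X ∘ z = id`
(with `0 < q < 1`).  Then `z` and `zd` are injective: `zη = 0 → η = 0` and
`zd η = 0 → η = 0`. -/
theorem stmt_5 {D : Type*} [NormedAddCommGroup D] [InnerProductSpace ℂ D]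
    (q : ℝ) (hq0 : 0 < q) (hq1 : q < 1)
    (z zd X : D →ₗ[ℂ] D)
    (hadj : ∀ ξ η : D, (inner ℂ (z ξ) η : ℂ) = inner ℂ ξ (zd η))
    (hrel1 : ∀ η : D, zd (z η) = ((q : ℂ) ^ 2) • z (zd η))
    (hrel2 : ∀ η : D, z (X η) - ((q : ℂ) ^ 2) • X (z η) = η) :
    (∀ η : D, z η = 0 → η = 0) ∧ (∀ η : D, zd η = 0 → η = 0) := by
  have hqc : (q : ℂ) ^ 2 ≠ 0 := pow_ne_zero _ (by exact_mod_cast hq0.ne')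
  have key : ∀ η : D, (inner ℂ (z η) (z η) : ℂ) = (q : ℂ) ^ 2 * inner ℂ (zd η) (zd η) := by
    intro η
    have h : (inner ℂ η (z (zd η)) : ℂ) = inner ℂ (zd η) (zd η) := by
      rw [← inner_conj_symm, hadj, inner_conj_symm]
    rw [hadj, hrel1, inner_smul_right, h]
  have h0 : ∀ η : D, z η = 0 → zd η = 0 → η = 0 := by
    intro η hz hd
    have h := hrel2 η
    rw [hz, map_zero, smul_zero, sub_zero] at h
    have h2 := hadj (X η) η
    rw [h, hd, inner_zero_right] at h2
    exact inner_self_eq_zero.mp h2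
  constructor
  · intro η hz
    have h := key η
    rw [hz, inner_zero_left] at h
    have h3 := (mul_eq_zero.mp h.symm).resolve_left hqc
    exact h0 η hz (inner_self_eq_zero.mp h3)
  · intro η hd
    have h := key η
    rw [hd, inner_zero_left, mul_zero] at h
    exact h0 η (inner_self_eq_zero.mp h) hd
end

section
/- The maps z, z†, E, F, K̂, K̂⁻¹ form a ∗-representation of the cross product ∗-algebra U_q(e₂)⋉O(C_q) on D: ⟨zξ, η⟩ = ⟨ξ, z†η⟩, ⟨Eξ, η⟩ = ⟨ξ, Fη⟩, ⟨K̂ξ, η⟩ = ⟨ξ, K̂η⟩ for all ξ, η ∈ D, and on D the relations hold: z†z = q²zz†; K̂K̂⁻¹ = K̂⁻¹K̂ = id; K̂F = qFK̂; K̂E = q⁻¹EK̂; EF = FE; zK̂ = qK̂z; zE = qEz; zF = qFz + q^{−1/2}K̂⁻¹; z†K̂ = q⁻¹K̂z†; z†E = q⁻¹Ez† − q^{−3/2}K̂⁻¹; z†F = q⁻¹Fz†. -/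
noncomputable section

/-- The inner product `⟨η, ζ⟩ = Σᵢ ⟨η(i), ζ(i)⟩` on the space of finitely supported
functions `ι →₀ H` with values in a complex inner product space `H`. -/
def finsuppInner {ι H : Type*} [NormedAddCommGroup H] [InnerProductSpace ℂ H]
    (η ζ : ι →₀ H) : ℂ :=
  η.sum fun i x => (inner ℂ x (ζ i) : ℂ)

namespace Stmt8

variable {K : Type*} [NormedAddCommGroup K] [InnerProductSpace ℂ K] [CompleteSpace K]

/-- `z η_{nk} = q^{-n} A η_{n-1,k}`. -/
def zOp (q : ℝ) (A : K →L[ℂ] K) : Module.End ℂ (ℤ × ℤ →₀ K) :=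
  Finsupp.lsum ℂ fun p => (Finsupp.lsingle (p.1 - 1, p.2)).comp
    (((q : ℂ) ^ (-p.1)) • (A : K →ₗ[ℂ] K))

/-- `z† η_{nk} = q^{-(n+1)} A η_{n+1,k}`. -/
def zdOp (q : ℝ) (A : K →L[ℂ] K) : Module.End ℂ (ℤ × ℤ →₀ K) :=
  Finsupp.lsum ℂ fun p => (Finsupp.lsingle (p.1 + 1, p.2)).comp
    (((q : ℂ) ^ (-(p.1 + 1))) • (A : K →ₗ[ℂ] K))

/-- `F η_{nk} = q^{-1/2}qⁿ A⁻¹BH⁻¹ η_{n,k-1} + q^{1/2}(1-q²)⁻¹qᵏ A⁻¹H⁻¹ η_{n+1,k}`. -/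
def FOp (q : ℝ) (A B H : K →L[ℂ] K) [Invertible A] [Invertible H] :
    Module.End ℂ (ℤ × ℤ →₀ K) :=
  Finsupp.lsum ℂ fun p =>
    (Finsupp.lsingle (p.1, p.2 - 1)).comp
      (((Real.sqrt q : ℂ)⁻¹ * (q : ℂ) ^ p.1) • ((⅟A * B * ⅟H : K →L[ℂ] K) : K →ₗ[ℂ] K))
    + (Finsupp.lsingle (p.1 + 1, p.2)).comp
      (((Real.sqrt q : ℂ) * (1 - (q : ℂ) ^ 2)⁻¹ * (q : ℂ) ^ p.2) •
        ((⅟A * ⅟H : K →L[ℂ] K) : K →ₗ[ℂ] K))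

/-- `E η_{nk} = q^{-1/2}qⁿ A⁻¹BH⁻¹ η_{n,k+1} + q^{1/2}(1-q²)⁻¹qᵏ A⁻¹H⁻¹ η_{n-1,k}`. -/
def EOp (q : ℝ) (A B H : K →L[ℂ] K) [Invertible A] [Invertible H] :
    Module.End ℂ (ℤ × ℤ →₀ K) :=
  Finsupp.lsum ℂ fun p =>
    (Finsupp.lsingle (p.1, p.2 + 1)).comp
      (((Real.sqrt q : ℂ)⁻¹ * (q : ℂ) ^ p.1) • ((⅟A * B * ⅟H : K →L[ℂ] K) : K →ₗ[ℂ] K))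
    + (Finsupp.lsingle (p.1 - 1, p.2)).comp
      (((Real.sqrt q : ℂ) * (1 - (q : ℂ) ^ 2)⁻¹ * (q : ℂ) ^ p.2) •
        ((⅟A * ⅟H : K →L[ℂ] K) : K →ₗ[ℂ] K))

/-- `K̂ η_{nk} = q^{n-k} H η_{nk}`. -/
def KOp (q : ℝ) (H : K →L[ℂ] K) : Module.End ℂ (ℤ × ℤ →₀ K) :=
  Finsupp.lsum ℂ fun p => (Finsupp.lsingle p).comp
    (((q : ℂ) ^ (p.1 - p.2)) • (H : K →ₗ[ℂ] K))

/-- `K̂⁻¹ η_{nk} = q^{-(n-k)} H⁻¹ η_{nk}`. -/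
def KinvOp (q : ℝ) (H : K →L[ℂ] K) [Invertible H] : Module.End ℂ (ℤ × ℤ →₀ K) :=
  Finsupp.lsum ℂ fun p => (Finsupp.lsingle p).comp
    (((q : ℂ) ^ (-(p.1 - p.2))) • ((⅟H : K →L[ℂ] K) : K →ₗ[ℂ] K))

end Stmt8


set_option linter.unusedSimpArgs false
set_option linter.unreachableTactic false
set_option linter.unnecessarySeqFocus false
set_option linter.unusedTactic false

namespace Stmt8

section aux
variable {K : Type*} [NormedAddCommGroup K] [InnerProductSpace ℂ K]

lemma fi_add_left (a b c : ℤ × ℤ →₀ K) :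
    finsuppInner (a + b) c = finsuppInner a c + finsuppInner b c := by
  unfold finsuppInner
  exact Finsupp.sum_add_index' (by simp) (by intros; simp [inner_add_left])

lemma fi_add_right (a b c : ℤ × ℤ →₀ K) :
    finsuppInner a (b + c) = finsuppInner a b + finsuppInner a c := by
  unfold finsuppInner
  simp [inner_add_right, Finsupp.sum_add]

lemma fi_zero_left (c : ℤ × ℤ →₀ K) : finsuppInner 0 c = 0 := by
  simp [finsuppInner]

lemma fi_zero_right (c : ℤ × ℤ →₀ K) : finsuppInner c 0 = 0 := by
  simp [finsuppInner]

lemma fi_single (p r : ℤ × ℤ) (x y : K) :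
    finsuppInner (Finsupp.single p x) (Finsupp.single r y)
      = if p = r then (inner ℂ x y : ℂ) else 0 := by
  unfold finsuppInner
  rw [Finsupp.sum_single_index (by simp), Finsupp.single_apply]
  by_cases h : p = r
  · simp [h]
  · simp [h, Ne.symm h]

lemma fi_adj (S T : Module.End ℂ (ℤ × ℤ →₀ K))
    (h : ∀ (n k m l : ℤ) (x y : K),
      finsuppInner (S (Finsupp.single (n, k) x)) (Finsupp.single (m, l) y)
      = finsuppInner (Finsupp.single (n, k) x) (T (Finsupp.single (m, l) y)))
    (ξ η : ℤ × ℤ →₀ K) : finsuppInner (S ξ) η = finsuppInner ξ (T η) := by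
  induction ξ using Finsupp.induction_linear with
  | zero => simp [fi_zero_left]
  | add f g hf hg => rw [map_add, fi_add_left, fi_add_left, hf, hg]
  | single p x =>
    induction η using Finsupp.induction_linear with
    | zero => simp [fi_zero_right]
    | add f g hf hg => rw [map_add, fi_add_right, fi_add_right, hf, hg]
    | single r y => exact h p.1 p.2 r.1 r.2 x y

lemma end_ext (S T : Module.End ℂ (ℤ × ℤ →₀ K))
    (h : ∀ (n k : ℤ) (x : K), S (Finsupp.single (n, k) x) = T (Finsupp.single (n, k) x)) :
    S = T := by
  apply Finsupp.lhom_ext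
  rintro ⟨n, k⟩ x
  exact h n k x

lemma z_s (q : ℝ) (A : K →L[ℂ] K) (n k : ℤ) (x : K) :
    zOp q A (Finsupp.single (n, k) x) = (q : ℂ) ^ (-n) • Finsupp.single (n - 1, k) (A x) := by
  simp [zOp]

lemma zd_s (q : ℝ) (A : K →L[ℂ] K) (n k : ℤ) (x : K) :
    zdOp q A (Finsupp.single (n, k) x)
      = (q : ℂ) ^ (-(n + 1)) • Finsupp.single (n + 1, k) (A x) := by
  simp [zdOp]

lemma K_s (q : ℝ) (A : K →L[ℂ] K) (n k : ℤ) (x : K) :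
    KOp q A (Finsupp.single (n, k) x) = (q : ℂ) ^ (n - k) • Finsupp.single (n, k) (A x) := by
  simp [KOp]

lemma Ki_s (q : ℝ) (A : K →L[ℂ] K) [Invertible A] (n k : ℤ) (x : K) :
    KinvOp q A (Finsupp.single (n, k) x)
      = (q : ℂ) ^ (-(n - k)) • Finsupp.single (n, k) (⅟A x) := by
  simp [KinvOp]

lemma F_s (q : ℝ) (A B H : K →L[ℂ] K) [Invertible A] [Invertible H] (n k : ℤ) (x : K) :
    FOp q A B H (Finsupp.single (n, k) x)
      = ((Real.sqrt q : ℂ)⁻¹ * (q : ℂ) ^ n) • Finsupp.single (n, k - 1) (⅟A (B (⅟H x)))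
      + ((Real.sqrt q : ℂ) * (1 - (q : ℂ) ^ 2)⁻¹ * (q : ℂ) ^ k) •
        Finsupp.single (n + 1, k) (⅟A (⅟H x)) := by
  simp [FOp]

lemma E_s (q : ℝ) (A B H : K →L[ℂ] K) [Invertible A] [Invertible H] (n k : ℤ) (x : K) :
    EOp q A B H (Finsupp.single (n, k) x)
      = ((Real.sqrt q : ℂ)⁻¹ * (q : ℂ) ^ n) • Finsupp.single (n, k + 1) (⅟A (B (⅟H x)))
      + ((Real.sqrt q : ℂ) * (1 - (q : ℂ) ^ 2)⁻¹ * (q : ℂ) ^ k) •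
        Finsupp.single (n - 1, k) (⅟A (⅟H x)) := by
  simp [EOp]

end aux

end Stmt8

open Stmt8 in
/-- With `0 < q < 1` and `A, B, H` pairwise commuting bounded self-adjoint
operators on a Hilbert space `K`, `A` and `H` invertible, the operators
`z, z†, E, F, K̂, K̂⁻¹` defined above on the space of finitely supported functions
`ℤ² →₀ K` form a ∗-representation of the cross product ∗-algebra `U_q(e₂) ⋉ O(C_q)`. -/
theorem stmt_8 {K : Type*} [NormedAddCommGroup K] [InnerProductSpace ℂ K]
    [CompleteSpace K]
    (q : ℝ) (hq0 : 0 < q) (hq1 : q < 1)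
    (A B H : K →L[ℂ] K) [Invertible A] [Invertible H]
    (hA : IsSelfAdjoint A) (hB : IsSelfAdjoint B) (hH : IsSelfAdjoint H)
    (hAB : A * B = B * A) (hAH : A * H = H * A) (hBH : B * H = H * B) :
    (∀ ξ η : ℤ × ℤ →₀ K, finsuppInner (zOp q A ξ) η = finsuppInner ξ (zdOp q A η)) ∧
    (∀ ξ η : ℤ × ℤ →₀ K,
      finsuppInner (EOp q A B H ξ) η = finsuppInner ξ (FOp q A B H η)) ∧
    (∀ ξ η : ℤ × ℤ →₀ K, finsuppInner (KOp q H ξ) η = finsuppInner ξ (KOp q H η)) ∧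
    zdOp q A * zOp q A = (q : ℂ) ^ 2 • (zOp q A * zdOp q A) ∧
    KOp q H * KinvOp q H = 1 ∧ KinvOp q H * KOp q H = 1 ∧
    KOp q H * FOp q A B H = (q : ℂ) • (FOp q A B H * KOp q H) ∧
    KOp q H * EOp q A B H = (q : ℂ)⁻¹ • (EOp q A B H * KOp q H) ∧
    EOp q A B H * FOp q A B H = FOp q A B H * EOp q A B H ∧
    zOp q A * KOp q H = (q : ℂ) • (KOp q H * zOp q A) ∧
    zOp q A * EOp q A B H = (q : ℂ) • (EOp q A B H * zOp q A) ∧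
    zOp q A * FOp q A B H
      = (q : ℂ) • (FOp q A B H * zOp q A) + (Real.sqrt q : ℂ)⁻¹ • KinvOp q H ∧
    zdOp q A * KOp q H = (q : ℂ)⁻¹ • (KOp q H * zdOp q A) ∧
    zdOp q A * EOp q A B H
      = (q : ℂ)⁻¹ • (EOp q A B H * zdOp q A) - ((Real.sqrt q : ℂ)⁻¹) ^ 3 • KinvOp q H ∧
    zdOp q A * FOp q A B H = (q : ℂ)⁻¹ • (FOp q A B H * zdOp q A) := by
  have hqc : (q : ℂ) ≠ 0 := by exact_mod_cast hq0.ne'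
  have hsc : (Real.sqrt q : ℂ) ≠ 0 := by exact_mod_cast (Real.sqrt_pos.2 hq0).ne'
  have hs2 : (Real.sqrt q : ℂ) ^ 2 = q := by exact_mod_cast Real.sq_sqrt hq0.le
  have hs3 : (Real.sqrt q : ℂ) ^ 4 = q ^ 2 := by rw [← hs2]; ring
  have h1 : (1 - (q : ℂ) ^ 2) ≠ 0 := by
    have : (1 - q ^ 2 : ℝ) ≠ 0 := by nlinarith
    exact_mod_cast this
  have cAB : Commute A B := hAB
  have cAH : Commute A H := hAH
  have cBH : Commute B H := hBH
  have ap : ∀ {S T : K →L[ℂ] K}, Commute S T → ∀ x, S (T x) = T (S x) := by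
    intro S T h x
    exact congrArg (fun U : K →L[ℂ] K => U x) h.eq
  have eHA := ap cAH.symm
  have eiHA := ap cAH.invOf_right.symm
  have eHiA := ap cAH.invOf_left.symm
  have eiHiA := ap cAH.invOf_left.invOf_right.symm
  have eBA := ap cAB.symm
  have eBiA := ap cAB.invOf_left.symm
  have eHB := ap cBH.symm
  have eiHB := ap cBH.invOf_right.symm
  have eiAA : ∀ x, ⅟A (A x) = x := fun x => congrArg (fun U : K →L[ℂ] K => U x) (invOf_mul_self A)
  have eAiA : ∀ x, A (⅟A x) = x := fun x => congrArg (fun U : K →L[ℂ] K => U x) (mul_invOf_self A)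
  have eiHH : ∀ x, ⅟H (H x) = x := fun x => congrArg (fun U : K →L[ℂ] K => U x) (invOf_mul_self H)
  have eHiH : ∀ x, H (⅟H x) = x := fun x => congrArg (fun U : K →L[ℂ] K => U x) (mul_invOf_self H)
  have sA : ∀ x y, inner ℂ (A x) y = inner ℂ x (A y) := hA.isSymmetric
  have sB : ∀ x y, inner ℂ (B x) y = inner ℂ x (B y) := hB.isSymmetric
  have sH : ∀ x y, inner ℂ (H x) y = inner ℂ x (H y) := hH.isSymmetric
  have siA : ∀ x y, inner ℂ (⅟A x) y = inner ℂ x (⅟A y) := by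
    intro x y
    rw [← eAiA y, ← sA, eAiA, eAiA]
  have siH : ∀ x y, inner ℂ (⅟H x) y = inner ℂ x (⅟H y) := by
    intro x y
    rw [← eHiH y, ← sH, eHiH, eHiH]
  have cs : ∀ m : ℤ, (starRingEnd ℂ) ((q : ℂ) ^ m) = (q : ℂ) ^ m := by
    intro m; simp [map_zpow₀]
  refine ⟨fi_adj _ _ ?_, fi_adj _ _ ?_, fi_adj _ _ ?_, ?_, ?_, ?_, ?_, ?_, ?_, ?_, ?_, ?_, ?_, ?_, ?_⟩
  · intro n k m l x y
    simp only [z_s, zd_s, Finsupp.smul_single, fi_single, inner_smul_left, inner_smul_right, cs, sA,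
      Prod.mk.injEq]
    by_cases h : n = m + 1 ∧ k = l
    · obtain ⟨rfl, rfl⟩ := h
      simp
    · rw [if_neg (by omega), if_neg (by omega)]
  · intro n k m l x y
    simp only [E_s, F_s, Finsupp.smul_single, fi_add_left, fi_add_right, fi_single,
      inner_smul_left, inner_smul_right, cs, siA, siH, sB, Prod.mk.injEq, map_mul, map_inv₀,
      map_sub, map_one, map_pow, Complex.conj_ofReal, eiHiA, eiHB, eBiA]
    congr 1
    · by_cases h : n = m ∧ k = l - 1
      · obtain ⟨rfl, rfl⟩ := h
        simp
      · rw [if_neg (by omega), if_neg (by omega)]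
    · by_cases h : n = m + 1 ∧ k = l
      · obtain ⟨rfl, rfl⟩ := h
        simp
      · rw [if_neg (by omega), if_neg (by omega)]
  · intro n k m l x y
    simp only [K_s, Finsupp.smul_single, fi_single, inner_smul_left, inner_smul_right, cs, sH,
      Prod.mk.injEq]
    by_cases h : n = m ∧ k = l
    · obtain ⟨rfl, rfl⟩ := h
      simp
    · rw [if_neg h, if_neg h]
  all_goals
    apply end_ext
    intro n k x
    simp only [Module.End.mul_apply, Module.End.one_apply, LinearMap.smul_apply, LinearMap.add_apply, LinearMap.sub_apply, z_s, zd_s, K_s, Ki_s, F_s, E_s, map_add, map_smul, eHA, eiHA, eiHiA, eHiA, eBA, eBiA, eHB, eiHB, eiAA, eAiA, eHiH, eiHH, sub_add_cancel, add_sub_cancel_right]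
    match_scalars <;>
    simp only [neg_add, neg_sub, zpow_add₀ hqc, zpow_sub₀ hqc, zpow_neg, zpow_one] <;>
    field_simp <;> (try simp only [hs2, hs3]) <;> (try field_simp) <;> (try ring)

end
end

section
/- The maps v, v†, n, n†, E, F, K̂, K̂⁻¹ form a ∗-representation of the left cross product ∗-algebra U_q(e₂)⋉O(E_q(2)) on D: ⟨vξ, η⟩ = ⟨ξ, v†η⟩, ⟨nξ, η⟩ = ⟨ξ, n†η⟩, ⟨Eξ, η⟩ = ⟨ξ, Fη⟩, ⟨K̂ξ, η⟩ = ⟨ξ, K̂η⟩ for all ξ, η ∈ D, and on D all the defining relations of U_q(e₂)⋉O(E_q(2)) hold: v†v = vv† = id, nn† = n†n, nv = qvn; K̂K̂⁻¹ = K̂⁻¹K̂ = id, K̂F = qFK̂, K̂E = q⁻¹EK̂, EF = FE; vF = q^{1/2}Fv, vE = q^{1/2}Ev, vK̂ = q^{1/2}K̂v, v†F = q^{−1/2}Fv†, v†E = q^{−1/2}Ev†, v†K̂ = q^{−1/2}K̂v†, nF = q^{1/2}Fn + K̂⁻¹v†, nE = q^{1/2}En, nK̂ = q^{1/2}K̂n,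 n†F = q^{−1/2}Fn†, n†E = q^{−1/2}En† − q⁻¹K̂⁻¹v, n†K̂ = q^{−1/2}K̂n†. -/
noncomputable section

namespace Stmt9

variable {K : Type*} [NormedAddCommGroup K] [InnerProductSpace ℂ K] [CompleteSpace K]

/-- `v η_{mk} = η_{m-1,k-1}`. -/
def vOp : Module.End ℂ (ℤ × ℤ →₀ K) :=
  Finsupp.lsum ℂ fun p => Finsupp.lsingle (p.1 - 1, p.2 - 1)

/-- `v† η_{mk} = η_{m+1,k+1}`. -/
def vdOp : Module.End ℂ (ℤ × ℤ →₀ K) :=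
  Finsupp.lsum ℂ fun p => Finsupp.lsingle (p.1 + 1, p.2 + 1)

/-- `n η_{mk} = q^{-m} A η_{m,k+1}`. -/
def nOp (q : ℝ) (A : K →L[ℂ] K) : Module.End ℂ (ℤ × ℤ →₀ K) :=
  Finsupp.lsum ℂ fun p => (Finsupp.lsingle (p.1, p.2 + 1)).comp
    (((q : ℂ) ^ (-p.1)) • (A : K →ₗ[ℂ] K))

/-- `n† η_{mk} = q^{-m} A η_{m,k-1}`. -/
def ndOp (q : ℝ) (A : K →L[ℂ] K) : Module.End ℂ (ℤ × ℤ →₀ K) :=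
  Finsupp.lsum ℂ fun p => (Finsupp.lsingle (p.1, p.2 - 1)).comp
    (((q : ℂ) ^ (-p.1)) • (A : K →ₗ[ℂ] K))

/-- `F η_{mk} = (1-q²)⁻¹ q^{(k+1)/2} ε A⁻¹H⁻¹ η_{m+1,k}`. -/
def FOp (q ε : ℝ) (A H : K →L[ℂ] K) [Invertible A] [Invertible H] :
    Module.End ℂ (ℤ × ℤ →₀ K) :=
  Finsupp.lsum ℂ fun p => (Finsupp.lsingle (p.1 + 1, p.2)).comp
    (((1 - (q : ℂ) ^ 2)⁻¹ * (Real.sqrt q : ℂ) ^ (p.2 + 1) * (ε : ℂ)) •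
      ((⅟A * ⅟H : K →L[ℂ] K) : K →ₗ[ℂ] K))

/-- `E η_{mk} = (1-q²)⁻¹ q^{(k+1)/2} ε A⁻¹H⁻¹ η_{m-1,k}`. -/
def EOp (q ε : ℝ) (A H : K →L[ℂ] K) [Invertible A] [Invertible H] :
    Module.End ℂ (ℤ × ℤ →₀ K) :=
  Finsupp.lsum ℂ fun p => (Finsupp.lsingle (p.1 - 1, p.2)).comp
    (((1 - (q : ℂ) ^ 2)⁻¹ * (Real.sqrt q : ℂ) ^ (p.2 + 1) * (ε : ℂ)) •
      ((⅟A * ⅟H : K →L[ℂ] K) : K →ₗ[ℂ] K))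

/-- `K̂ η_{mk} = q^{m-k/2} ε H η_{mk}`. -/
def KOp (q ε : ℝ) (H : K →L[ℂ] K) : Module.End ℂ (ℤ × ℤ →₀ K) :=
  Finsupp.lsum ℂ fun p => (Finsupp.lsingle p).comp
    (((Real.sqrt q : ℂ) ^ (2 * p.1 - p.2) * (ε : ℂ)) • (H : K →ₗ[ℂ] K))

/-- `K̂⁻¹ η_{mk} = q^{-m+k/2} ε H⁻¹ η_{mk}`. -/
def KinvOp (q ε : ℝ) (H : K →L[ℂ] K) [Invertible H] : Module.End ℂ (ℤ × ℤ →₀ K) :=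
  Finsupp.lsum ℂ fun p => (Finsupp.lsingle p).comp
    (((Real.sqrt q : ℂ) ^ (-(2 * p.1 - p.2)) * (ε : ℂ)) •
      ((⅟H : K →L[ℂ] K) : K →ₗ[ℂ] K))

end Stmt9

section Helpers
open Stmt9

variable {K : Type*} [NormedAddCommGroup K] [InnerProductSpace ℂ K]

theorem fI_single_left {ι : Type*} (i : ι) (x : K) (ζ : ι →₀ K) :
    finsuppInner (Finsupp.single i x) ζ = inner ℂ x (ζ i) := by
  unfold finsuppInner
  rw [Finsupp.sum_single_index]
  simp

theorem fI_add_left {ι : Type*} (ξ ξ' ζ : ι →₀ K) :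
    finsuppInner (ξ + ξ') ζ = finsuppInner ξ ζ + finsuppInner ξ' ζ := by
  classical
  unfold finsuppInner
  rw [Finsupp.sum_add_index']
  · simp
  · intro i x y
    rw [inner_add_left]

theorem fI_add_right {ι : Type*} (ξ ζ ζ' : ι →₀ K) :
    finsuppInner ξ (ζ + ζ') = finsuppInner ξ ζ + finsuppInner ξ ζ' := by
  unfold finsuppInner
  simp only [Finsupp.add_apply, inner_add_right]
  exact Finsupp.sum_add

theorem fI_zero_left {ι : Type*} (ζ : ι →₀ K) : finsuppInner (0 : ι →₀ K) ζ = 0 := by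
  simp [finsuppInner]

theorem fI_zero_right {ι : Type*} (ξ : ι →₀ K) : finsuppInner ξ (0 : ι →₀ K) = 0 := by
  simp [finsuppInner]

theorem fI_adj {ι : Type*} (S T : Module.End ℂ (ι →₀ K))
    (h : ∀ i x j y, finsuppInner (S (Finsupp.single i x)) (Finsupp.single j y)
      = inner ℂ x (T (Finsupp.single j y) i)) (ξ η : ι →₀ K) :
    finsuppInner (S ξ) η = finsuppInner ξ (T η) := by
  induction ξ using Finsupp.induction_linear with
  | zero => simp [fI_zero_left]
  | add a b ha hb => rw [map_add, fI_add_left, fI_add_left, ha, hb]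
  | single i x =>
    induction η using Finsupp.induction_linear with
    | zero => simp [fI_zero_right]
    | add a b ha hb => rw [map_add, fI_add_right, fI_add_right, ha, hb]
    | single j y => rw [h, fI_single_left]

theorem v_single (m k : ℤ) (x : K) : vOp (Finsupp.single (m, k) x)
    = Finsupp.single (m - 1, k - 1) x := by simp [vOp]

theorem vd_single (m k : ℤ) (x : K) : vdOp (Finsupp.single (m, k) x)
    = Finsupp.single (m + 1, k + 1) x := by simp [vdOp]

theorem n_single (q : ℝ) (A : K →L[ℂ] K) (m k : ℤ) (x : K) :
    nOp q A (Finsupp.single (m, k) x)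
    = Finsupp.single (m, k + 1) (((q : ℂ) ^ (-m)) • A x) := by simp [nOp]

theorem nd_single (q : ℝ) (A : K →L[ℂ] K) (m k : ℤ) (x : K) :
    ndOp q A (Finsupp.single (m, k) x)
    = Finsupp.single (m, k - 1) (((q : ℂ) ^ (-m)) • A x) := by simp [ndOp]

theorem F_single (q ε : ℝ) (A H : K →L[ℂ] K) [Invertible A] [Invertible H] (m k : ℤ) (x : K) :
    FOp q ε A H (Finsupp.single (m, k) x) = Finsupp.single (m + 1, k)
      (((1 - (q : ℂ) ^ 2)⁻¹ * (Real.sqrt q : ℂ) ^ (k + 1) * (ε : ℂ)) • (⅟A) ((⅟H) x)) := by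
  simp [FOp]

theorem E_single (q ε : ℝ) (A H : K →L[ℂ] K) [Invertible A] [Invertible H] (m k : ℤ) (x : K) :
    EOp q ε A H (Finsupp.single (m, k) x) = Finsupp.single (m - 1, k)
      (((1 - (q : ℂ) ^ 2)⁻¹ * (Real.sqrt q : ℂ) ^ (k + 1) * (ε : ℂ)) • (⅟A) ((⅟H) x)) := by
  simp [EOp]

theorem K_single (q ε : ℝ) (H : K →L[ℂ] K) (m k : ℤ) (x : K) :
    KOp q ε H (Finsupp.single (m, k) x) = Finsupp.single (m, k)
      (((Real.sqrt q : ℂ) ^ (2 * m - k) * (ε : ℂ)) • H x) := by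
  simp [KOp]

theorem Kinv_single (q ε : ℝ) (H : K →L[ℂ] K) [Invertible H] (m k : ℤ) (x : K) :
    KinvOp q ε H (Finsupp.single (m, k) x) = Finsupp.single (m, k)
      (((Real.sqrt q : ℂ) ^ (-(2 * m - k)) * (ε : ℂ)) • (⅟H) x) := by
  simp [KinvOp]

theorem end_ext {S T : Module.End ℂ (ℤ × ℤ →₀ K)}
    (h : ∀ m k x, S (Finsupp.single (m, k) x) = T (Finsupp.single (m, k) x)) : S = T :=
  Finsupp.lhom_ext (fun p x => h p.1 p.2 x)

theorem single_cs {a b a' b' : ℤ} {c c' : ℂ} {x : K} (ha : a = a') (hb : b = b') (hc : c = c') :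
    Finsupp.single (a, b) (c • x) = Finsupp.single (a', b') (c' • x) := by
  rw [ha, hb, hc]

end Helpers

open Stmt9 in
/-- With `0 < q < 1`, `ε ∈ {1,-1}` and `A, H` commuting bounded self-adjoint
invertible operators on a Hilbert space `K`, the operators `v, v†, n, n†, E, F, K̂, K̂⁻¹`
defined above on the space of finitely supported functions `ℤ² →₀ K` form a
∗-representation of the left cross product ∗-algebra `U_q(e₂) ⋉ O(E_q(2))`. -/
theorem stmt_9 {K : Type*} [NormedAddCommGroup K] [InnerProductSpace ℂ K]
    [CompleteSpace K]
    (q : ℝ) (hq0 : 0 < q) (hq1 : q < 1)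
    (ε : ℝ) (hε : ε = 1 ∨ ε = -1)
    (A H : K →L[ℂ] K) [Invertible A] [Invertible H]
    (hA : IsSelfAdjoint A) (hH : IsSelfAdjoint H) (hAH : A * H = H * A) :
    (∀ ξ η : ℤ × ℤ →₀ K,
      finsuppInner ((vOp : Module.End ℂ (ℤ × ℤ →₀ K)) ξ) η = finsuppInner ξ (vdOp η)) ∧
    (∀ ξ η : ℤ × ℤ →₀ K, finsuppInner (nOp q A ξ) η = finsuppInner ξ (ndOp q A η)) ∧
    (∀ ξ η : ℤ × ℤ →₀ K,
      finsuppInner (EOp q ε A H ξ) η = finsuppInner ξ (FOp q ε A H η)) ∧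
    (∀ ξ η : ℤ × ℤ →₀ K,
      finsuppInner (KOp q ε H ξ) η = finsuppInner ξ (KOp q ε H η)) ∧
    (vdOp * vOp : Module.End ℂ (ℤ × ℤ →₀ K)) = 1 ∧
    (vOp * vdOp : Module.End ℂ (ℤ × ℤ →₀ K)) = 1 ∧
    nOp q A * ndOp q A = ndOp q A * nOp q A ∧
    nOp (K := K) q A * vOp = (q : ℂ) • (vOp * nOp q A) ∧
    KOp q ε H * KinvOp q ε H = 1 ∧ KinvOp q ε H * KOp q ε H = 1 ∧
    KOp q ε H * FOp q ε A H = (q : ℂ) • (FOp q ε A H * KOp q ε H) ∧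
    KOp q ε H * EOp q ε A H = (q : ℂ)⁻¹ • (EOp q ε A H * KOp q ε H) ∧
    EOp q ε A H * FOp q ε A H = FOp q ε A H * EOp q ε A H ∧
    vOp * FOp q ε A H = (Real.sqrt q : ℂ) • (FOp q ε A H * vOp) ∧
    vOp * EOp q ε A H = (Real.sqrt q : ℂ) • (EOp q ε A H * vOp) ∧
    vOp * KOp q ε H = (Real.sqrt q : ℂ) • (KOp q ε H * vOp) ∧
    vdOp * FOp q ε A H = (Real.sqrt q : ℂ)⁻¹ • (FOp q ε A H * vdOp) ∧
    vdOp * EOp q ε A H = (Real.sqrt q : ℂ)⁻¹ • (EOp q ε A H * vdOp) ∧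
    vdOp * KOp q ε H = (Real.sqrt q : ℂ)⁻¹ • (KOp q ε H * vdOp) ∧
    nOp q A * FOp q ε A H
      = (Real.sqrt q : ℂ) • (FOp q ε A H * nOp q A) + KinvOp q ε H * vdOp ∧
    nOp q A * EOp q ε A H = (Real.sqrt q : ℂ) • (EOp q ε A H * nOp q A) ∧
    nOp q A * KOp q ε H = (Real.sqrt q : ℂ) • (KOp q ε H * nOp q A) ∧
    ndOp q A * FOp q ε A H = (Real.sqrt q : ℂ)⁻¹ • (FOp q ε A H * ndOp q A) ∧
    ndOp q A * EOp q ε A H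
      = (Real.sqrt q : ℂ)⁻¹ • (EOp q ε A H * ndOp q A)
        - (q : ℂ)⁻¹ • (KinvOp q ε H * vOp) ∧
    ndOp q A * KOp q ε H = (Real.sqrt q : ℂ)⁻¹ • (KOp q ε H * ndOp q A) := by
  obtain ⟨s, hs0, hs⟩ : ∃ s : ℝ, 0 < s ∧ Real.sqrt q = s := ⟨_, Real.sqrt_pos.2 hq0, rfl⟩
  have hqs : q = s ^ 2 := by rw [← hs, Real.sq_sqrt hq0.le]
  have hsC : (s : ℂ) ≠ 0 := by exact_mod_cast hs0.ne'
  have hqC : (q : ℂ) = (s : ℂ) ^ 2 := by rw [hqs]; push_cast; rfl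
  have hεε : (ε : ℂ) * ε = 1 := by rcases hε with h | h <;> simp [h]
  have hden : (1 - ((s : ℂ) ^ 2) ^ 2) ≠ 0 := by
    have : (1 - (s ^ 2) ^ 2 : ℝ) ≠ 0 := by
      rw [← hqs]; nlinarith
    exact_mod_cast this
  have cAH : Commute A H := hAH
  have e1 : ∀ x, H (A x) = A (H x) := fun x => (congrArg (fun T : K →L[ℂ] K => T x) hAH).symm
  have e2 : ∀ x, (⅟A) (A x) = x := fun x =>
    congrArg (fun T : K →L[ℂ] K => T x) (invOf_mul_self A)
  have e3 : ∀ x, A ((⅟A) x) = x := fun x =>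
    congrArg (fun T : K →L[ℂ] K => T x) (mul_invOf_self A)
  have e4 : ∀ x, (⅟H) (H x) = x := fun x =>
    congrArg (fun T : K →L[ℂ] K => T x) (invOf_mul_self H)
  have e5 : ∀ x, H ((⅟H) x) = x := fun x =>
    congrArg (fun T : K →L[ℂ] K => T x) (mul_invOf_self H)
  have e6 : ∀ x, H ((⅟A) x) = (⅟A) (H x) := fun x => by
    rw [← e2 (H ((⅟A) x)), ← e1, e3]
  have e7 : ∀ x, (⅟H) (A x) = A ((⅟H) x) := fun x => by
    rw [← e4 (A ((⅟H) x)), e1, e5]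
  have e8 : ∀ x, (⅟H) ((⅟A) x) = (⅟A) ((⅟H) x) := fun x => by
    rw [← e2 ((⅟H) ((⅟A) x)), ← e7, e3]
  have iA : ∀ x y, inner ℂ (A x) y = inner ℂ x (A y) := fun x y =>
    (ContinuousLinearMap.isSelfAdjoint_iff_isSymmetric.1 hA) x y
  have iH : ∀ x y, inner ℂ (H x) y = inner ℂ x (H y) := fun x y =>
    (ContinuousLinearMap.isSelfAdjoint_iff_isSymmetric.1 hH) x y
  have iA' : ∀ x y, inner ℂ ((⅟A) x) y = inner ℂ x ((⅟A) y) := fun x y => by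
    conv_lhs => rw [← e3 y]
    rw [← iA, e3]
  have iH' : ∀ x y, inner ℂ ((⅟H) x) y = inner ℂ x ((⅟H) y) := fun x y => by
    conv_lhs => rw [← e5 y]
    rw [← iH, e5]
  have iF : ∀ x y, inner ℂ ((⅟A) ((⅟H) x)) y = inner ℂ x ((⅟A) ((⅟H) y)) := fun x y => by
    rw [iA', iH', e8]
  refine ⟨?_, ?_, ?_, ?_, ?_⟩
  · apply fI_adj
    rintro ⟨m, k⟩ x ⟨m', k'⟩ y
    rw [v_single, vd_single, fI_single_left, Finsupp.single_apply, Finsupp.single_apply]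
    simp only [Prod.mk.injEq]
    split_ifs <;> first | rfl | omega
  · apply fI_adj
    rintro ⟨m, k⟩ x ⟨m', k'⟩ y
    rw [n_single, nd_single, fI_single_left, Finsupp.single_apply, Finsupp.single_apply]
    simp only [Prod.mk.injEq]
    split_ifs with h1 h2 h2
    · obtain ⟨rfl, rfl⟩ := h1
      rw [inner_smul_left, inner_smul_right, iA]; simp
    · omega
    · omega
    · simp
  · apply fI_adj
    rintro ⟨m, k⟩ x ⟨m', k'⟩ y
    rw [E_single, F_single, fI_single_left, Finsupp.single_apply, Finsupp.single_apply]
    simp only [Prod.mk.injEq]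
    split_ifs with h1 h2 h2
    · obtain ⟨rfl, rfl⟩ := h1
      rw [inner_smul_left, inner_smul_right, iF]; simp
    · omega
    · omega
    · simp
  · apply fI_adj
    rintro ⟨m, k⟩ x ⟨m', k'⟩ y
    rw [K_single, K_single, fI_single_left, Finsupp.single_apply, Finsupp.single_apply]
    simp only [Prod.mk.injEq]
    split_ifs with h1
    · obtain ⟨rfl, rfl⟩ := h1
      rw [inner_smul_left, inner_smul_right, iH]; simp
    · simp
  rw [hs]
  refine ⟨?_, ?_, ?_, ?_, ?_, ?_, ?_, ?_, ?_, ?_, ?_, ?_, ?_, ?_, ?_, ?_, ?_, ?_, ?_, ?_, ?_⟩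
  all_goals
    apply end_ext
    intro m k x
    simp only [Module.End.mul_apply, Module.End.one_apply, LinearMap.smul_apply,
      LinearMap.add_apply, LinearMap.sub_apply, v_single, vd_single, n_single, nd_single,
      F_single, E_single, K_single, Kinv_single, map_smul, e1, e2, e3, e4, e5, e6, e7, e8,
      smul_smul, Finsupp.smul_single, hs, hqC, sub_add_cancel, add_sub_cancel_right]
  all_goals try rw [← Finsupp.single_sub, ← sub_smul]
  all_goals try rw [← Finsupp.single_add, ← add_smul]
  all_goals first
    | done
    | (apply single_cs
       · ring
       · ring
       · simp only [zpow_add₀ hsC, zpow_sub₀ hsC, zpow_add₀ (pow_ne_zero 2 hsC),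
           zpow_sub₀ (pow_ne_zero 2 hsC), zpow_neg, neg_sub, neg_add, mul_add, mul_sub, zpow_one, zpow_mul, zpow_ofNat]
         field_simp
         try ring)
    | skip
  · congr 1
    rw [zpow_neg]
    have h := zpow_ne_zero (2 * m - k) hsC
    have : (s : ℂ) ^ (2 * m - k) * ε * (((s : ℂ) ^ (2 * m - k))⁻¹ * ε) = 1 := by
      field_simp
      linear_combination hεε
    rw [this, one_smul]
  · congr 1
    rw [zpow_neg]
    have h := zpow_ne_zero (2 * m - k) hsC
    have : ((s : ℂ) ^ (2 * m - k))⁻¹ * ε * (((s : ℂ) ^ (2 * m - k)) * ε) = 1 := by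
      field_simp
      linear_combination hεε
    rw [this, one_smul]
  all_goals
    apply single_cs rfl rfl
    have hc := inv_mul_cancel₀ hden
    generalize (1 - ((s : ℂ) ^ 2) ^ 2)⁻¹ = c at hc ⊢
    simp only [zpow_add₀ hsC, zpow_sub₀ hsC, zpow_add₀ (pow_ne_zero 2 hsC),
           zpow_sub₀ (pow_ne_zero 2 hsC), zpow_neg, mul_add, mul_sub, zpow_one, zpow_mul,
           zpow_ofNat, mul_one]
    have h1 := zpow_ne_zero m (pow_ne_zero 2 hsC)
    generalize ((s : ℂ) ^ 2) ^ m = u at h1 ⊢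
    have h2 := zpow_ne_zero k hsC
    generalize (s : ℂ) ^ k = t at h2 ⊢
    field_simp
  · linear_combination (ε : ℂ) * hc
  · linear_combination (-(ε : ℂ)) * hc

end
end

section
/- There is a ∗-algebra isomorphism θ: U_q(su_{1,1})⋉Ô(SU_q(1,1)) → Ô(SU_q(1,1))⋊U_q(su_{1,1}) determined on generators by θ(a) = a, θ(b) = −qc, θ(c) = −q⁻¹b, θ(d) = d, θ(E) = F, θ(F) = E, θ(K) = K⁻¹ (hence θ(b⁻¹) = −q⁻¹c⁻¹, θ(c⁻¹) = −qb⁻¹, θ(K⁻¹) = K). -/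
/-- The relations common to both cross product ∗-algebras built from
`Ô(SU_q(1,1))` and `U_q(su_{1,1})`, on elements `a, b, c, d, b', c', E, F, K, K'`
(`b', c', K'` playing the roles of `b⁻¹, c⁻¹, K⁻¹`), including the involution conditions
`a* = d`, `b* = qc`, `E* = -F`, `K* = K`. -/
def SUCommonRel {A : Type} [Ring A] [Algebra ℂ A] [StarRing A]
    (q : ℝ) (a b c d b' c' E F K K' : A) : Prop :=
  star a = d ∧ star b = (q : ℂ) • c ∧ star E = -F ∧ star K = K ∧ star K' = K' ∧
  a * b = (q : ℂ) • (b * a) ∧ a * c = (q : ℂ) • (c * a) ∧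
  b * d = (q : ℂ) • (d * b) ∧ c * d = (q : ℂ) • (d * c) ∧
  b * c = c * b ∧
  a * d - (q : ℂ) • (b * c) = 1 ∧ d * a - (q : ℂ)⁻¹ • (b * c) = 1 ∧
  b * b' = 1 ∧ b' * b = 1 ∧ c * c' = 1 ∧ c' * c = 1 ∧
  K * K' = 1 ∧ K' * K = 1 ∧
  K * E = (q : ℂ) • (E * K) ∧ K * F = (q : ℂ)⁻¹ • (F * K) ∧
  E * F - F * E = ((q : ℂ) - (q : ℂ)⁻¹)⁻¹ • (K * K - K' * K')

/-- The additional cross relations of the left cross product ∗-algebra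
`U_q(su_{1,1}) ⋉ Ô(SU_q(1,1))`. -/
def SULeftRel {A : Type} [Ring A] [Algebra ℂ A] [StarRing A]
    (q : ℝ) (a b c d b' c' E F K K' : A) : Prop :=
  SUCommonRel q a b c d b' c' E F K K' ∧
  a * K = (Real.sqrt q : ℂ)⁻¹ • (K * a) ∧
  a * E = (Real.sqrt q : ℂ)⁻¹ • (E * a) ∧
  a * F = (Real.sqrt q : ℂ)⁻¹ • (F * a) + K' * c ∧
  b * K = (Real.sqrt q : ℂ)⁻¹ • (K * b) ∧
  b * E = (Real.sqrt q : ℂ)⁻¹ • (E * b) ∧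
  b * F = (Real.sqrt q : ℂ)⁻¹ • (F * b) + K' * d ∧
  c * K = (Real.sqrt q : ℂ) • (K * c) ∧
  c * E = (Real.sqrt q : ℂ) • (E * c) + K' * a ∧
  c * F = (Real.sqrt q : ℂ) • (F * c) ∧
  d * K = (Real.sqrt q : ℂ) • (K * d) ∧
  d * E = (Real.sqrt q : ℂ) • (E * d) + K' * b ∧
  d * F = (Real.sqrt q : ℂ) • (F * d)

/-- The additional cross relations of the right cross product ∗-algebra
`Ô(SU_q(1,1)) ⋊ U_q(su_{1,1})`. -/
def SURightRel {B : Type} [Ring B] [Algebra ℂ B] [StarRing B]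
    (q : ℝ) (a b c d b' c' E F K K' : B) : Prop :=
  SUCommonRel q a b c d b' c' E F K K' ∧
  K * a = (Real.sqrt q : ℂ)⁻¹ • (a * K) ∧
  E * a = (Real.sqrt q : ℂ) • (a * E) + b * K ∧
  F * a = (Real.sqrt q : ℂ) • (a * F) ∧
  K * b = (Real.sqrt q : ℂ) • (b * K) ∧
  E * b = (Real.sqrt q : ℂ)⁻¹ • (b * E) ∧
  F * b = (Real.sqrt q : ℂ)⁻¹ • (b * F) + a * K ∧
  K * c = (Real.sqrt q : ℂ)⁻¹ • (c * K) ∧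
  E * c = (Real.sqrt q : ℂ) • (c * E) + d * K ∧
  F * c = (Real.sqrt q : ℂ) • (c * F) ∧
  K * d = (Real.sqrt q : ℂ) • (d * K) ∧
  E * d = (Real.sqrt q : ℂ)⁻¹ • (d * E) ∧
  F * d = (Real.sqrt q : ℂ)⁻¹ • (d * F) + c * K

/-- `A` with the elements `a, b, c, d, b', c', E, F, K, K'` is the universal unital
ℂ-∗-algebra subject to the relations of `U_q(su_{1,1}) ⋉ Ô(SU_q(1,1))`. -/
def IsUniversalSULeft (q : ℝ) (A : Type) [Ring A] [Algebra ℂ A] [StarRing A]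
    [StarModule ℂ A] (a b c d b' c' E F K K' : A) : Prop :=
  SULeftRel q a b c d b' c' E F K K' ∧
  ∀ (B : Type) [Ring B] [Algebra ℂ B] [StarRing B] [StarModule ℂ B],
    ∀ a₁ b₁ c₁ d₁ b₁' c₁' E₁ F₁ L L' : B, SULeftRel q a₁ b₁ c₁ d₁ b₁' c₁' E₁ F₁ L L' →
      ∃! φ : A →⋆ₐ[ℂ] B,
        φ a = a₁ ∧ φ b = b₁ ∧ φ c = c₁ ∧ φ d = d₁ ∧ φ b' = b₁' ∧ φ c' = c₁' ∧
        φ E = E₁ ∧ φ F = F₁ ∧ φ K = L ∧ φ K' = L'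

/-- `B` with the elements `a, b, c, d, b', c', E, F, K, K'` is the universal unital
ℂ-∗-algebra subject to the relations of `Ô(SU_q(1,1)) ⋊ U_q(su_{1,1})`. -/
def IsUniversalSURight (q : ℝ) (B : Type) [Ring B] [Algebra ℂ B] [StarRing B]
    [StarModule ℂ B] (a b c d b' c' E F K K' : B) : Prop :=
  SURightRel q a b c d b' c' E F K K' ∧
  ∀ (C : Type) [Ring C] [Algebra ℂ C] [StarRing C] [StarModule ℂ C],
    ∀ a₁ b₁ c₁ d₁ b₁' c₁' E₁ F₁ L L' : C, SURightRel q a₁ b₁ c₁ d₁ b₁' c₁' E₁ F₁ L L' →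
      ∃! φ : B →⋆ₐ[ℂ] C,
        φ a = a₁ ∧ φ b = b₁ ∧ φ c = c₁ ∧ φ d = d₁ ∧ φ b' = b₁' ∧ φ c' = c₁' ∧
        φ E = E₁ ∧ φ F = F₁ ∧ φ K = L ∧ φ K' = L'

lemma inv_comm_aux {A : Type} [Ring A] [Algebra ℂ A] {K K' x : A} {r : ℂ}
    (h1 : K * K' = 1) (h2 : K' * K = 1) (h : K * x = r • (x * K)) :
    x * K' = r • (K' * x) := by
  calc x * K' = K' * (K * x) * K' := by rw [← mul_assoc K' K x, h2, one_mul]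
    _ = r • (K' * x * (K * K')) := by
      rw [h]; simp only [mul_smul_comm, smul_mul_assoc, mul_assoc]
    _ = r • (K' * x) := by rw [h1, mul_one]

lemma inv_comm_aux2 {A : Type} [Ring A] [Algebra ℂ A] {K K' x : A} {r : ℂ}
    (h1 : K * K' = 1) (h2 : K' * K = 1) (h : x * K = r • (K * x)) :
    K' * x = r • (x * K') := by
  calc K' * x = K' * (x * K) * K' := by rw [mul_assoc, mul_assoc, h1, mul_one]
    _ = r • (K' * K * x * K') := by
      rw [h]; simp only [mul_smul_comm, smul_mul_assoc, mul_assoc]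
    _ = r • (x * K') := by rw [h2, one_mul]

lemma comm_swap {A : Type} [Ring A] [Algebra ℂ A] [StarRing A] [StarModule ℂ A] {q : ℝ}
    (hq : q ≠ 0) {a b c d b' c' E F K K' : A}
    (h : SUCommonRel q a b c d b' c' E F K K') :
    SUCommonRel q a (-((q : ℂ) • c)) (-((q : ℂ)⁻¹ • b)) d (-((q : ℂ)⁻¹ • c'))
      (-((q : ℂ) • b')) F E K' K := by
  obtain ⟨sa, sb, sE, sK, sK', ab, ac, bd, cd, bc, ad, da, bb, bb', cc, cc', kk, kk', KE, KF, EF⟩ := h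
  have hq' : (q : ℂ) ≠ 0 := by exact_mod_cast hq
  have sc : star c = (q : ℂ)⁻¹ • b := by
    have := congrArg star sb
    rw [star_star, star_smul, Complex.star_def, Complex.conj_ofReal] at this
    rw [this, smul_smul, inv_mul_cancel₀ hq', one_smul]
  have sF : star F = -E := by
    have := congrArg star sE
    rw [star_star, star_neg] at this
    rw [this, neg_neg]
  have e1 := inv_comm_aux kk kk' KE
  have e2 := inv_comm_aux kk kk' KF
  refine ⟨sa, ?_, sF, sK', sK, ?_, ?_, ?_, ?_, ?_, ?_, ?_, ?_, ?_, ?_, ?_, kk', kk, ?_, ?_, ?_⟩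
  · rw [star_neg, star_smul, sc, Complex.star_def, Complex.conj_ofReal, smul_neg]
  · simp only [mul_neg, neg_mul, mul_smul_comm, smul_mul_assoc, ac, smul_neg]
  · simp only [mul_neg, neg_mul, mul_smul_comm, smul_mul_assoc, ab, smul_neg]
    rw [smul_comm]
  · simp only [mul_neg, neg_mul, mul_smul_comm, smul_mul_assoc, cd, smul_neg]
  · simp only [mul_neg, neg_mul, mul_smul_comm, smul_mul_assoc, bd, smul_neg]
    rw [smul_comm]
  · simp only [mul_neg, neg_mul, mul_smul_comm, smul_mul_assoc, bc, smul_neg]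
    rw [smul_comm]
  · simp only [mul_neg, neg_mul, mul_smul_comm, smul_mul_assoc, ← bc, smul_neg, neg_neg]
    rw [inv_smul_smul₀ hq', ad]
  · simp only [mul_neg, neg_mul, mul_smul_comm, smul_mul_assoc, ← bc, smul_neg, neg_neg]
    rw [inv_smul_smul₀ hq', da]
  · simp [-Complex.coe_smul, smul_smul, hq', cc]
  · simp [-Complex.coe_smul, smul_smul, hq', cc']
  · simp [-Complex.coe_smul, smul_smul, hq', bb]
  · simp [-Complex.coe_smul, smul_smul, hq', bb']
  · rw [e2, smul_inv_smul₀ hq']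
  · rw [e1, inv_smul_smul₀ hq']
  · rw [← neg_sub, EF, ← smul_neg, neg_sub]

lemma left_to_right {A : Type} [Ring A] [Algebra ℂ A] [StarRing A] [StarModule ℂ A] {q : ℝ}
    (hq : 0 < q) {a b c d b' c' E F K K' : A}
    (h : SULeftRel q a b c d b' c' E F K K') :
    SURightRel q a (-((q : ℂ) • c)) (-((q : ℂ)⁻¹ • b)) d (-((q : ℂ)⁻¹ • c'))
      (-((q : ℂ) • b')) F E K' K := by
  refine ⟨comm_swap hq.ne' h.1, ?_⟩
  obtain ⟨⟨-, -, -, -, -, -, -, -, -, -, -, -, -, -, -, -, kk, kk', -, -, -⟩,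
    aK, aE, aF, bK, bE, bF, cK, cE, cF, dK, dE, dF⟩ := h
  have hs : (Real.sqrt q : ℂ) ≠ 0 := by exact_mod_cast (Real.sqrt_pos.2 hq).ne'
  have hqs : (q : ℂ) = (Real.sqrt q : ℂ) ^ 2 := by
    rw [← Complex.ofReal_pow, Real.sq_sqrt hq.le]
  rw [hqs]
  generalize (Real.sqrt q : ℂ) = s at *
  have ka := inv_comm_aux2 kk kk' aK
  have kb := inv_comm_aux2 kk kk' bK
  have kc := inv_comm_aux2 kk kk' cK
  have kd := inv_comm_aux2 kk kk' dK
  rw [ka] at cE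
  rw [kb] at dE
  rw [kc] at aF
  rw [kd] at bF
  simp only [mul_neg, neg_mul, mul_smul_comm, smul_mul_assoc]
  refine ⟨?_, ?_, ?_, ?_, ?_, ?_, ?_, ?_, ?_, ?_, ?_, ?_⟩ <;>
  simp only [ka, kb, kc, kd, aE, aF, bE, bF, cE, cF, dE, dF] <;>
  match_scalars <;> field_simp <;> try ring

lemma right_to_left {A : Type} [Ring A] [Algebra ℂ A] [StarRing A] [StarModule ℂ A] {q : ℝ}
    (hq : 0 < q) {a b c d b' c' E F K K' : A}
    (h : SURightRel q a b c d b' c' E F K K') :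
    SULeftRel q a (-((q : ℂ) • c)) (-((q : ℂ)⁻¹ • b)) d (-((q : ℂ)⁻¹ • c'))
      (-((q : ℂ) • b')) F E K' K := by
  refine ⟨comm_swap hq.ne' h.1, ?_⟩
  obtain ⟨⟨-, -, -, -, -, -, -, -, -, -, -, -, -, -, -, -, kk, kk', -, -, -⟩,
    Ka, Ea, Fa, Kb, Eb, Fb, Kc, Ec, Fc, Kd, Ed, Fd⟩ := h
  have hs : (Real.sqrt q : ℂ) ≠ 0 := by exact_mod_cast (Real.sqrt_pos.2 hq).ne'
  have hqs : (q : ℂ) = (Real.sqrt q : ℂ) ^ 2 := by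
    rw [← Complex.ofReal_pow, Real.sq_sqrt hq.le]
  rw [hqs]
  generalize (Real.sqrt q : ℂ) = s at *
  have ka := inv_comm_aux kk kk' Ka
  have kb := inv_comm_aux kk kk' Kb
  have kc := inv_comm_aux kk kk' Kc
  have kd := inv_comm_aux kk kk' Kd
  simp only [mul_neg, neg_mul, mul_smul_comm, smul_mul_assoc]
  refine ⟨?_, ?_, ?_, ?_, ?_, ?_, ?_, ?_, ?_, ?_, ?_, ?_⟩ <;>
  simp only [ka, kb, kc, kd, Ka, Kb, Kc, Kd, Ea, Fa, Eb, Fb, Ec, Fc, Ed, Fd] <;>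
  match_scalars <;> field_simp <;> try ring

/-- There is a ∗-algebra isomorphism
`θ : U_q(su_{1,1}) ⋉ Ô(SU_q(1,1)) → Ô(SU_q(1,1)) ⋊ U_q(su_{1,1})` with `θ(a) = a`,
`θ(b) = -qc`, `θ(c) = -q⁻¹b`, `θ(d) = d`, `θ(E) = F`, `θ(F) = E`, `θ(K) = K⁻¹`
(hence `θ(b⁻¹) = -q⁻¹c⁻¹`, `θ(c⁻¹) = -qb⁻¹`, `θ(K⁻¹) = K`). -/
theorem stmt_12 (q : ℝ) (hq0 : 0 < q) (hq1 : q < 1)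
    (A : Type) [Ring A] [Algebra ℂ A] [StarRing A] [StarModule ℂ A]
    (B : Type) [Ring B] [Algebra ℂ B] [StarRing B] [StarModule ℂ B]
    (a b c d b' c' E F K K' : A) (a₁ b₁ c₁ d₁ b₁' c₁' E₁ F₁ L L' : B)
    (hA : IsUniversalSULeft q A a b c d b' c' E F K K')
    (hB : IsUniversalSURight q B a₁ b₁ c₁ d₁ b₁' c₁' E₁ F₁ L L') :
    ∃ θ : A ≃⋆ₐ[ℂ] B,
      θ a = a₁ ∧ θ b = -((q : ℂ) • c₁) ∧ θ c = -((q : ℂ)⁻¹ • b₁) ∧ θ d = d₁ ∧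
      θ E = F₁ ∧ θ F = E₁ ∧ θ K = L' ∧
      θ b' = -((q : ℂ)⁻¹ • c₁') ∧ θ c' = -((q : ℂ) • b₁') ∧ θ K' = L := by
  have hq' : (q : ℂ) ≠ 0 := by exact_mod_cast hq0.ne'
  obtain ⟨f, ⟨fa, fb, fc, fd, fb', fc', fE, fF, fK, fK'⟩, -⟩ :=
    hA.2 B _ _ _ _ _ _ _ _ _ _ (right_to_left hq0 hB.1)
  obtain ⟨g, ⟨ga, gb, gc, gd, gb', gc', gE, gF, gK, gK'⟩, -⟩ :=
    hB.2 A _ _ _ _ _ _ _ _ _ _ (left_to_right hq0 hA.1)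
  have hgf : g.comp f = StarAlgHom.id ℂ A := by
    refine (hA.2 A _ _ _ _ _ _ _ _ _ _ hA.1).unique ?_ ?_
    · simp [-Complex.coe_smul, fa, fb, fc, fd, fb', fc', fE, fF, fK, fK', ga, gb, gc, gd, gb', gc', gE, gF, gK, gK',
        hq', smul_smul]
    · simp
  have hfg : f.comp g = StarAlgHom.id ℂ B := by
    refine (hB.2 B _ _ _ _ _ _ _ _ _ _ hB.1).unique ?_ ?_
    · simp [-Complex.coe_smul, fa, fb, fc, fd, fb', fc', fE, fF, fK, fK', ga, gb, gc, gd, gb', gc', gE, gF, gK, gK',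
        hq', smul_smul]
    · simp
  exact ⟨StarAlgEquiv.ofStarAlgHom f g hgf hfg, fa, fb, fc, fd, fE, fF, fK, fb', fc', fK'⟩
end

section
/- There is a ∗-algebra isomorphism ψ: U_q(su_{1,1})⋉O(U_q) → O(U_q)⋊U_q(su_{1,1}) determined on generators by ψ(z) = z, ψ(K) = K⁻¹, ψ(E) = −F (hence ψ(z̄) = z̄, ψ(K⁻¹) = K, ψ(F) = −E). -/
/-- The defining relations of the cross product ∗-algebra `U_q(su_{1,1}) ⋉ O(U_q)` on
elements `z, E, F, K, K'` (`K'` playing the role of `K⁻¹`, `star z` that of `z̄`) of a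
∗-algebra over ℂ, including the involution conditions `K* = K`, `K'* = K'`, `E* = -F`. -/
def UqLeftRel {A : Type} [Ring A] [Algebra ℂ A] [StarRing A]
    (q : ℝ) (z E F K K' : A) : Prop :=
  star K = K ∧ star K' = K' ∧ star E = -F ∧
  star z * z - (q : ℂ) ^ 2 • (z * star z) = (1 - (q : ℂ) ^ 2) • (1 : A) ∧
  K * K' = 1 ∧ K' * K = 1 ∧
  K * E = (q : ℂ) • (E * K) ∧ K * F = (q : ℂ)⁻¹ • (F * K) ∧
  E * F - F * E = ((q : ℂ) - (q : ℂ)⁻¹)⁻¹ • (K * K - K' * K') ∧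
  z * K = (q : ℂ)⁻¹ • (K * z) ∧
  z * E = (q : ℂ)⁻¹ • (E * z) - (Real.sqrt q : ℂ) • (K' * (z * z)) ∧
  z * F = (q : ℂ)⁻¹ • (F * z) + (Real.sqrt q : ℂ)⁻¹ • K' ∧
  star z * K = (q : ℂ) • (K * star z) ∧
  star z * E = (q : ℂ) • (E * star z) + (Real.sqrt q : ℂ) • K' ∧
  star z * F = (q : ℂ) • (F * star z)
    - (Real.sqrt q : ℂ)⁻¹ • (K' * (star z * star z))

/-- The defining relations of the right cross product ∗-algebra `O(U_q) ⋊ U_q(su_{1,1})`. -/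
def UqRightRel {B : Type} [Ring B] [Algebra ℂ B] [StarRing B]
    (q : ℝ) (z E F K K' : B) : Prop :=
  star K = K ∧ star K' = K' ∧ star E = -F ∧
  star z * z - (q : ℂ) ^ 2 • (z * star z) = (1 - (q : ℂ) ^ 2) • (1 : B) ∧
  K * K' = 1 ∧ K' * K = 1 ∧
  K * E = (q : ℂ) • (E * K) ∧ K * F = (q : ℂ)⁻¹ • (F * K) ∧
  E * F - F * E = ((q : ℂ) - (q : ℂ)⁻¹)⁻¹ • (K * K - K' * K') ∧
  K * z = (q : ℂ)⁻¹ • (z * K) ∧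
  E * z = (q : ℂ) • (z * E) + (Real.sqrt q : ℂ) • K ∧
  F * z = (q : ℂ) • (z * F) - (Real.sqrt q : ℂ)⁻¹ • (z * z * K) ∧
  K * star z = (q : ℂ) • (star z * K) ∧
  E * star z = (q : ℂ)⁻¹ • (star z * E)
    - (Real.sqrt q : ℂ) • (star z * star z * K) ∧
  F * star z = (q : ℂ)⁻¹ • (star z * F) + (Real.sqrt q : ℂ)⁻¹ • K

/-- `A` together with the elements `z, E, F, K, K'` is the universal unital ℂ-∗-algebra
on these generators subject to the relations of `U_q(su_{1,1}) ⋉ O(U_q)`. -/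
def IsUniversalUqLeft (q : ℝ) (A : Type) [Ring A] [Algebra ℂ A] [StarRing A]
    [StarModule ℂ A] (z E F K K' : A) : Prop :=
  UqLeftRel q z E F K K' ∧
  ∀ (B : Type) [Ring B] [Algebra ℂ B] [StarRing B] [StarModule ℂ B],
    ∀ z' E' F' L L' : B, UqLeftRel q z' E' F' L L' →
      ∃! φ : A →⋆ₐ[ℂ] B, φ z = z' ∧ φ E = E' ∧ φ F = F' ∧ φ K = L ∧ φ K' = L'

/-- `B` together with `z, E, F, K, K'` is the universal unital ℂ-∗-algebra subject to the
relations of `O(U_q) ⋊ U_q(su_{1,1})`. -/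
def IsUniversalUqRight (q : ℝ) (B : Type) [Ring B] [Algebra ℂ B] [StarRing B]
    [StarModule ℂ B] (z E F K K' : B) : Prop :=
  UqRightRel q z E F K K' ∧
  ∀ (C : Type) [Ring C] [Algebra ℂ C] [StarRing C] [StarModule ℂ C],
    ∀ z' E' F' L L' : C, UqRightRel q z' E' F' L L' →
      ∃! φ : B →⋆ₐ[ℂ] C, φ z = z' ∧ φ E = E' ∧ φ F = F' ∧ φ K = L ∧ φ K' = L'

theorem inv_q_comm {A : Type} [Ring A] [Algebra ℂ A] {K K' x : A} {c : ℂ} (hc : c ≠ 0)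
    (h1 : K * K' = 1) (h2 : K' * K = 1) (h : K * x = c • (x * K)) :
    K' * x = c⁻¹ • (x * K') := by
  have : x * K' = c • (K' * x) := by
    calc x * K' = K' * (K * x) * K' := by rw [← mul_assoc, h2, one_mul]
      _ = c • (K' * x * (K * K')) := by
        rw [h]; simp only [mul_smul_comm, smul_mul_assoc, mul_assoc]
      _ = c • (K' * x) := by rw [h1, mul_one]
  rw [this, smul_smul, inv_mul_cancel₀ hc, one_smul]

theorem flip_comm {A : Type} [Ring A] [Algebra ℂ A] {x y : A} {c : ℂ} (hc : c ≠ 0)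
    (h : x = c • y) : y = c⁻¹ • x := by
  rw [h, smul_smul, inv_mul_cancel₀ hc, one_smul]

theorem sqrt_facts {q : ℝ} (hq0 : 0 < q) :
    (Real.sqrt q : ℂ) ≠ 0 ∧ (q : ℂ) = (Real.sqrt q : ℂ) ^ 2 := by
  constructor
  · exact_mod_cast (Real.sqrt_pos.2 hq0).ne'
  · exact_mod_cast (Real.sq_sqrt hq0.le).symm

theorem sq_comm {A : Type} [Ring A] [Algebra ℂ A] {K x : A} {c : ℂ}
    (h : K * x = c • (x * K)) : K * (x * x) = (c * c) • (x * x * K) := by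
  rw [← mul_assoc, h, smul_mul_assoc, mul_assoc, h, mul_smul_comm, smul_smul, mul_assoc]

theorem left_of_right {B : Type} [Ring B] [Algebra ℂ B] [StarRing B] {q : ℝ} (hq0 : 0 < q)
    {z E F K K' : B} (h : UqRightRel q z E F K K') : UqLeftRel q z (-F) (-E) K' K := by
  obtain ⟨h1, h2, h3, h4, h5, h6, h7, h8, h9, h10, h11, h12, h13, h14, h15⟩ := h
  obtain ⟨hs, hqs⟩ := sqrt_facts hq0
  have hq : (q : ℂ) ≠ 0 := by exact_mod_cast hq0.ne'
  have a1 := inv_q_comm hq h5 h6 h7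
  have a2 := inv_q_comm (inv_ne_zero hq) h5 h6 h8
  have a3 := inv_q_comm (inv_ne_zero hq) h5 h6 h10
  have a4 := inv_q_comm hq h5 h6 h13
  have b1 := sq_comm h10
  have b2 := sq_comm h13
  refine ⟨h2, h1, ?_, h4, h6, h5, ?_, ?_, ?_, ?_, ?_, ?_, ?_, ?_, ?_⟩
  · have : F = - star E := by rw [h3, neg_neg]
    rw [this]; simp
  · rw [mul_neg, a2, inv_inv, neg_mul, smul_neg]
  · rw [mul_neg, a1, neg_mul, smul_neg]
  · rw [neg_mul_neg, neg_mul_neg, ← neg_sub, h9, ← smul_neg, neg_sub]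
  · rw [a3, smul_smul]; simp [hq]
  · rw [b1, mul_neg, neg_mul, h12, hqs]
    match_scalars <;> field_simp <;> ring
  · rw [mul_neg, neg_mul, h11, hqs]
    match_scalars <;> field_simp <;> ring
  · rw [a4, smul_smul]; simp [hq]
  · rw [mul_neg, neg_mul, h15, hqs]
    match_scalars <;> field_simp <;> ring
  · rw [b2, mul_neg, neg_mul, h14, hqs]
    match_scalars <;> field_simp <;> ring

theorem right_of_left {B : Type} [Ring B] [Algebra ℂ B] [StarRing B] {q : ℝ} (hq0 : 0 < q)
    {z E F K K' : B} (h : UqLeftRel q z E F K K') : UqRightRel q z (-F) (-E) K' K := by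
  obtain ⟨h1, h2, h3, h4, h5, h6, h7, h8, h9, h10, h11, h12, h13, h14, h15⟩ := h
  obtain ⟨hs, hqs⟩ := sqrt_facts hq0
  have hq : (q : ℂ) ≠ 0 := by exact_mod_cast hq0.ne'
  have a1 := inv_q_comm hq h5 h6 h7
  have a2 := inv_q_comm (inv_ne_zero hq) h5 h6 h8
  have a3 := inv_q_comm (inv_ne_zero (inv_ne_zero hq)) h5 h6 (flip_comm (inv_ne_zero hq) h10)
  have a4 := inv_q_comm (inv_ne_zero hq) h5 h6 (flip_comm hq h13)
  rw [inv_inv] at a3 a4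
  have b1 := sq_comm a3
  have b2 := sq_comm a4
  refine ⟨h2, h1, ?_, h4, h6, h5, ?_, ?_, ?_, a3, ?_, ?_, a4, ?_, ?_⟩
  · have : F = - star E := by rw [h3, neg_neg]
    rw [this]; simp
  · rw [mul_neg, a2, inv_inv, neg_mul, smul_neg]
  · rw [mul_neg, a1, neg_mul, smul_neg]
  · rw [neg_mul_neg, neg_mul_neg, ← neg_sub, h9, ← smul_neg, neg_sub]
  · rw [mul_neg, neg_mul, h12, hqs]
    match_scalars <;> field_simp <;> ring
  · rw [mul_neg, neg_mul, h11, b1, hqs]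
    match_scalars <;> field_simp <;> ring
  · rw [mul_neg, neg_mul, h15, b2, hqs]
    match_scalars <;> field_simp <;> ring
  · rw [mul_neg, neg_mul, h14, hqs]
    match_scalars <;> field_simp <;> ring

/-- There is a ∗-algebra isomorphism
`ψ : U_q(su_{1,1}) ⋉ O(U_q) → O(U_q) ⋊ U_q(su_{1,1})` with `ψ(z) = z`, `ψ(K) = K⁻¹`,
`ψ(E) = -F` (hence `ψ(z̄) = z̄`, `ψ(K⁻¹) = K`, `ψ(F) = -E`). -/
theorem stmt_13 (q : ℝ) (hq0 : 0 < q) (hq1 : q < 1)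
    (A : Type) [Ring A] [Algebra ℂ A] [StarRing A] [StarModule ℂ A]
    (B : Type) [Ring B] [Algebra ℂ B] [StarRing B] [StarModule ℂ B]
    (z E F K K' : A) (z' E' F' L L' : B)
    (hA : IsUniversalUqLeft q A z E F K K')
    (hB : IsUniversalUqRight q B z' E' F' L L') :
    ∃ ψ : A ≃⋆ₐ[ℂ] B,
      ψ z = z' ∧ ψ K = L' ∧ ψ E = -F' ∧
      ψ (star z) = star z' ∧ ψ K' = L ∧ ψ F = -E' ∧
      ψ.symm z' = z ∧ ψ.symm L = K' ∧ ψ.symm E' = -F ∧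
      ψ.symm (star z') = star z ∧ ψ.symm L' = K ∧ ψ.symm F' = -E := by
  obtain ⟨hA1, hA2⟩ := hA
  obtain ⟨hB1, hB2⟩ := hB
  obtain ⟨φ, ⟨p1, p2, p3, p4, p5⟩, -⟩ := hA2 B _ _ _ _ _ (left_of_right hq0 hB1)
  obtain ⟨χ, ⟨r1, r2, r3, r4, r5⟩, -⟩ := hB2 A _ _ _ _ _ (right_of_left hq0 hA1)
  have e1 : χ.comp φ = StarAlgHom.id ℂ A :=
    (hA2 A _ _ _ _ _ hA1).unique
      (by simp [p1, p2, p3, p4, p5, r1, r2, r3, r4, r5]) (by simp)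
  have e2 : φ.comp χ = StarAlgHom.id ℂ B :=
    (hB2 B _ _ _ _ _ hB1).unique
      (by simp [p1, p2, p3, p4, p5, r1, r2, r3, r4, r5]) (by simp)
  refine ⟨StarAlgEquiv.ofStarAlgHom φ χ e1 e2, p1, p4, p2, ?_, p5, p3, r1, r4, r2, ?_, r5, r3⟩
  · exact (map_star φ z).trans (by rw [p1])
  · exact (map_star χ z').trans (by rw [r1])
end

section
/- The maps a, b, c, d form a ∗-representation of O(SU_q(1,1)) on D: ⟨aξ, η⟩ = ⟨ξ, dη⟩ and ⟨bξ, η⟩ = q⟨ξ, cη⟩ for all ξ, η ∈ D, and on D the relations ab = qba, ac = qca, bd = qdb, cd = qdc, bc = cb, ad − qbc = id, da − q⁻¹bc = id all hold. -/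
noncomputable section

namespace Stmt14

variable {K : Type*} [NormedAddCommGroup K] [InnerProductSpace ℂ K] [CompleteSpace K]

/-- `(1 + q^{2n}A²)^{1/2}`, the positive square root given by the continuous functional
calculus. -/
def alpha (q : ℝ) (A : K →L[ℂ] K) (n : ℤ) : K →L[ℂ] K :=
  CFC.sqrt (1 + ((q ^ (2 * n) : ℝ) : ℂ) • (A * A))

/-- `a η_n = (1 + q^{2n}A²)^{1/2} η_{n-1}`. -/
def aOp (q : ℝ) (A : K →L[ℂ] K) : Module.End ℂ (ℤ →₀ K) :=
  Finsupp.lsum ℂ fun n => (Finsupp.lsingle (n - 1)).comp (alpha q A n : K →ₗ[ℂ] K)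

/-- `d η_n = (1 + q^{2(n+1)}A²)^{1/2} η_{n+1}`. -/
def dOp (q : ℝ) (A : K →L[ℂ] K) : Module.End ℂ (ℤ →₀ K) :=
  Finsupp.lsum ℂ fun n => (Finsupp.lsingle (n + 1)).comp (alpha q A (n + 1) : K →ₗ[ℂ] K)

/-- `b η_n = q^{n+1} A w* η_n`. -/
def bOp (q : ℝ) (A w : K →L[ℂ] K) : Module.End ℂ (ℤ →₀ K) :=
  Finsupp.lsum ℂ fun n => (Finsupp.lsingle n).comp
    (((q : ℂ) ^ (n + 1)) • ((A * star w : K →L[ℂ] K) : K →ₗ[ℂ] K))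

/-- `c η_n = qⁿ A w η_n`. -/
def cOp (q : ℝ) (A w : K →L[ℂ] K) : Module.End ℂ (ℤ →₀ K) :=
  Finsupp.lsum ℂ fun n => (Finsupp.lsingle n).comp
    (((q : ℂ) ^ n) • ((A * w : K →L[ℂ] K) : K →ₗ[ℂ] K))

end Stmt14

namespace Stmt14Aux
open Stmt14

section inner
variable {H : Type*} [NormedAddCommGroup H] [InnerProductSpace ℂ H]

lemma inner_add_left (x y z : ℤ →₀ H) :
    finsuppInner (x + y) z = finsuppInner x z + finsuppInner y z := by
  unfold finsuppInner
  exact Finsupp.sum_add_index' (by simp) (by intros; exact _root_.inner_add_left _ _ _)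

lemma inner_add_right (x y z : ℤ →₀ H) :
    finsuppInner x (y + z) = finsuppInner x y + finsuppInner x z := by
  simp [finsuppInner, _root_.inner_add_right, Finsupp.sum_add]

lemma inner_zero_left (z : ℤ →₀ H) : finsuppInner 0 z = 0 := by
  simp [finsuppInner]

lemma inner_zero_right (z : ℤ →₀ H) : finsuppInner z 0 = 0 := by
  simp [finsuppInner]

lemma inner_single (m n : ℤ) (x y : H) :
    finsuppInner (Finsupp.single m x) (Finsupp.single n y) =
      if m = n then inner ℂ x y else 0 := by
  unfold finsuppInner
  rw [Finsupp.sum_single_index (by simp), Finsupp.single_apply]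
  by_cases h : m = n
  · simp [h]
  · simp [h, Ne.symm h]

/-- Adjointness can be checked on elements supported at one point. -/
lemma adj (S T : Module.End ℂ (ℤ →₀ H)) (k : ℂ)
    (h : ∀ m n x y, finsuppInner (S (Finsupp.single m x)) (Finsupp.single n y) =
      k * finsuppInner (Finsupp.single m x) (T (Finsupp.single n y))) (ξ η : ℤ →₀ H) :
    finsuppInner (S ξ) η = k * finsuppInner ξ (T η) := by
  induction ξ using Finsupp.induction_linear with
  | zero => simp [inner_zero_left]
  | add f g hf hg => rw [map_add, inner_add_left, inner_add_left, hf, hg, mul_add]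
  | single m x =>
    induction η using Finsupp.induction_linear with
    | zero => simp [inner_zero_right]
    | add f g hf hg => rw [map_add, inner_add_right, inner_add_right, hf, hg, mul_add]
    | single n y => exact h m n x y

end inner

variable {K : Type*} [NormedAddCommGroup K] [InnerProductSpace ℂ K] [CompleteSpace K]

lemma alpha_nonneg (q : ℝ) (A : K →L[ℂ] K) (n : ℤ) : 0 ≤ alpha q A n :=
  CFC.sqrt_nonneg _

lemma alpha_sq (q : ℝ) (hq : 0 < q) (A : K →L[ℂ] K) (hA : IsSelfAdjoint A) (n : ℤ) :
    alpha q A n * alpha q A n = 1 + ((q ^ (2 * n) : ℝ) : ℂ) • (A * A) := by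
  unfold alpha
  apply CFC.sqrt_mul_sqrt_self
  have h1 : (0 : K →L[ℂ] K) ≤ A * A := hA.mul_self_nonneg
  have h2 : (0 : ℝ) ≤ q ^ (2 * n) := by positivity
  have h3 : (0 : K →L[ℂ] K) ≤ ((q ^ (2 * n) : ℝ) : ℂ) • (A * A) := by
    rw [Complex.coe_smul]
    exact smul_nonneg h2 h1
  exact add_nonneg zero_le_one h3

lemma alpha_comm (q : ℝ) (A B : K →L[ℂ] K) (h : Commute A B) (n : ℤ) :
    Commute (alpha q A n) B := by
  unfold alpha CFC.sqrt
  apply Commute.cfcₙ_nnreal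
  exact (Commute.one_left B).add_left ((h.mul_left h).smul_left _)

lemma alpha_adj (q : ℝ) (A : K →L[ℂ] K) (n : ℤ) (x y : K) :
    inner ℂ (alpha q A n x) y = inner ℂ x (alpha q A n y) := by
  have h : IsSelfAdjoint (alpha q A n) := (alpha_nonneg q A n).isSelfAdjoint
  rw [← ContinuousLinearMap.adjoint_inner_right, ← ContinuousLinearMap.star_eq_adjoint, h.star_eq]

lemma aOp_single (q : ℝ) (A : K →L[ℂ] K) (n : ℤ) (x : K) :
    aOp q A (Finsupp.single n x) = Finsupp.single (n - 1) (alpha q A n x) := by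
  simp [aOp]

lemma dOp_single (q : ℝ) (A : K →L[ℂ] K) (n : ℤ) (x : K) :
    dOp q A (Finsupp.single n x) = Finsupp.single (n + 1) (alpha q A (n + 1) x) := by
  simp [dOp]

lemma bOp_single (q : ℝ) (A w : K →L[ℂ] K) (n : ℤ) (x : K) :
    bOp q A w (Finsupp.single n x) =
      Finsupp.single n (((q : ℂ) ^ (n + 1)) • (A * star w) x) := by
  simp [bOp]

lemma cOp_single (q : ℝ) (A w : K →L[ℂ] K) (n : ℤ) (x : K) :
    cOp q A w (Finsupp.single n x) = Finsupp.single n (((q : ℂ) ^ n) • (A * w) x) := by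
  simp [cOp]

/-- Two operators agree if they agree on elements supported at one point. -/
lemma end_ext (S T : Module.End ℂ (ℤ →₀ K))
    (h : ∀ n x, S (Finsupp.single n x) = T (Finsupp.single n x)) : S = T :=
  Finsupp.lhom_ext h

end Stmt14Aux


open Stmt14 in
/-- With `0 < q < 1`, `w` a unitary operator and `A` a bounded self-adjoint
operator on a Hilbert space `K` with `wA = Aw`, the operators `a, b, c, d` defined above
on the space of finitely supported functions `ℤ →₀ K` form a ∗-representation of
`O(SU_q(1,1))`: `⟨aξ, η⟩ = ⟨ξ, dη⟩`, `⟨bξ, η⟩ = q⟨ξ, cη⟩`, and `ab = qba`, `ac = qca`,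
`bd = qdb`, `cd = qdc`, `bc = cb`, `ad - qbc = 1`, `da - q⁻¹bc = 1`. -/
theorem stmt_14 {K : Type*} [NormedAddCommGroup K] [InnerProductSpace ℂ K]
    [CompleteSpace K]
    (q : ℝ) (hq0 : 0 < q) (hq1 : q < 1)
    (w A : K →L[ℂ] K) (hw : w ∈ unitary (K →L[ℂ] K)) (hA : IsSelfAdjoint A)
    (hwA : w * A = A * w) :
    (∀ ξ η : ℤ →₀ K, finsuppInner (aOp q A ξ) η = finsuppInner ξ (dOp q A η)) ∧
    (∀ ξ η : ℤ →₀ K,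
      finsuppInner (bOp q A w ξ) η = (q : ℂ) * finsuppInner ξ (cOp q A w η)) ∧
    aOp q A * bOp q A w = (q : ℂ) • (bOp q A w * aOp q A) ∧
    aOp q A * cOp q A w = (q : ℂ) • (cOp q A w * aOp q A) ∧
    bOp q A w * dOp q A = (q : ℂ) • (dOp q A * bOp q A w) ∧
    cOp q A w * dOp q A = (q : ℂ) • (dOp q A * cOp q A w) ∧
    bOp q A w * cOp q A w = cOp q A w * bOp q A w ∧
    aOp q A * dOp q A - (q : ℂ) • (bOp q A w * cOp q A w) = 1 ∧
    dOp q A * aOp q A - (q : ℂ)⁻¹ • (bOp q A w * cOp q A w) = 1 := by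
  have hq : (q : ℂ) ≠ 0 := by exact_mod_cast hq0.ne'
  have hws : star w * w = 1 := (Unitary.mem_iff.mp hw).1
  have hww : w * star w = 1 := (Unitary.mem_iff.mp hw).2
  have hcAw : Commute A w := hwA.symm
  have hcAs : Commute A (star w) := by
    have := hcAw.star_star
    rwa [hA.star_eq] at this
  have hB : ∀ n x, alpha q A n ((A * star w) x) = (A * star w) (alpha q A n x) := fun n x =>
    DFunLike.congr_fun
      (Stmt14Aux.alpha_comm q A _ ((Commute.refl A).mul_right hcAs) n).eq x
  have hC : ∀ n x, alpha q A n ((A * w) x) = (A * w) (alpha q A n x) := fun n x =>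
    DFunLike.congr_fun
      (Stmt14Aux.alpha_comm q A _ ((Commute.refl A).mul_right hcAw) n).eq x
  have hBC : (A * star w) * (A * w) = A * A := by
    rw [mul_assoc, ← mul_assoc (star w), ← hcAs.eq, mul_assoc A (star w), hws, mul_one]
  have hCB : (A * w) * (A * star w) = A * A := by
    rw [mul_assoc, ← mul_assoc w, ← hcAw.eq, mul_assoc A w, hww, mul_one]
  have hBC' : ∀ x, (A * star w) ((A * w) x) = (A * A) x := fun x => DFunLike.congr_fun hBC x
  have hCB' : ∀ x, (A * w) ((A * star w) x) = (A * A) x := fun x => DFunLike.congr_fun hCB x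
  have hsq : ∀ n x, alpha q A n (alpha q A n x) = x + ((q : ℂ) ^ (2 * n)) • (A * A) x := by
    intro n x
    have := DFunLike.congr_fun (Stmt14Aux.alpha_sq q hq0 A hA n) x
    push_cast at this
    exact this
  refine ⟨?_, ?_, ?_, ?_, ?_, ?_, ?_, ?_, ?_⟩
  · intro ξ η
    rw [← one_mul (finsuppInner ξ _)]
    apply Stmt14Aux.adj
    intro m n x y
    rw [Stmt14Aux.aOp_single, Stmt14Aux.dOp_single, Stmt14Aux.inner_single,
      Stmt14Aux.inner_single, one_mul]
    by_cases h : m = n + 1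
    · subst h
      simp [Stmt14Aux.alpha_adj]
    · rw [if_neg h, if_neg (by omega)]
  · apply Stmt14Aux.adj
    intro m n x y
    rw [Stmt14Aux.bOp_single, Stmt14Aux.cOp_single, Stmt14Aux.inner_single,
      Stmt14Aux.inner_single]
    by_cases h : m = n
    · subst h
      have hst : star (A * w) = A * star w := by
        rw [star_mul, hA.star_eq, hcAs.eq]
      rw [if_pos rfl, if_pos rfl, inner_smul_left, inner_smul_right, ← hst,
        ContinuousLinearMap.star_eq_adjoint, ContinuousLinearMap.adjoint_inner_left,
        map_zpow₀, Complex.conj_ofReal, zpow_add_one₀ hq]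
      ring
    · rw [if_neg h, if_neg h, mul_zero]
  all_goals
    apply Stmt14Aux.end_ext
    intro n x
    simp only [Module.End.mul_apply, LinearMap.smul_apply, LinearMap.sub_apply,
      Module.End.one_apply, Stmt14Aux.aOp_single, Stmt14Aux.dOp_single,
      Stmt14Aux.bOp_single, Stmt14Aux.cOp_single, map_smul, hB, hC, hBC', hCB', smul_smul,
      Finsupp.smul_single, sub_add_cancel, add_sub_cancel_right, hsq, ← Finsupp.single_sub]
    congr 1
  · rw [zpow_add_one₀ hq, mul_comm]
  · rw [← zpow_one_add₀ hq]; congr 2; ring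
  · rw [zpow_add_one₀ hq, mul_comm]
  · rw [zpow_add_one₀ hq, mul_comm]
  · congr 1; ring
  · rw [sub_eq_iff_eq_add]; congr 2
    rw [two_mul, zpow_add₀ hq, zpow_add_one₀ hq]; ring
  · rw [sub_eq_iff_eq_add]; congr 2
    rw [two_mul, zpow_add₀ hq, zpow_add_one₀ hq]; field_simp

end
end

section
/- The maps z, z†, E, F, K̂, K̂⁻¹ form a ∗-representation of the cross product ∗-algebra U_q(su_{1,1})⋉O(U_q) on D: ⟨zξ, η⟩ = ⟨ξ, z†η⟩, ⟨Eξ, η⟩ = −⟨ξ, Fη⟩, ⟨K̂ξ, η⟩ = ⟨ξ, K̂η⟩ for all ξ, η ∈ D, and on D the relations hold: z†z − q²zz† = (1−q²)·id; K̂K̂⁻¹ = K̂⁻¹K̂ = id; K̂E = qEK̂; K̂F = q⁻¹FK̂; EF − FE = λ⁻¹(K̂² − K̂⁻²); zK̂ = q⁻¹K̂z; zE = q⁻¹Ez − q^{1/2}K̂⁻¹z²; zF = q⁻¹Fz + q^{−1/2}K̂⁻¹; z†K̂ = qK̂z†; z†E = qEz† + q^{1/2}K̂⁻¹; z†F = qFz†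 − q^{−1/2}K̂⁻¹(z†)². -/
noncomputable section

namespace Stmt16

variable {K : Type*} [NormedAddCommGroup K] [InnerProductSpace ℂ K] [CompleteSpace K]

/-- `z η_n = η_{n+1}`. -/
def zOp : Module.End ℂ (ℤ →₀ K) :=
  Finsupp.lsum ℂ fun n => Finsupp.lsingle (n + 1)

/-- `z† η_n = η_{n-1}`. -/
def zdOp : Module.End ℂ (ℤ →₀ K) :=
  Finsupp.lsum ℂ fun n => Finsupp.lsingle (n - 1)

/-- `K̂ η_n = qⁿ ε H η_n`. -/
def KOp (q ε : ℝ) (H : K →L[ℂ] K) : Module.End ℂ (ℤ →₀ K) :=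
  Finsupp.lsum ℂ fun n => (Finsupp.lsingle n).comp
    (((q : ℂ) ^ n * (ε : ℂ)) • (H : K →ₗ[ℂ] K))

/-- `K̂⁻¹ η_n = q⁻ⁿ ε H⁻¹ η_n`. -/
def KinvOp (q ε : ℝ) (H : K →L[ℂ] K) [Invertible H] : Module.End ℂ (ℤ →₀ K) :=
  Finsupp.lsum ℂ fun n => (Finsupp.lsingle n).comp
    (((q : ℂ) ^ (-n) * (ε : ℂ)) • ((⅟H : K →L[ℂ] K) : K →ₗ[ℂ] K))

/-- `F η_n = λ⁻¹q^{n-1/2} ε H v η_{n-1} + λ⁻¹q^{-n+1/2} ε H⁻¹ η_{n-1}`,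
where `λ = q - q⁻¹` and `q^{n-1/2} = (√q)^{2n-1}`. -/
def FOp (q ε : ℝ) (H v : K →L[ℂ] K) [Invertible H] : Module.End ℂ (ℤ →₀ K) :=
  Finsupp.lsum ℂ fun n =>
    (Finsupp.lsingle (n - 1)).comp
      ((((q : ℂ) - (q : ℂ)⁻¹)⁻¹ * (Real.sqrt q : ℂ) ^ (2 * n - 1) * (ε : ℂ)) •
        ((H * v : K →L[ℂ] K) : K →ₗ[ℂ] K))
    + (Finsupp.lsingle (n - 1)).comp
      ((((q : ℂ) - (q : ℂ)⁻¹)⁻¹ * (Real.sqrt q : ℂ) ^ (1 - 2 * n) * (ε : ℂ)) •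
        ((⅟H : K →L[ℂ] K) : K →ₗ[ℂ] K))

/-- `E η_n = -λ⁻¹q^{n+1/2} ε H v* η_{n+1} - λ⁻¹q^{-n-1/2} ε H⁻¹ η_{n+1}`. -/
def EOp (q ε : ℝ) (H v : K →L[ℂ] K) [Invertible H] : Module.End ℂ (ℤ →₀ K) :=
  Finsupp.lsum ℂ fun n =>
    -((Finsupp.lsingle (n + 1)).comp
      ((((q : ℂ) - (q : ℂ)⁻¹)⁻¹ * (Real.sqrt q : ℂ) ^ (2 * n + 1) * (ε : ℂ)) •
        ((H * star v : K →L[ℂ] K) : K →ₗ[ℂ] K)))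
    - (Finsupp.lsingle (n + 1)).comp
      ((((q : ℂ) - (q : ℂ)⁻¹)⁻¹ * (Real.sqrt q : ℂ) ^ (-(2 * n + 1)) * (ε : ℂ)) •
        ((⅟H : K →L[ℂ] K) : K →ₗ[ℂ] K))

end Stmt16

namespace Stmt16

section helpers

variable {K : Type*} [NormedAddCommGroup K] [InnerProductSpace ℂ K] [CompleteSpace K]

lemma zOp_single (n : ℤ) (x : K) :
    zOp (Finsupp.single n x) = Finsupp.single (n + 1) x := by
  simp [zOp]

lemma zdOp_single (n : ℤ) (x : K) :
    zdOp (Finsupp.single n x) = Finsupp.single (n - 1) x := by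
  simp [zdOp]

lemma qpow (q : ℝ) (hq0 : 0 < q) (n : ℤ) : (q : ℂ) ^ n = (Real.sqrt q : ℂ) ^ (2 * n) := by
  have : (q : ℂ) = (Real.sqrt q : ℂ) ^ (2 : ℤ) := by
    norm_cast
    exact (Real.sq_sqrt hq0.le).symm
  rw [zpow_mul, ← this]

lemma KOp_single (q ε : ℝ) (hq0 : 0 < q) (H : K →L[ℂ] K) (n : ℤ) (x : K) :
    KOp q ε H (Finsupp.single n x)
      = ((Real.sqrt q : ℂ) ^ (2 * n) * (ε : ℂ)) • Finsupp.single n (H x) := by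
  simp [KOp, qpow q hq0]

lemma KinvOp_single (q ε : ℝ) (hq0 : 0 < q) (H : K →L[ℂ] K) [Invertible H] (n : ℤ) (x : K) :
    KinvOp q ε H (Finsupp.single n x)
      = (((Real.sqrt q : ℂ) ^ (2 * n))⁻¹ * (ε : ℂ)) • Finsupp.single n ((⅟H : K →L[ℂ] K) x) := by
  simp [KinvOp, qpow q hq0]

lemma FOp_single (q ε : ℝ) (hq0 : 0 < q) (H v : K →L[ℂ] K) [Invertible H] (n : ℤ) (x : K) :
    FOp q ε H v (Finsupp.single n x)
      = (((q : ℂ) - (q : ℂ)⁻¹)⁻¹ * ((Real.sqrt q : ℂ) ^ (2 * n) / (Real.sqrt q : ℂ)) * (ε : ℂ)) •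
          Finsupp.single (n - 1) (H (v x))
        + (((q : ℂ) - (q : ℂ)⁻¹)⁻¹ * ((Real.sqrt q : ℂ) / (Real.sqrt q : ℂ) ^ (2 * n)) * (ε : ℂ)) •
          Finsupp.single (n - 1) ((⅟H : K →L[ℂ] K) x) := by
  have hs : (Real.sqrt q : ℂ) ≠ 0 := by
    exact_mod_cast (Real.sqrt_pos.2 hq0).ne'
  simp [FOp, zpow_sub₀ hs]

lemma EOp_single (q ε : ℝ) (hq0 : 0 < q) (H v : K →L[ℂ] K) [Invertible H] (n : ℤ) (x : K) :
    EOp q ε H v (Finsupp.single n x)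
      = -((((q : ℂ) - (q : ℂ)⁻¹)⁻¹ * ((Real.sqrt q : ℂ) ^ (2 * n) * (Real.sqrt q : ℂ)) * (ε : ℂ)) •
          Finsupp.single (n + 1) (H (star v x)))
        - (((q : ℂ) - (q : ℂ)⁻¹)⁻¹ * ((Real.sqrt q : ℂ) ^ (2 * n) * (Real.sqrt q : ℂ))⁻¹ * (ε : ℂ)) •
          Finsupp.single (n + 1) ((⅟H : K →L[ℂ] K) x) := by
  have hs : (Real.sqrt q : ℂ) ≠ 0 := by
    exact_mod_cast (Real.sqrt_pos.2 hq0).ne'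
  simp only [EOp, zpow_neg, zpow_add₀ hs, zpow_one]
  simp

lemma inner_add_left (a b c : ℤ →₀ K) :
    finsuppInner (a + b) c = finsuppInner a c + finsuppInner b c := by
  classical
  unfold finsuppInner
  exact Finsupp.sum_add_index' (by simp) (by intros; rw [_root_.inner_add_left])

lemma inner_add_right (a b c : ℤ →₀ K) :
    finsuppInner a (b + c) = finsuppInner a b + finsuppInner a c := by
  simp [finsuppInner, _root_.inner_add_right, Finsupp.sum_add]

lemma inner_zero_left (a : ℤ →₀ K) : finsuppInner 0 a = 0 := by simp [finsuppInner]

lemma inner_zero_right (a : ℤ →₀ K) : finsuppInner a 0 = 0 := by simp [finsuppInner]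

lemma inner_smul_right (c : ℂ) (a b : ℤ →₀ K) :
    finsuppInner a (c • b) = c * finsuppInner a b := by
  simp [finsuppInner, Finsupp.sum, Finset.mul_sum]

lemma inner_smul_left (c : ℂ) (a b : ℤ →₀ K) :
    finsuppInner (c • a) b = (starRingEnd ℂ) c * finsuppInner a b := by
  unfold finsuppInner
  rw [Finsupp.sum_smul_index' (by simp)]
  simp [Finsupp.sum, Finset.mul_sum, mul_comm]

lemma inner_single (m n : ℤ) (x y : K) :
    finsuppInner (Finsupp.single m x) (Finsupp.single n y)
      = if n = m then (inner ℂ x y : ℂ) else 0 := by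
  unfold finsuppInner
  rw [Finsupp.sum_single_index (by simp), Finsupp.single_apply]
  split_ifs <;> simp

lemma inner_ext (A B : Module.End ℂ (ℤ →₀ K))
    (h : ∀ m n x y, finsuppInner (A (Finsupp.single m x)) (Finsupp.single n y)
      = finsuppInner (Finsupp.single m x) (B (Finsupp.single n y))) (ξ η : ℤ →₀ K) :
    finsuppInner (A ξ) η = finsuppInner ξ (B η) := by
  induction ξ using Finsupp.induction_linear with
  | zero => simp [inner_zero_left]
  | add f g hf hg => simp [inner_add_left, hf, hg]
  | single m x =>
    induction η using Finsupp.induction_linear with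
    | zero => simp [inner_zero_right]
    | add f g hf hg => simp [inner_add_right, hf, hg]
    | single n y => exact h m n x y

end helpers

end Stmt16

open Stmt16 in
/-- With `0 < q < 1`, `λ = q - q⁻¹`, `ε ∈ {1,-1}`, `H` a bounded invertible
self-adjoint operator and `v` a unitary operator on a Hilbert space `K` with `Hv = vH`,
the operators `z, z†, E, F, K̂, K̂⁻¹` defined above on the space of finitely supported
functions `ℤ →₀ K` form a ∗-representation of the cross product ∗-algebra
`U_q(su_{1,1}) ⋉ O(U_q)`. -/
theorem stmt_16 {K : Type*} [NormedAddCommGroup K] [InnerProductSpace ℂ K]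
    [CompleteSpace K]
    (q : ℝ) (hq0 : 0 < q) (hq1 : q < 1)
    (ε : ℝ) (hε : ε = 1 ∨ ε = -1)
    (H v : K →L[ℂ] K) [Invertible H]
    (hH : IsSelfAdjoint H) (hv : v ∈ unitary (K →L[ℂ] K)) (hHv : H * v = v * H) :
    (∀ ξ η : ℤ →₀ K,
      finsuppInner ((zOp : Module.End ℂ (ℤ →₀ K)) ξ) η = finsuppInner ξ (zdOp η)) ∧
    (∀ ξ η : ℤ →₀ K,
      finsuppInner (EOp q ε H v ξ) η = -finsuppInner ξ (FOp q ε H v η)) ∧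
    (∀ ξ η : ℤ →₀ K,
      finsuppInner (KOp q ε H ξ) η = finsuppInner ξ (KOp q ε H η)) ∧
    (zdOp * zOp : Module.End ℂ (ℤ →₀ K)) - (q : ℂ) ^ 2 • (zOp * zdOp)
      = (1 - (q : ℂ) ^ 2) • 1 ∧
    KOp q ε H * KinvOp q ε H = 1 ∧ KinvOp q ε H * KOp q ε H = 1 ∧
    KOp q ε H * EOp q ε H v = (q : ℂ) • (EOp q ε H v * KOp q ε H) ∧
    KOp q ε H * FOp q ε H v = (q : ℂ)⁻¹ • (FOp q ε H v * KOp q ε H) ∧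
    EOp q ε H v * FOp q ε H v - FOp q ε H v * EOp q ε H v
      = ((q : ℂ) - (q : ℂ)⁻¹)⁻¹ •
        (KOp q ε H * KOp q ε H - KinvOp q ε H * KinvOp q ε H) ∧
    zOp * KOp q ε H = (q : ℂ)⁻¹ • (KOp q ε H * zOp) ∧
    zOp * EOp q ε H v
      = (q : ℂ)⁻¹ • (EOp q ε H v * zOp)
        - (Real.sqrt q : ℂ) • (KinvOp q ε H * (zOp * zOp)) ∧
    zOp * FOp q ε H v
      = (q : ℂ)⁻¹ • (FOp q ε H v * zOp) + (Real.sqrt q : ℂ)⁻¹ • KinvOp q ε H ∧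
    zdOp * KOp q ε H = (q : ℂ) • (KOp q ε H * zdOp) ∧
    zdOp * EOp q ε H v
      = (q : ℂ) • (EOp q ε H v * zdOp) + (Real.sqrt q : ℂ) • KinvOp q ε H ∧
    zdOp * FOp q ε H v
      = (q : ℂ) • (FOp q ε H v * zdOp)
        - (Real.sqrt q : ℂ)⁻¹ • (KinvOp q ε H * (zdOp * zdOp)) := by
  have hs0 : 0 < Real.sqrt q := Real.sqrt_pos.2 hq0
  have hs : (Real.sqrt q : ℂ) ≠ 0 := by exact_mod_cast hs0.ne'
  have hqs : (q : ℂ) = (Real.sqrt q : ℂ) ^ 2 := by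
    norm_cast
    exact (Real.sq_sqrt hq0.le).symm
  have hs4 : (Real.sqrt q : ℂ) ^ 4 - 1 ≠ 0 := by
    have h1 : (Real.sqrt q) ^ 4 = q ^ 2 := by
      rw [show 4 = 2 * 2 from rfl, pow_mul, Real.sq_sqrt hq0.le]
    have h2 : (Real.sqrt q) ^ 4 - 1 ≠ 0 := by
      rw [h1]; nlinarith
    exact_mod_cast h2
  have hl : ((q : ℂ) - (q : ℂ)⁻¹)⁻¹ = (Real.sqrt q : ℂ) ^ 2 / ((Real.sqrt q : ℂ) ^ 4 - 1) := by
    rw [hqs]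
    have : (Real.sqrt q : ℂ) ^ 2 - ((Real.sqrt q : ℂ) ^ 2)⁻¹
        = ((Real.sqrt q : ℂ) ^ 4 - 1) / (Real.sqrt q : ℂ) ^ 2 := by
      field_simp
    rw [this, inv_div]
  have hε2 : (ε : ℂ) ^ 2 = 1 := by rcases hε with h | h <;> simp [h]
  have HI : ∀ x, H ((⅟H : K →L[ℂ] K) x) = x := fun x => by
    rw [← ContinuousLinearMap.mul_apply, mul_invOf_self]; rfl
  have IH : ∀ x, (⅟H : K →L[ℂ] K) (H x) = x := fun x => by
    rw [← ContinuousLinearMap.mul_apply, invOf_mul_self]; rfl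
  have vH : ∀ x, v (H x) = H (v x) := fun x => (DFunLike.congr_fun hHv x).symm
  have vI : ∀ x, v ((⅟H : K →L[ℂ] K) x) = (⅟H : K →L[ℂ] K) (v x) := fun x => by
    rw [← IH (v ((⅟H : K →L[ℂ] K) x)), ← vH, HI]
  have hHv' : star v * H = H * star v := by
    have := congrArg star hHv
    simpa [star_mul, hH.star_eq] using this
  have wH : ∀ x, star v (H x) = H (star v x) := fun x => DFunLike.congr_fun hHv' x
  have wI : ∀ x, star v ((⅟H : K →L[ℂ] K) x) = (⅟H : K →L[ℂ] K) (star v x) := fun x => by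
    rw [← IH (star v ((⅟H : K →L[ℂ] K) x)), ← wH, HI]
  have vw : ∀ x, v (star v x) = x := fun x => by
    rw [← ContinuousLinearMap.mul_apply, (Unitary.mem_iff.1 hv).2]; rfl
  have wv : ∀ x, star v (v x) = x := fun x => by
    rw [← ContinuousLinearMap.mul_apply, (Unitary.mem_iff.1 hv).1]; rfl
  have aH : ∀ x y, (inner ℂ (H x) y : ℂ) = inner ℂ x (H y) := fun x y => by
    have := ContinuousLinearMap.adjoint_inner_left H y x
    rwa [← ContinuousLinearMap.star_eq_adjoint, hH.star_eq] at this
  have aI : ∀ x y, (inner ℂ ((⅟H : K →L[ℂ] K) x) y : ℂ) = inner ℂ x ((⅟H : K →L[ℂ] K) y) :=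
    fun x y => by
    conv_lhs => rw [← HI y]
    rw [← aH, HI]
  have aw : ∀ x y, (inner ℂ (star v x) y : ℂ) = inner ℂ x (v y) := fun x y =>
    ContinuousLinearMap.adjoint_inner_left v y x
  have z1 : ∀ n : ℤ, (Real.sqrt q : ℂ) ^ (2 * (n + 1))
      = (Real.sqrt q : ℂ) ^ (2 * n) * (Real.sqrt q : ℂ) ^ 2 := fun n => by
    rw [mul_add, zpow_add₀ hs]; rfl
  have z2 : ∀ n : ℤ, (Real.sqrt q : ℂ) ^ (2 * (n - 1))
      = (Real.sqrt q : ℂ) ^ (2 * n) / (Real.sqrt q : ℂ) ^ 2 := fun n => by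
    rw [mul_sub, zpow_sub₀ hs]; rfl
  have z0 : ∀ n : ℤ, (Real.sqrt q : ℂ) ^ (2 * n) ≠ 0 := fun n => zpow_ne_zero _ hs
  refine ⟨inner_ext _ _ ?_, fun ξ η => ?_, inner_ext _ _ ?_, ?_⟩
  · intro m n x y
    rw [zOp_single, zdOp_single, inner_single, inner_single]
    simp only [sub_eq_iff_eq_add]
  · have := inner_ext (EOp q ε H v) (-FOp q ε H v) ?_ ξ η
    · rw [this, LinearMap.neg_apply, ← neg_one_smul ℂ, Stmt16.inner_smul_right, neg_one_mul]
    intro m n x y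
    rw [LinearMap.neg_apply, EOp_single q ε hq0, FOp_single q ε hq0, ← neg_one_smul ℂ (_ + _),
      sub_eq_add_neg, ← neg_smul, ← neg_smul]
    simp only [Stmt16.inner_smul_right, Stmt16.inner_smul_left, Stmt16.inner_add_left,
      Stmt16.inner_add_right, inner_single, sub_eq_iff_eq_add]
    split_ifs with h
    · subst h
      rw [aH, aw, aI, vH]
      simp only [map_neg, map_mul, map_inv₀, map_sub, map_zpow₀, map_div₀, Complex.conj_ofReal, z1]
      field_simp
      ring
    · simp
  · intro m n x y
    rw [KOp_single q ε hq0, KOp_single q ε hq0, Stmt16.inner_smul_right, Stmt16.inner_smul_left,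
      inner_single, inner_single]
    split_ifs with h
    · subst h
      simp [aH]
    · simp
  refine ⟨?_, ?_, ?_, ?_, ?_, ?_, ?_, ?_, ?_, ?_, ?_, ?_⟩ <;>
  · refine Finsupp.lhom_ext fun n x => ?_
    simp only [Module.End.mul_apply, LinearMap.sub_apply, LinearMap.add_apply,
      LinearMap.smul_apply, Module.End.one_apply, map_add, map_sub, map_neg, map_smul,
      zOp_single, zdOp_single, KOp_single q ε hq0, KinvOp_single q ε hq0, FOp_single q ε hq0,
      EOp_single q ε hq0, HI, IH, vH, vI, wH, wI, vw, wv, z1, z2, hqs, add_sub_cancel_right,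
      sub_add_cancel]
    have := z0 n
    generalize (Real.sqrt q : ℂ) ^ (2 * n) = t at *
    generalize (Real.sqrt q : ℂ) = s at *
    match_scalars <;> field_simp <;> (try simp only [hε2]) <;> ring

end
end

section
/- The maps z, z†, E, F, K̂, K̂⁻¹ form a ∗-representation of the cross product ∗-algebra U_q(su_{1,1})⋉O(U_q) on D: ⟨zξ, η⟩ = ⟨ξ, z†η⟩, ⟨Eξ, η⟩ = −⟨ξ, Fη⟩, ⟨K̂ξ, η⟩ = ⟨ξ, K̂η⟩ for all ξ, η ∈ D, and on D the relations hold: z†z − q²zz† = (1−q²)·id; K̂K̂⁻¹ = K̂⁻¹K̂ = id; K̂E = qEK̂; K̂F = q⁻¹FK̂; EF − FE = λ⁻¹(K̂² − K̂⁻²); zK̂ = q⁻¹K̂z; zE = q⁻¹Ez − q^{1/2}K̂⁻¹z²; zF = q⁻¹Fz + q^{−1/2}K̂⁻¹; z†K̂ = qK̂z†; z†E = qEz† + q^{1/2}K̂⁻¹; z†F = qFz† − q^{−1/2}K̂⁻¹(z†)². -/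
noncomputable section

namespace Stmt17

variable {K : Type*} [NormedAddCommGroup K] [InnerProductSpace ℂ K] [CompleteSpace K]

/-- `α_n(T) = (1 + q^{2n}T²)^{1/2}`, the positive square root given by the continuous
functional calculus. -/
def alpha (q : ℝ) (T : K →L[ℂ] K) (n : ℤ) : K →L[ℂ] K :=
  CFC.sqrt (1 + ((q ^ (2 * n) : ℝ) : ℂ) • (T * T))

/-- `z η_{nk} = α_{n+1}(A₁) η_{n+1,k}`. -/
def zOp (q : ℝ) (A₁ : K →L[ℂ] K) : Module.End ℂ (ℤ × ℤ →₀ K) :=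
  Finsupp.lsum ℂ fun p =>
    (Finsupp.lsingle (p.1 + 1, p.2)).comp (alpha q A₁ (p.1 + 1) : K →ₗ[ℂ] K)

/-- `z† η_{nk} = α_n(A₁) η_{n-1,k}`. -/
def zdOp (q : ℝ) (A₁ : K →L[ℂ] K) : Module.End ℂ (ℤ × ℤ →₀ K) :=
  Finsupp.lsum ℂ fun p =>
    (Finsupp.lsingle (p.1 - 1, p.2)).comp (alpha q A₁ p.1 : K →ₗ[ℂ] K)

/-- `K̂ η_{nk} = q^{n-k} H₁ η_{nk}`. -/
def KOp (q : ℝ) (H₁ : K →L[ℂ] K) : Module.End ℂ (ℤ × ℤ →₀ K) :=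
  Finsupp.lsum ℂ fun p => (Finsupp.lsingle p).comp
    (((q : ℂ) ^ (p.1 - p.2)) • (H₁ : K →ₗ[ℂ] K))

/-- `K̂⁻¹ η_{nk} = q^{-(n-k)} H₁⁻¹ η_{nk}`. -/
def KinvOp (q : ℝ) (H₁ : K →L[ℂ] K) [Invertible H₁] : Module.End ℂ (ℤ × ℤ →₀ K) :=
  Finsupp.lsum ℂ fun p => (Finsupp.lsingle p).comp
    (((q : ℂ) ^ (-(p.1 - p.2))) • ((⅟H₁ : K →L[ℂ] K) : K →ₗ[ℂ] K))

/-- `F η_{nk} = λ⁻¹q^{n-k-1/2} H₁ α_{k+1}(A₂) η_{n,k+1}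
  + λ⁻¹q^{-(n-k)+1/2} H₁⁻¹ α_n(A₁) η_{n-1,k}`, where `λ = q - q⁻¹` and
`q^{n-k-1/2} = (√q)^{2(n-k)-1}`. -/
def FOp (q : ℝ) (A₁ A₂ H₁ : K →L[ℂ] K) [Invertible H₁] : Module.End ℂ (ℤ × ℤ →₀ K) :=
  Finsupp.lsum ℂ fun p =>
    (Finsupp.lsingle (p.1, p.2 + 1)).comp
      ((((q : ℂ) - (q : ℂ)⁻¹)⁻¹ * (Real.sqrt q : ℂ) ^ (2 * (p.1 - p.2) - 1)) •
        ((H₁ * alpha q A₂ (p.2 + 1) : K →L[ℂ] K) : K →ₗ[ℂ] K))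
    + (Finsupp.lsingle (p.1 - 1, p.2)).comp
      ((((q : ℂ) - (q : ℂ)⁻¹)⁻¹ * (Real.sqrt q : ℂ) ^ (1 - 2 * (p.1 - p.2))) •
        ((⅟H₁ * alpha q A₁ p.1 : K →L[ℂ] K) : K →ₗ[ℂ] K))

/-- `E η_{nk} = -λ⁻¹q^{n-k+1/2} H₁ α_k(A₂) η_{n,k-1}
  - λ⁻¹q^{-(n-k)-1/2} H₁⁻¹ α_{n+1}(A₁) η_{n+1,k}`. -/
def EOp (q : ℝ) (A₁ A₂ H₁ : K →L[ℂ] K) [Invertible H₁] : Module.End ℂ (ℤ × ℤ →₀ K) :=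
  Finsupp.lsum ℂ fun p =>
    -((Finsupp.lsingle (p.1, p.2 - 1)).comp
      ((((q : ℂ) - (q : ℂ)⁻¹)⁻¹ * (Real.sqrt q : ℂ) ^ (2 * (p.1 - p.2) + 1)) •
        ((H₁ * alpha q A₂ p.2 : K →L[ℂ] K) : K →ₗ[ℂ] K)))
    - (Finsupp.lsingle (p.1 + 1, p.2)).comp
      ((((q : ℂ) - (q : ℂ)⁻¹)⁻¹ * (Real.sqrt q : ℂ) ^ (-(2 * (p.1 - p.2)) - 1)) •
        ((⅟H₁ * alpha q A₁ (p.1 + 1) : K →L[ℂ] K) : K →ₗ[ℂ] K))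

end Stmt17


set_option linter.unusedSimpArgs false
set_option linter.unusedSectionVars false

namespace Stmt17Aux

open Stmt17

variable {K : Type*} [NormedAddCommGroup K] [InnerProductSpace ℂ K] [CompleteSpace K]

lemma alpha_arg_nonneg (q : ℝ) (hq : 0 < q) (T : K →L[ℂ] K) (hT : IsSelfAdjoint T) (n : ℤ) :
    0 ≤ 1 + ((q ^ (2 * n) : ℝ) : ℂ) • (T * T) := by
  have h1 : (0 : K →L[ℂ] K) ≤ T * T := hT.mul_self_nonneg
  have h2 : (0 : ℝ) ≤ q ^ (2 * n) := (zpow_pos hq _).le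
  have h3 : (0 : K →L[ℂ] K) ≤ ((q ^ (2 * n) : ℝ) : ℂ) • (T * T) := by
    have := smul_nonneg h2 h1
    rwa [Complex.coe_smul]
  exact add_nonneg zero_le_one h3

lemma alpha_sq (q : ℝ) (hq : 0 < q) (T : K →L[ℂ] K) (hT : IsSelfAdjoint T) (n : ℤ) (x : K) :
    alpha q T n (alpha q T n x) = x + ((q : ℂ) ^ (2 * n)) • (T (T x)) := by
  have := congrArg (fun f : K →L[ℂ] K => f x)
    (CFC.sqrt_mul_sqrt_self _ (alpha_arg_nonneg q hq T hT n))
  simpa [alpha] using this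

lemma alpha_comm (q : ℝ) (T S : K →L[ℂ] K) (h : T * S = S * T) (n : ℤ) :
    Commute (alpha q T n) S := by
  unfold alpha CFC.sqrt
  apply Commute.cfcₙ_nnreal
  have h' : Commute T S := h
  exact (Commute.one_left _).add_left ((h'.mul_left h').smul_left _)

lemma alpha_symm (q : ℝ) (T : K →L[ℂ] K) (n : ℤ) (x y : K) :
    inner ℂ (alpha q T n x) y = inner ℂ x (alpha q T n y) := by
  have : IsSelfAdjoint (alpha q T n) := (CFC.sqrt_nonneg _).isSelfAdjoint
  exact (ContinuousLinearMap.isSelfAdjoint_iff_isSymmetric.mp this) x y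

lemma inner_add_left' {ι : Type*} (a b c : ι →₀ K) :
    finsuppInner (a + b) c = finsuppInner a c + finsuppInner b c := by
  unfold finsuppInner
  rw [Finsupp.sum_add_index'] <;> simp [inner_add_left]

lemma inner_add_right' {ι : Type*} (a b c : ι →₀ K) :
    finsuppInner a (b + c) = finsuppInner a b + finsuppInner a c := by
  unfold finsuppInner
  simp [inner_add_right, Finsupp.sum_add]

lemma inner_zero_left' {ι : Type*} (c : ι →₀ K) : finsuppInner 0 c = 0 := by
  simp [finsuppInner]

lemma inner_zero_right' {ι : Type*} (c : ι →₀ K) : finsuppInner c 0 = 0 := by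
  simp [finsuppInner]

open Classical in
lemma inner_single' {ι : Type*} (i j : ι) (x y : K) :
    finsuppInner (Finsupp.single i x) (Finsupp.single j y)
      = if j = i then inner ℂ x y else 0 := by
  unfold finsuppInner
  rw [Finsupp.sum_single_index (by simp), Finsupp.single_apply]
  split_ifs <;> simp

/-- adjointness can be checked on elementary vectors -/
lemma adj_ext {ι : Type*} (S T : Module.End ℂ (ι →₀ K))
    (h : ∀ i j x y, finsuppInner (S (Finsupp.single i x)) (Finsupp.single j y)
      = finsuppInner (Finsupp.single i x) (T (Finsupp.single j y))) (ξ η : ι →₀ K) :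
    finsuppInner (S ξ) η = finsuppInner ξ (T η) := by
  induction ξ using Finsupp.induction_linear with
  | zero => simp [inner_zero_left']
  | add f g hf hg => rw [map_add, inner_add_left', inner_add_left', hf, hg]
  | single i x =>
    induction η using Finsupp.induction_linear with
    | zero => simp [inner_zero_right']
    | add f g hf hg => rw [map_add, inner_add_right', inner_add_right', hf, hg]
    | single j y => exact h i j x y

lemma z_single (q : ℝ) (A : K →L[ℂ] K) (n k : ℤ) (x : K) :
    zOp q A (Finsupp.single (n, k) x) = Finsupp.single (n + 1, k) (alpha q A (n + 1) x) := by
  simp [zOp]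

lemma zd_single (q : ℝ) (A : K →L[ℂ] K) (n k : ℤ) (x : K) :
    zdOp q A (Finsupp.single (n, k) x) = Finsupp.single (n - 1, k) (alpha q A n x) := by
  simp [zdOp]

lemma K_single (q : ℝ) (H : K →L[ℂ] K) (n k : ℤ) (x : K) :
    KOp q H (Finsupp.single (n, k) x) = (q : ℂ) ^ (n - k) • Finsupp.single (n, k) (H x) := by
  simp [KOp]

lemma Kinv_single (q : ℝ) (H : K →L[ℂ] K) [Invertible H] (n k : ℤ) (x : K) :
    KinvOp q H (Finsupp.single (n, k) x)
      = (q : ℂ) ^ (-(n - k)) • Finsupp.single (n, k) ((⅟H : K →L[ℂ] K) x) := by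
  simp [KinvOp]

lemma F_single (q : ℝ) (A₁ A₂ H : K →L[ℂ] K) [Invertible H] (n k : ℤ) (x : K) :
    FOp q A₁ A₂ H (Finsupp.single (n, k) x)
      = (((q : ℂ) - (q : ℂ)⁻¹)⁻¹ * (Real.sqrt q : ℂ) ^ (2 * (n - k) - 1)) •
          Finsupp.single (n, k + 1) (H (alpha q A₂ (k + 1) x))
        + (((q : ℂ) - (q : ℂ)⁻¹)⁻¹ * (Real.sqrt q : ℂ) ^ (1 - 2 * (n - k))) •
          Finsupp.single (n - 1, k) ((⅟H : K →L[ℂ] K) (alpha q A₁ n x)) := by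
  simp [FOp]

lemma E_single (q : ℝ) (A₁ A₂ H : K →L[ℂ] K) [Invertible H] (n k : ℤ) (x : K) :
    EOp q A₁ A₂ H (Finsupp.single (n, k) x)
      = -((((q : ℂ) - (q : ℂ)⁻¹)⁻¹ * (Real.sqrt q : ℂ) ^ (2 * (n - k) + 1)) •
          Finsupp.single (n, k - 1) (H (alpha q A₂ k x)))
        - (((q : ℂ) - (q : ℂ)⁻¹)⁻¹ * (Real.sqrt q : ℂ) ^ (-(2 * (n - k)) - 1)) •
          Finsupp.single (n + 1, k) ((⅟H : K →L[ℂ] K) (alpha q A₁ (n + 1) x)) := by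
  simp [EOp]

end Stmt17Aux

open Stmt17 in
/-- With `0 < q < 1`, `λ = q - q⁻¹`, and `A₁, A₂, H₁` pairwise commuting
bounded self-adjoint operators on a Hilbert space `K` with `H₁` invertible, the operators
`z, z†, E, F, K̂, K̂⁻¹` defined above on the space of finitely supported functions
`ℤ² →₀ K` form a ∗-representation of the cross product ∗-algebra
`U_q(su_{1,1}) ⋉ O(U_q)`. -/
theorem stmt_17 {K : Type*} [NormedAddCommGroup K] [InnerProductSpace ℂ K]
    [CompleteSpace K]
    (q : ℝ) (hq0 : 0 < q) (hq1 : q < 1)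
    (A₁ A₂ H₁ : K →L[ℂ] K) [Invertible H₁]
    (hA₁ : IsSelfAdjoint A₁) (hA₂ : IsSelfAdjoint A₂) (hH₁ : IsSelfAdjoint H₁)
    (h12 : A₁ * A₂ = A₂ * A₁) (h1H : A₁ * H₁ = H₁ * A₁) (h2H : A₂ * H₁ = H₁ * A₂) :
    (∀ ξ η : ℤ × ℤ →₀ K,
      finsuppInner (zOp q A₁ ξ) η = finsuppInner ξ (zdOp q A₁ η)) ∧
    (∀ ξ η : ℤ × ℤ →₀ K,
      finsuppInner (EOp q A₁ A₂ H₁ ξ) η = -finsuppInner ξ (FOp q A₁ A₂ H₁ η)) ∧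
    (∀ ξ η : ℤ × ℤ →₀ K,
      finsuppInner (KOp q H₁ ξ) η = finsuppInner ξ (KOp q H₁ η)) ∧
    zdOp q A₁ * zOp q A₁ - (q : ℂ) ^ 2 • (zOp q A₁ * zdOp q A₁)
      = (1 - (q : ℂ) ^ 2) • 1 ∧
    KOp q H₁ * KinvOp q H₁ = 1 ∧ KinvOp q H₁ * KOp q H₁ = 1 ∧
    KOp q H₁ * EOp q A₁ A₂ H₁ = (q : ℂ) • (EOp q A₁ A₂ H₁ * KOp q H₁) ∧
    KOp q H₁ * FOp q A₁ A₂ H₁ = (q : ℂ)⁻¹ • (FOp q A₁ A₂ H₁ * KOp q H₁) ∧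
    EOp q A₁ A₂ H₁ * FOp q A₁ A₂ H₁ - FOp q A₁ A₂ H₁ * EOp q A₁ A₂ H₁
      = ((q : ℂ) - (q : ℂ)⁻¹)⁻¹ •
        (KOp q H₁ * KOp q H₁ - KinvOp q H₁ * KinvOp q H₁) ∧
    zOp q A₁ * KOp q H₁ = (q : ℂ)⁻¹ • (KOp q H₁ * zOp q A₁) ∧
    zOp q A₁ * EOp q A₁ A₂ H₁
      = (q : ℂ)⁻¹ • (EOp q A₁ A₂ H₁ * zOp q A₁)
        - (Real.sqrt q : ℂ) • (KinvOp q H₁ * (zOp q A₁ * zOp q A₁)) ∧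
    zOp q A₁ * FOp q A₁ A₂ H₁
      = (q : ℂ)⁻¹ • (FOp q A₁ A₂ H₁ * zOp q A₁)
        + (Real.sqrt q : ℂ)⁻¹ • KinvOp q H₁ ∧
    zdOp q A₁ * KOp q H₁ = (q : ℂ) • (KOp q H₁ * zdOp q A₁) ∧
    zdOp q A₁ * EOp q A₁ A₂ H₁
      = (q : ℂ) • (EOp q A₁ A₂ H₁ * zdOp q A₁) + (Real.sqrt q : ℂ) • KinvOp q H₁ ∧
    zdOp q A₁ * FOp q A₁ A₂ H₁
      = (q : ℂ) • (FOp q A₁ A₂ H₁ * zdOp q A₁)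
        - (Real.sqrt q : ℂ)⁻¹ • (KinvOp q H₁ * (zdOp q A₁ * zdOp q A₁)) := by
  have c1H : ∀ n x, alpha q A₁ n (H₁ x) = H₁ (alpha q A₁ n x) := fun n x =>
    congrArg (fun f : K →L[ℂ] K => f x) (Stmt17Aux.alpha_comm q A₁ H₁ h1H n)
  have c2H : ∀ n x, alpha q A₂ n (H₁ x) = H₁ (alpha q A₂ n x) := fun n x =>
    congrArg (fun f : K →L[ℂ] K => f x) (Stmt17Aux.alpha_comm q A₂ H₁ h2H n)
  have c1I : ∀ n x, alpha q A₁ n ((⅟H₁ : K →L[ℂ] K) x) = (⅟H₁ : K →L[ℂ] K) (alpha q A₁ n x) :=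
    fun n x => congrArg (fun f : K →L[ℂ] K => f x) (Stmt17Aux.alpha_comm q A₁ H₁ h1H n).invOf_right
  have c2I : ∀ n x, alpha q A₂ n ((⅟H₁ : K →L[ℂ] K) x) = (⅟H₁ : K →L[ℂ] K) (alpha q A₂ n x) :=
    fun n x => congrArg (fun f : K →L[ℂ] K => f x) (Stmt17Aux.alpha_comm q A₂ H₁ h2H n).invOf_right
  have c12 : ∀ n m x, alpha q A₂ n (alpha q A₁ m x) = alpha q A₁ m (alpha q A₂ n x) :=
    fun n m x => congrArg (fun f : K →L[ℂ] K => f x)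
      (Stmt17Aux.alpha_comm q A₂ _ (Stmt17Aux.alpha_comm q A₁ A₂ h12 m).symm n)
  have HI : ∀ x, H₁ ((⅟H₁ : K →L[ℂ] K) x) = x := fun x =>
    congrArg (fun f : K →L[ℂ] K => f x) (mul_invOf_self H₁)
  have IH : ∀ x, (⅟H₁ : K →L[ℂ] K) (H₁ x) = x := fun x =>
    congrArg (fun f : K →L[ℂ] K => f x) (invOf_mul_self H₁)
  have sH : ∀ x y, inner ℂ (H₁ x) y = inner ℂ x (H₁ y) :=
    ContinuousLinearMap.isSelfAdjoint_iff_isSymmetric.mp hH₁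
  have sI : ∀ x y, inner ℂ ((⅟H₁ : K →L[ℂ] K) x) y = inner ℂ x ((⅟H₁ : K →L[ℂ] K) y) := by
    intro x y
    conv_lhs => rw [← HI y]
    rw [← sH, HI]
  have q1 := Stmt17Aux.alpha_sq q hq0 A₁ hA₁
  have q2 := Stmt17Aux.alpha_sq q hq0 A₂ hA₂
  obtain ⟨s, hs⟩ : ∃ s : ℝ, s = Real.sqrt q := ⟨_, rfl⟩
  have hs0 : 0 < s := hs ▸ Real.sqrt_pos.mpr hq0
  have hqs : q = s ^ 2 := by rw [hs, Real.sq_sqrt hq0.le]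
  have hsC : (s : ℂ) ≠ 0 := by exact_mod_cast hs0.ne'
  have hqC : (q : ℂ) = (s : ℂ) ^ 2 := by rw [hqs]; push_cast; rfl
  have hl : (s : ℂ) ^ 4 - 1 ≠ 0 := by
    have : s ^ 4 < 1 := by
      have : s ^ 4 = q ^ 2 := by rw [hqs]; ring
      rw [this]; nlinarith
    have h2 : s ^ 4 - 1 ≠ 0 := by linarith
    exact_mod_cast h2
  have hL : ((s : ℂ) ^ 2 - ((s : ℂ) ^ 2)⁻¹)⁻¹ = (s : ℂ) ^ 2 / ((s : ℂ) ^ 4 - 1) := by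
    rw [inv_eq_iff_eq_inv, inv_div]
    field_simp
  have fin : ∀ S T : Module.End ℂ (ℤ × ℤ →₀ K),
      (∀ n k x, S (Finsupp.single (n, k) x) = T (Finsupp.single (n, k) x)) → S = T := by
    intro S T h
    exact Finsupp.lhom_ext fun p x => h p.1 p.2 x
  have zz : ∀ m : ℤ, ((s : ℂ) ^ 2) ^ m = ((s : ℂ) ^ m) ^ 2 := fun m => by
    rw [← zpow_natCast, ← zpow_mul, ← zpow_natCast, ← zpow_mul, mul_comm]
  have zt : ∀ m : ℤ, (s : ℂ) ^ (2 * m) = ((s : ℂ) ^ m) ^ 2 := fun m => by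
    rw [← zpow_natCast, ← zpow_mul, mul_comm]; rfl
  have za : ∀ m n : ℤ, (s : ℂ) ^ (m + n) = (s : ℂ) ^ m * (s : ℂ) ^ n := zpow_add₀ hsC
  have zs : ∀ m n : ℤ, (s : ℂ) ^ (m - n) = (s : ℂ) ^ m / (s : ℂ) ^ n := zpow_sub₀ hsC
  have zn : ∀ m : ℤ, (s : ℂ) ^ (-m) = ((s : ℂ) ^ m)⁻¹ := zpow_neg _
  have z0 : ∀ m : ℤ, (s : ℂ) ^ m ≠ 0 := fun m => zpow_ne_zero m hsC
  refine ⟨?_, ?_, ?_, ?_, ?_, ?_, ?_, ?_, ?_, ?_, ?_, ?_, ?_, ?_, ?_⟩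
  · apply Stmt17Aux.adj_ext
    rintro ⟨n, k⟩ ⟨m, l⟩ x y
    simp only [Stmt17Aux.z_single, Stmt17Aux.zd_single, Stmt17Aux.inner_single', Prod.mk.injEq]
    split_ifs with h1 h2 h2
    · rw [h1.1, Stmt17Aux.alpha_symm]
    · omega
    · omega
    · rfl
  · intro ξ η
    have : -finsuppInner ξ (FOp q A₁ A₂ H₁ η) = finsuppInner ξ ((-FOp q A₁ A₂ H₁) η) := by
      have h := Stmt17Aux.inner_add_right' ξ (FOp q A₁ A₂ H₁ η) (-FOp q A₁ A₂ H₁ η)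
      rw [add_neg_cancel, Stmt17Aux.inner_zero_right'] at h
      rw [LinearMap.neg_apply]
      linear_combination h
    rw [this]
    apply Stmt17Aux.adj_ext
    rintro ⟨n, k⟩ ⟨m, l⟩ x y
    simp only [Stmt17Aux.E_single, Stmt17Aux.F_single, LinearMap.neg_apply, sub_eq_add_neg, neg_add,
      Finsupp.smul_single, ← Finsupp.single_neg,
      Stmt17Aux.inner_add_left', Stmt17Aux.inner_add_right', Stmt17Aux.inner_single', Prod.mk.injEq]
    simp only [← sub_eq_add_neg, inner_neg_left, inner_neg_right, inner_smul_left,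
      inner_smul_right, sH, sI, Stmt17Aux.alpha_symm, c1H, c2H, c1I, c2I]
    have hc : ∀ m : ℤ, (starRingEnd ℂ) (((q : ℂ) - (q : ℂ)⁻¹)⁻¹ * (Real.sqrt q : ℂ) ^ m)
        = ((q : ℂ) - (q : ℂ)⁻¹)⁻¹ * (Real.sqrt q : ℂ) ^ m := by
      intro m
      simp
    simp only [hc]
    congr 1
    · split_ifs with h1 h2 h2
      · obtain ⟨rfl, rfl⟩ := h1
        ring_nf
      · omega
      · omega
      · rfl
    · split_ifs with h1 h2 h2
      · obtain ⟨rfl, rfl⟩ := h1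
        ring_nf
      · omega
      · omega
      · rfl
  · apply Stmt17Aux.adj_ext
    rintro ⟨n, k⟩ ⟨m, l⟩ x y
    simp only [Stmt17Aux.K_single, Finsupp.smul_single, Stmt17Aux.inner_single', Prod.mk.injEq]
    split_ifs with h1
    · rw [h1.1, h1.2, inner_smul_left, inner_smul_right, sH]
      simp
    · rfl
  all_goals
    apply fin
    intro n k x
    simp only [LinearMap.sub_apply, LinearMap.add_apply, LinearMap.smul_apply, Module.End.mul_apply,
      Module.End.one_apply, Stmt17Aux.z_single, Stmt17Aux.zd_single, Stmt17Aux.K_single, Stmt17Aux.Kinv_single, Stmt17Aux.F_single, Stmt17Aux.E_single,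
      map_add, map_sub, map_neg, map_smul, c1H, c2H, c1I, c2I, c12, HI, IH,
      add_sub_cancel_right, sub_add_cancel, q1, q2, ← hs, hqC, Finsupp.single_add,
      ← Finsupp.smul_single, zz, zt, za, zs, zn, zpow_one, zpow_zero, zpow_ofNat, hL]
    match_scalars <;> field_simp <;> ring

end
end

section
/- The map W which sends the element ζ ∈ H₀ placed in the (m,k,l)-th summand of H to the function (u,v,r) ↦ qᵐ·uᵏ·vˡ·ζ̃(qᵐr) on 𝕋²×ℝ⁺ (where ζ̃ denotes the extension of ζ by zero from (q,1] to ℝ⁺) is well defined and extends to a unitary operator W: H → L²(𝕋²×ℝ⁺, (Haar)⊗(r·dμ(r))). -/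
open MeasureTheory

noncomputable section

/-- The measure `μ` on `ℝ⁺` determined by `μ(qᵏM) = qᵏμ₀(M)` for `k ∈ ℤ` and Borel
`M ⊆ (q,1]`; equivalently `μ = Σ_{k∈ℤ} qᵏ·((r ↦ qᵏr)_*μ₀)`. -/
def muExt (q : ℝ) (μ₀ : Measure ℝ) : Measure ℝ :=
  Measure.sum fun k : ℤ => ENNReal.ofReal (q ^ k) • (μ₀.map fun r => q ^ k * r)

/-- `H₀ = L²((q,1], r·dμ₀(r))`, realized as `L²(ℝ, r·dμ₀)` for a measure `μ₀`
supported on `(q,1]`. -/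
abbrev HZero (μ₀ : Measure ℝ) := Lp ℂ 2 (μ₀.withDensity fun r => ENNReal.ofReal r)

/-- `H = ⊕_{(m,k,l)∈ℤ³} H₀`, the Hilbert-space direct sum. -/
abbrev bigH (μ₀ : Measure ℝ) := lp (fun _ : ℤ × ℤ × ℤ => HZero μ₀) 2

/-- The measure `(Haar) ⊗ (r·dμ(r))` on `𝕋² × ℝ⁺`, with `𝕋²` realized as
`AddCircle 1 × AddCircle 1` carrying the normalized Haar measure. -/
def nuMeas (q : ℝ) (μ₀ : Measure ℝ) :
    Measure ((AddCircle (1 : ℝ) × AddCircle (1 : ℝ)) × ℝ) :=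
  (volume : Measure (AddCircle (1 : ℝ) × AddCircle (1 : ℝ))).prod
    ((muExt q μ₀).withDensity fun r => ENNReal.ofReal r)

/-- `L²(𝕋² × ℝ⁺, (Haar) ⊗ (r·dμ(r)))`. -/
abbrev targetL2 (q : ℝ) (μ₀ : Measure ℝ) := Lp ℂ 2 (nuMeas q μ₀)

open Filter Topology in
lemma aux_cont (τ : Measure ((AddCircle (1 : ℝ) × AddCircle (1 : ℝ)) × ℝ))
    (φ : (AddCircle (1 : ℝ) × AddCircle (1 : ℝ)) × ℝ → ℂ) (hφ : Integrable φ τ)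
    (h : ∀ k l : ℤ, ∫ p, fourier k p.1.1 * fourier l p.1.2 * φ p ∂τ = 0)
    (f : C(UnitAddTorus (Fin 2), ℂ)) : ∫ p, f ![p.1.1, p.1.2] * φ p ∂τ = 0 := by
  have hc : Continuous (fun p : (AddCircle (1 : ℝ) × AddCircle (1 : ℝ)) × ℝ =>
      (![p.1.1, p.1.2] : UnitAddTorus (Fin 2))) := by
    refine continuous_pi fun i => ?_
    fin_cases i <;> simp <;> fun_prop
  have hint : ∀ f : C(UnitAddTorus (Fin 2), ℂ),
      Integrable (fun p => f ![p.1.1, p.1.2] * φ p) τ := fun f =>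
    hφ.bdd_mul (c := ‖f‖) (f.continuous.comp hc).aestronglyMeasurable
      (Eventually.of_forall fun p => f.norm_coe_le_norm _)
  let L : C(UnitAddTorus (Fin 2), ℂ) →ₗ[ℂ] ℂ :=
    { toFun := fun f => ∫ p, f ![p.1.1, p.1.2] * φ p ∂τ
      map_add' := fun f g => by
        rw [← integral_add (hint f) (hint g)]
        simp [add_mul]
      map_smul' := fun c f => by
        simp only [ContinuousMap.smul_apply, smul_eq_mul, mul_assoc, RingHom.id_apply]
        rw [integral_const_mul] }
  let L' := L.mkContinuous (∫ p, ‖φ p‖ ∂τ) (fun f => by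
    refine (norm_integral_le_integral_norm _).trans ?_
    rw [mul_comm, ← integral_const_mul]
    refine integral_mono (hint f).norm (hφ.norm.const_mul _) fun p => ?_
    simp only [norm_mul]
    gcongr
    exact f.norm_coe_le_norm _)
  have hle : (Submodule.span ℂ (Set.range (UnitAddTorus.mFourier (d := Fin 2)))).topologicalClosure
      ≤ L'.ker := by
    refine Submodule.topologicalClosure_minimal _ ?_ L'.isClosed_ker
    rw [Submodule.span_le]
    rintro _ ⟨n, rfl⟩
    change ∫ p, _ * φ p ∂τ = 0
    simpa [UnitAddTorus.mFourier, Fin.prod_univ_two] using h (n 0) (n 1)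
  rw [UnitAddTorus.span_mFourier_closure_eq_top] at hle
  exact hle (Submodule.mem_top (x := f))

open Filter Topology in
lemma aux_zero (τ : Measure ((AddCircle (1 : ℝ) × AddCircle (1 : ℝ)) × ℝ))
    (φ : (AddCircle (1 : ℝ) × AddCircle (1 : ℝ)) × ℝ → ℂ) (hφ : Integrable φ τ)
    (h : ∀ (k l : ℤ) (D : Set ℝ), MeasurableSet D →
      ∫ p in Prod.snd ⁻¹' D, fourier k p.1.1 * fourier l p.1.2 * φ p ∂τ = 0) :
    φ =ᵐ[τ] 0 := by
  have key : ∀ (C : Set (AddCircle (1 : ℝ) × AddCircle (1 : ℝ))) (D : Set ℝ), IsClosed C →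
      MeasurableSet D → ∫ p in C ×ˢ D, φ p ∂τ = 0 := by
    intro C D hC hD
    have h0 : ∀ n, ∫ p in Prod.snd ⁻¹' D, ((hC.apprSeq n p.1 : ℝ) : ℂ) * φ p ∂τ = 0 := by
      intro n
      have hcc : Continuous (fun x : UnitAddTorus (Fin 2) => ((hC.apprSeq n (x 0, x 1) : ℝ) : ℂ)) := by
        fun_prop
      simpa using aux_cont (τ.restrict (Prod.snd ⁻¹' D)) φ hφ.integrableOn
        (fun k l => h k l D hD) ⟨_, hcc⟩
    have hlim : Tendsto (fun n => ∫ p in Prod.snd ⁻¹' D, ((hC.apprSeq n p.1 : ℝ) : ℂ) * φ p ∂τ) atTop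
        (𝓝 (∫ p in Prod.snd ⁻¹' D, (Prod.fst ⁻¹' C).indicator φ p ∂τ)) := by
      refine tendsto_integral_of_dominated_convergence (fun p => ‖φ p‖) ?_ hφ.norm.integrableOn ?_ ?_
      · intro n
        refine AEStronglyMeasurable.mul ?_ hφ.aestronglyMeasurable.restrict
        refine Continuous.aestronglyMeasurable ?_
        fun_prop
      · intro n
        refine Eventually.of_forall fun p => ?_
        have := HasOuterApproxClosed.apprSeq_apply_le_one hC n p.1
        have h1 : ((hC.apprSeq n p.1 : ℝ)) ≤ 1 := by exact_mod_cast this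
        simp only [norm_mul, Complex.norm_real, NNReal.norm_eq]
        exact mul_le_of_le_one_left (norm_nonneg _) h1
      · refine Eventually.of_forall fun p => ?_
        have := tendsto_pi_nhds.1 (HasOuterApproxClosed.tendsto_apprSeq hC) p.1
        have h2 : Tendsto (fun n => ((hC.apprSeq n p.1 : ℝ) : ℂ) * φ p) atTop
            (𝓝 ((((C.indicator (fun _ => (1 : NNReal)) p.1 : NNReal) : ℝ) : ℂ) * φ p)) := by
          refine Tendsto.mul_const _ ?_
          exact (Complex.continuous_ofReal.tendsto _).comp ((NNReal.continuous_coe.tendsto _).comp this)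
        convert h2 using 2
        by_cases hp : p.1 ∈ C <;> simp [hp]
    simp only [h0] at hlim
    have := tendsto_nhds_unique hlim tendsto_const_nhds
    rw [setIntegral_indicator (measurable_fst hC.measurableSet)] at this
    rw [← this]
    congr 2
    ext p
    simp [and_comm]
  refine hφ.ae_eq_zero_of_forall_setIntegral_eq_zero fun s hs _ => ?_
  refine MeasurableSpace.induction_on_inter
    (C := fun s _ => ∫ p in s, φ p ∂τ = 0)
    (s := Set.image2 (· ×ˢ ·) {C : Set (AddCircle (1 : ℝ) × AddCircle (1 : ℝ)) | IsClosed C}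
      {D : Set ℝ | MeasurableSet D}) ?_ ?_ ?_ ?_ ?_ ?_ s hs
  · refine (generateFrom_eq_prod ?_ MeasurableSpace.generateFrom_measurableSet ?_
      isCountablySpanning_measurableSet).symm
    · rw [← borel_eq_generateFrom_isClosed]
      exact (BorelSpace.measurable_eq).symm
    · exact ⟨fun _ => Set.univ, fun _ => isClosed_univ, Set.iUnion_const _⟩
  · exact isPiSystem_isClosed.prod MeasurableSpace.isPiSystem_measurableSet
  · simp
  · rintro _ ⟨C, hC, D, hD, rfl⟩
    exact key C D hC hD
  · intro t ht h0
    have h1 := integral_add_compl ht hφ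
    have h2 := key Set.univ Set.univ isClosed_univ MeasurableSet.univ
    rw [Set.univ_prod_univ, setIntegral_univ] at h2
    rw [h2, h0, zero_add] at h1
    exact h1
  · intro f hd hf h0
    rw [integral_iUnion hf hd hφ.integrableOn]
    simp [h0]

lemma mem_shift {q : ℝ} (hq0 : 0 < q) (hq1 : q < 1) {r : ℝ} {m n : ℤ}
    (h1 : q ^ m * r ∈ Set.Ioc q 1) (h2 : q ^ n * r ∈ Set.Ioc q 1) : m = n := by
  have aux : ∀ {m n : ℤ}, q ^ m * r ∈ Set.Ioc q 1 → q ^ n * r ∈ Set.Ioc q 1 → ¬ m < n := by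
    intro m n h1 h2 hlt
    have hpos : 0 < q ^ m * r := hq0.trans h1.1
    have hle : q ^ (n - m) ≤ q := by
      have := zpow_le_zpow_right_of_le_one₀ hq0 hq1.le (show (1 : ℤ) ≤ n - m by omega)
      simpa using this
    have : q ^ n * r = q ^ (n - m) * (q ^ m * r) := by
      rw [← mul_assoc, ← zpow_add₀ hq0.ne']; simp
    have h3 : q ^ n * r ≤ q * 1 := by
      rw [this]
      exact mul_le_mul hle h1.2 hpos.le hq0.le
    linarith [h2.1]
  rcases lt_trichotomy m n with h | h | h
  · exact absurd h (aux h1 h2)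
  · exact h
  · exact absurd h (aux h2 h1)

lemma exists_shift {q : ℝ} (hq0 : 0 < q) (hq1 : q < 1) {r : ℝ} (hr : 0 < r) :
    ∃ m : ℤ, q ^ m * r ∈ Set.Ioc q 1 := by
  obtain ⟨n, hn1, hn2⟩ := exists_mem_Ioc_zpow hr ((one_lt_inv₀ hq0).2 hq1)
  refine ⟨n + 1, ?_, ?_⟩
  · have : q = q ^ (n + 1) * (q⁻¹) ^ n := by
      rw [inv_zpow, zpow_add₀ hq0.ne']; field_simp
    conv_lhs => rw [this]
    have : 0 < q ^ (n + 1) := by positivity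
    gcongr
  · have h0 : 1 = q ^ (n + 1) * (q⁻¹) ^ (n + 1) := by
      rw [inv_zpow]; field_simp
    rw [h0]
    have : 0 < q ^ (n + 1) := by positivity
    gcongr

/-- shifted fundamental interval -/
def shI (q : ℝ) (m : ℤ) : Set ℝ := (fun r => q ^ m * r) ⁻¹' Set.Ioc q 1

lemma measurableSet_shI (q : ℝ) (m : ℤ) : MeasurableSet (shI q m) :=
  (measurable_const_mul _) measurableSet_Ioc

lemma map_shift {q : ℝ} (hq0 : 0 < q) (hq1 : q < 1) (μ₀ : Measure ℝ)
    (hsupp : μ₀ (Set.Ioc q 1)ᶜ = 0) (m : ℤ) :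
    (((muExt q μ₀).withDensity fun r => ENNReal.ofReal r).restrict (shI q m)).map
      (fun r => q ^ m * r) =
    (ENNReal.ofReal (q ^ (-m)) ^ 2) • (μ₀.withDensity fun r => ENNReal.ofReal r) := by
  have hae : ∀ᵐ s ∂μ₀, s ∈ Set.Ioc q 1 := hsupp
  have hm : Measurable (fun r : ℝ => q ^ m * r) := measurable_const_mul _
  ext A hA
  have hA' : MeasurableSet ((fun r : ℝ => q ^ m * r) ⁻¹' A ∩ shI q m) :=
    (hm hA).inter (measurableSet_shI q m)
  rw [Measure.map_apply hm hA, Measure.restrict_apply (hm hA), withDensity_apply _ hA',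
    Measure.smul_apply, withDensity_apply _ hA, ← lintegral_indicator hA', muExt,
    lintegral_sum_measure, ← lintegral_indicator hA]
  have hF : Measurable (((fun r : ℝ => q ^ m * r) ⁻¹' A ∩ shI q m).indicator
      fun r => ENNReal.ofReal r) := (ENNReal.measurable_ofReal).indicator hA'
  rw [tsum_eq_single (-m)]
  · rw [lintegral_smul_measure, lintegral_map hF (measurable_const_mul _), smul_eq_mul, smul_eq_mul,
      pow_two, mul_assoc]
    congr 1
    rw [← lintegral_const_mul _ ((ENNReal.measurable_ofReal).indicator hA)]
    refine lintegral_congr_ae ?_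
    filter_upwards [hae] with s hs
    have h1 : q ^ m * (q ^ (-m) * s) = s := by
      rw [← mul_assoc, ← zpow_add₀ hq0.ne']; simp
    by_cases hsA : s ∈ A
    · rw [Set.indicator_of_mem, Set.indicator_of_mem hsA, ENNReal.ofReal_mul (by positivity)]
      simp only [shI, Set.mem_inter_iff, Set.mem_preimage, h1]
      exact ⟨hsA, hs⟩
    · rw [Set.indicator_of_notMem, Set.indicator_of_notMem hsA, mul_zero]
      simp only [shI, Set.mem_inter_iff, Set.mem_preimage, h1]
      exact fun h => hsA h.1
  · intro k hk
    rw [lintegral_smul_measure, lintegral_map hF (measurable_const_mul _)]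
    refine smul_eq_zero_of_right _ (lintegral_eq_zero_of_ae_eq_zero ?_)
    filter_upwards [hae] with s hs
    simp only [Pi.zero_apply]
    rw [Set.indicator_of_notMem]
    rintro ⟨-, h⟩
    simp only [shI, Set.mem_preimage, ← mul_assoc, ← zpow_add₀ hq0.ne'] at h
    have := mem_shift hq0 hq1 (m := m + k) (n := 0) h (by simpa using hs)
    omega

instance (q : ℝ) (μ₀ : Measure ℝ) [IsFiniteMeasure μ₀] : SFinite (muExt q μ₀) := by
  unfold muExt; infer_instance

lemma sigma_finite' {q : ℝ} (μ₀ : Measure ℝ) [IsFiniteMeasure μ₀]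
    (hsupp : μ₀ (Set.Ioc q 1)ᶜ = 0) :
    IsFiniteMeasure (μ₀.withDensity fun r => ENNReal.ofReal r) := by
  have hae : ∀ᵐ s ∂μ₀, s ∈ Set.Ioc q 1 := hsupp
  refine isFiniteMeasure_withDensity (ne_of_lt ?_)
  calc ∫⁻ r, ENNReal.ofReal r ∂μ₀ ≤ ∫⁻ r, 1 ∂μ₀ := by
        refine lintegral_mono_ae ?_
        filter_upwards [hae] with s hs
        simpa using hs.2
    _ < ⊤ := by simp

lemma finite_shift {q : ℝ} (hq0 : 0 < q) (hq1 : q < 1) (μ₀ : Measure ℝ) [IsFiniteMeasure μ₀]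
    (hsupp : μ₀ (Set.Ioc q 1)ᶜ = 0) (m : ℤ) :
    IsFiniteMeasure (((muExt q μ₀).withDensity fun r => ENNReal.ofReal r).restrict (shI q m)) := by
  have := sigma_finite' μ₀ hsupp
  constructor
  have h := congrArg (fun μ => μ Set.univ) (map_shift hq0 hq1 μ₀ hsupp m)
  simp only [Measure.map_apply (measurable_const_mul (q ^ m)) MeasurableSet.univ,
    Set.preimage_univ] at h
  rw [h]
  rw [Measure.smul_apply, smul_eq_mul]
  exact ENNReal.mul_lt_top (by simp) (measure_lt_top _ _)

/-- the torus strip -/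
def strip (q : ℝ) (m : ℤ) : Set ((AddCircle (1 : ℝ) × AddCircle (1 : ℝ)) × ℝ) :=
  Prod.snd ⁻¹' shI q m

lemma measurableSet_strip (q : ℝ) (m : ℤ) : MeasurableSet (strip q m) :=
  measurable_snd (measurableSet_shI q m)

lemma nu_restrict (q : ℝ) (μ₀ : Measure ℝ) [IsFiniteMeasure μ₀] (m : ℤ) :
    (nuMeas q μ₀).restrict (strip q m) =
    (volume : Measure (AddCircle (1 : ℝ) × AddCircle (1 : ℝ))).prod
      (((muExt q μ₀).withDensity fun r => ENNReal.ofReal r).restrict (shI q m)) := by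
  have : strip q m = Set.univ ×ˢ shI q m := by ext; simp [strip]
  rw [this, nuMeas, ← Measure.prod_restrict, Measure.restrict_univ]

instance : IsProbabilityMeasure (volume : Measure (AddCircle (1 : ℝ) × AddCircle (1 : ℝ))) := by
  constructor
  rw [← Set.univ_prod_univ, Measure.volume_eq_prod, Measure.prod_prod]
  simp

lemma map_strip {q : ℝ} (hq0 : 0 < q) (hq1 : q < 1) (μ₀ : Measure ℝ) [IsFiniteMeasure μ₀]
    (hsupp : μ₀ (Set.Ioc q 1)ᶜ = 0) (m : ℤ) :
    ((nuMeas q μ₀).restrict (strip q m)).map (fun p => q ^ m * p.2) =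
    (ENNReal.ofReal (q ^ (-m)) ^ 2) • (μ₀.withDensity fun r => ENNReal.ofReal r) := by
  rw [← map_shift hq0 hq1 μ₀ hsupp m, nu_restrict]
  have : (fun p : (AddCircle (1 : ℝ) × AddCircle (1 : ℝ)) × ℝ => q ^ m * p.2) =
    (fun r => q ^ m * r) ∘ Prod.snd := rfl
  rw [this, ← Measure.map_map (measurable_const_mul _) measurable_snd, Measure.map_snd_prod]
  simp

lemma ae_strip {q : ℝ} (hq0 : 0 < q) (hq1 : q < 1) (μ₀ : Measure ℝ) [IsFiniteMeasure μ₀] :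
    ∀ᵐ p ∂(nuMeas q μ₀), ∃ m, p ∈ strip q m := by
  have h1 : ∀ᵐ r ∂((muExt q μ₀).withDensity fun r => ENNReal.ofReal r), 0 < r := by
    rw [ae_withDensity_iff ENNReal.measurable_ofReal]
    refine Filter.Eventually.of_forall fun r hr => ?_
    simpa using hr
  have h2 : ∀ᵐ p ∂(nuMeas q μ₀), 0 < p.2 := Measure.quasiMeasurePreserving_snd.ae h1
  filter_upwards [h2] with p hp
  exact exists_shift hq0 hq1 hp

/-- the function `(u,v,r) ↦ qᵐ uᵏ vˡ f(qᵐ r)` -/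
def Vfun (q : ℝ) (m k l : ℤ) (f : ℝ → ℂ) (p : (AddCircle (1 : ℝ) × AddCircle (1 : ℝ)) × ℝ) : ℂ :=
  (q : ℂ) ^ m * (AddCircle.toCircle p.1.1 : ℂ) ^ k * (AddCircle.toCircle p.1.2 : ℂ) ^ l
    * Set.indicator (Set.Ioc q 1) f (q ^ m * p.2)

lemma fourier_eq_zpow (k : ℤ) (x : AddCircle (1 : ℝ)) :
    fourier k x = (AddCircle.toCircle x : ℂ) ^ k := by
  rw [fourier_apply, AddCircle.toCircle_zsmul, Circle.coe_zpow]

lemma norm_fourier' (k : ℤ) (x : AddCircle (1 : ℝ)) : ‖(fourier k x : ℂ)‖ = 1 := by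
  rw [fourier_eq_zpow, norm_zpow, Circle.norm_coe, one_zpow]

lemma Vfun_eq (q : ℝ) (m k l : ℤ) (f : ℝ → ℂ) :
    Vfun q m k l f = (strip q m).indicator
      (fun p => (q : ℂ) ^ m * fourier k p.1.1 * fourier l p.1.2 * f (q ^ m * p.2)) := by
  ext p
  simp only [Vfun, fourier_eq_zpow]
  by_cases hp : p ∈ strip q m
  · rw [Set.indicator_of_mem hp, Set.indicator_of_mem (show q ^ m * p.2 ∈ Set.Ioc q 1 from hp)]
  · rw [Set.indicator_of_notMem hp,
      Set.indicator_of_notMem (show q ^ m * p.2 ∉ Set.Ioc q 1 from hp), mul_zero]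

section
variable {q : ℝ} (hq0 : 0 < q) (hq1 : q < 1) {μ₀ : Measure ℝ} [IsFiniteMeasure μ₀]
  (hsupp : μ₀ (Set.Ioc q 1)ᶜ = 0) (m k l : ℤ)

lemma qmp : 0 < q → q < 1 → μ₀ (Set.Ioc q 1)ᶜ = 0 →
    Measure.QuasiMeasurePreserving
    (fun p : (AddCircle (1 : ℝ) × AddCircle (1 : ℝ)) × ℝ => q ^ m * p.2)
    ((nuMeas q μ₀).restrict (strip q m)) (μ₀.withDensity fun r => ENNReal.ofReal r) := by
  intro hq0 hq1 hsupp
  refine ⟨by fun_prop, ?_⟩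
  rw [map_strip hq0 hq1 μ₀ hsupp m]
  exact Measure.smul_absolutelyContinuous

include hq0 hq1 hsupp in
lemma Vfun_congr {f g : ℝ → ℂ} (h : f =ᵐ[μ₀.withDensity fun r => ENNReal.ofReal r] g) :
    Vfun q m k l f =ᵐ[nuMeas q μ₀] Vfun q m k l g := by
  have := (qmp m hq0 hq1 hsupp).ae_eq_comp h
  rw [Filter.EventuallyEq, ae_restrict_iff' (measurableSet_strip q m)] at this
  filter_upwards [this] with p hp
  rw [Vfun_eq, Vfun_eq]
  by_cases hps : p ∈ strip q m
  · have := hp hps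
    simp only [Function.comp_apply] at this
    simp [hps, this]
  · simp [hps]

include hq0 hq1 hsupp in
lemma Vfun_aesm {f : ℝ → ℂ}
    (h : AEStronglyMeasurable f (μ₀.withDensity fun r => ENNReal.ofReal r)) :
    AEStronglyMeasurable (Vfun q m k l f) (nuMeas q μ₀) := by
  rw [Vfun_eq, aestronglyMeasurable_indicator_iff (measurableSet_strip q m)]
  refine AEStronglyMeasurable.mul (Continuous.aestronglyMeasurable (by fun_prop))
    (h.comp_quasiMeasurePreserving (qmp m hq0 hq1 hsupp))

include hq0 hq1 hsupp in
lemma Vfun_norm {f : ℝ → ℂ}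
    (h : AEStronglyMeasurable f (μ₀.withDensity fun r => ENNReal.ofReal r)) :
    eLpNorm (Vfun q m k l f) 2 (nuMeas q μ₀) =
      eLpNorm f 2 (μ₀.withDensity fun r => ENNReal.ofReal r) := by
  rw [Vfun_eq, eLpNorm_indicator_eq_eLpNorm_restrict (measurableSet_strip q m)]
  have h1 : eLpNorm (fun p : (AddCircle (1 : ℝ) × AddCircle (1 : ℝ)) × ℝ =>
      (q : ℂ) ^ m * fourier k p.1.1 * fourier l p.1.2 * f (q ^ m * p.2)) 2
      ((nuMeas q μ₀).restrict (strip q m)) =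
      eLpNorm ((q : ℂ) ^ m • (f ∘ fun p : (AddCircle (1 : ℝ) × AddCircle (1 : ℝ)) × ℝ =>
        q ^ m * p.2)) 2 ((nuMeas q μ₀).restrict (strip q m)) := by
    refine eLpNorm_congr_norm_ae (Filter.Eventually.of_forall fun p => ?_)
    simp only [norm_mul, norm_fourier', Pi.smul_apply, Function.comp_apply, norm_smul, mul_one]
  rw [h1, eLpNorm_const_smul, ← eLpNorm_map_measure _ (by fun_prop), map_strip hq0 hq1 μ₀ hsupp m,
    eLpNorm_smul_measure_of_ne_top (by simp), smul_eq_mul, ← mul_assoc]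
  · have h2 : ((ENNReal.ofReal (q ^ (-m)) ^ 2) ^ (1 / (2 : ENNReal)).toReal) =
        ENNReal.ofReal (q ^ (-m)) := by
      rw [← ENNReal.rpow_natCast, ← ENNReal.rpow_mul]
      simp
    have h3 : ‖(q : ℂ) ^ m‖ₑ = ENNReal.ofReal (q ^ m) := by
      rw [← ofReal_norm]
      simp [abs_of_pos hq0]
    rw [h2, h3, ← ENNReal.ofReal_mul (by positivity), ← zpow_add₀ hq0.ne']
    simp
  · rw [map_strip hq0 hq1 μ₀ hsupp m]
    exact h.smul_measure _

include hq0 hq1 hsupp in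
lemma Vfun_memLp {f : ℝ → ℂ} (h : MemLp f 2 (μ₀.withDensity fun r => ENNReal.ofReal r)) :
    MemLp (Vfun q m k l f) 2 (nuMeas q μ₀) :=
  ⟨Vfun_aesm hq0 hq1 hsupp m k l h.1, by
    rw [Vfun_norm hq0 hq1 hsupp m k l h.1]; exact h.2⟩

/-- the isometry on each summand -/
def Vmap : HZero μ₀ →ₗᵢ[ℂ] targetL2 q μ₀ where
  toFun ζ := (Vfun_memLp hq0 hq1 hsupp m k l (Lp.memLp ζ)).toLp _
  map_add' ζ ξ := by
    rw [← MemLp.toLp_add]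
    refine MemLp.toLp_congr _ _ ?_
    refine (Vfun_congr hq0 hq1 hsupp m k l (Lp.coeFn_add ζ ξ)).trans ?_
    refine Filter.Eventually.of_forall fun p => ?_
    simp only [Vfun, Set.indicator_add', Pi.add_apply]
    ring
  map_smul' c ζ := by
    rw [RingHom.id_apply, ← MemLp.toLp_const_smul]
    refine MemLp.toLp_congr _ _ ?_
    refine (Vfun_congr hq0 hq1 hsupp m k l (Lp.coeFn_smul c ζ)).trans ?_
    refine Filter.Eventually.of_forall fun p => ?_
    simp only [Vfun, Pi.smul_apply, smul_eq_mul, Set.indicator]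
    split_ifs
    · ring
    · simp only [mul_zero]
  norm_map' ζ := by
    change ‖(Vfun_memLp hq0 hq1 hsupp m k l (Lp.memLp ζ)).toLp _‖ = _
    rw [Lp.norm_toLp, Vfun_norm hq0 hq1 hsupp m k l (Lp.memLp ζ).1, Lp.norm_def]

lemma Vmap_coe (ζ : HZero μ₀) :
    (Vmap hq0 hq1 hsupp m k l ζ : _ → ℂ) =ᵐ[nuMeas q μ₀] Vfun q m k l ζ :=
  MemLp.coeFn_toLp (Vfun_memLp hq0 hq1 hsupp m k l (Lp.memLp ζ))

lemma integral_fourier_zero {k : ℤ} (hk : k ≠ 0) :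
    ∫ x : AddCircle (1 : ℝ), fourier k x = 0 :=
  integral_eq_zero_of_add_right_eq_neg (g := ((1 / 2 / k : ℝ) : AddCircle (1 : ℝ))) (fun x => by
    exact fourier_add_half_inv_index hk one_pos x)

lemma orth : OrthogonalFamily ℂ (fun _ : ℤ × ℤ × ℤ => HZero μ₀)
    (fun i => Vmap hq0 hq1 hsupp i.1 i.2.1 i.2.2) := by
  rintro ⟨m, k, l⟩ ⟨m', k', l'⟩ hne ζ ξ
  simp only
  rw [L2.inner_def]
  have h1 : ∫ p, inner ℂ ((Vmap hq0 hq1 hsupp m k l ζ) p) ((Vmap hq0 hq1 hsupp m' k' l' ξ) p)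
      ∂(nuMeas q μ₀) = ∫ p, inner ℂ (Vfun q m k l ζ p) (Vfun q m' k' l' ξ p) ∂(nuMeas q μ₀) := by
    refine integral_congr_ae ?_
    filter_upwards [Vmap_coe hq0 hq1 hsupp m k l ζ, Vmap_coe hq0 hq1 hsupp m' k' l' ξ] with p h1 h2
    rw [h1, h2]
  rw [h1]
  by_cases hm : m = m'
  · subst hm
    have h2 : ∀ p, inner ℂ (Vfun q m k l ζ p) (Vfun q m k' l' ξ p) =
        (fun x : AddCircle (1 : ℝ) × AddCircle (1 : ℝ) =>
          fourier (k' - k) x.1 * fourier (l' - l) x.2) p.1 *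
        (fun r => (q : ℂ) ^ m * (starRingEnd ℂ) ((q : ℂ) ^ m) *
          (starRingEnd ℂ) (Set.indicator (Set.Ioc q 1) ζ (q ^ m * r)) *
          Set.indicator (Set.Ioc q 1) ξ (q ^ m * r)) p.2 := by
      intro p
      simp only [Vfun, ← fourier_eq_zpow, sub_eq_add_neg, fourier_add, fourier_neg,
        RCLike.inner_apply, map_mul]
      ring
    rw [integral_congr_ae (Filter.Eventually.of_forall h2), nuMeas]
    refine (integral_prod_mul (fun x : AddCircle (1 : ℝ) × AddCircle (1 : ℝ) =>
          (fourier (k' - k) x.1 * fourier (l' - l) x.2 : ℂ)) (fun r => (q : ℂ) ^ m *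
          (starRingEnd ℂ) ((q : ℂ) ^ m) *
          (starRingEnd ℂ) (Set.indicator (Set.Ioc q 1) ζ (q ^ m * r)) *
          Set.indicator (Set.Ioc q 1) ξ (q ^ m * r))).trans ?_
    rw [Measure.volume_eq_prod,
      integral_prod_mul (fun x => (fourier (k' - k) x : ℂ)) (fun x => (fourier (l' - l) x : ℂ))]
    by_cases hk : k = k'
    · have hl : l' - l ≠ 0 := by
        intro h
        exact hne (by simp [hk, sub_eq_zero.1 h])
      rw [integral_fourier_zero hl]; simp
    · rw [integral_fourier_zero (sub_ne_zero.2 (Ne.symm hk))]; simp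
  · have h2 : ∀ p, inner ℂ (Vfun q m k l ζ p) (Vfun q m' k' l' ξ p) = 0 := by
      intro p
      simp only [Vfun]
      by_cases hp : q ^ m * p.2 ∈ Set.Ioc q 1
      · rw [Set.indicator_of_notMem (a := q ^ m' * p.2)]
        · simp
        · exact fun h => hm (mem_shift hq0 hq1 hp h)
      · rw [Set.indicator_of_notMem hp]; simp
    rw [integral_congr_ae (Filter.Eventually.of_forall h2), integral_zero]

lemma total : ⊤ ≤ (⨆ i : ℤ × ℤ × ℤ,
    LinearMap.range (Vmap hq0 hq1 hsupp i.1 i.2.1 i.2.2).toLinearMap).topologicalClosure := by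
  rw [top_le_iff, Submodule.topologicalClosure_eq_top_iff, Submodule.eq_bot_iff]
  intro φ hφ
  have := sigma_finite' μ₀ hsupp
  have horth : ∀ (m k l : ℤ) (ζ : HZero μ₀), inner ℂ (Vmap hq0 hq1 hsupp m k l ζ) φ = 0 := by
    intro m k l ζ
    refine (Submodule.mem_orthogonal _ _).1 hφ _ ?_
    exact Submodule.mem_iSup_of_mem (m, k, l) ⟨ζ, rfl⟩
  have hz : ∀ m, ∀ᵐ p ∂(nuMeas q μ₀), p ∈ strip q m → φ p = 0 := by
    intro m
    rw [← ae_restrict_iff' (measurableSet_strip q m)]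
    have hfin : IsFiniteMeasure ((nuMeas q μ₀).restrict (strip q m)) := by
      have := finite_shift hq0 hq1 μ₀ hsupp m
      rw [nu_restrict]; infer_instance
    refine aux_zero _ _ (((Lp.memLp φ).restrict _).integrable (by norm_num)) ?_
    intro k l D hD
    set E : Set ℝ := (fun r => q ^ (-m) * r) ⁻¹' D with hE
    have hEm : MeasurableSet E := measurable_const_mul _ hD
    have h0 := horth m (-k) (-l) (indicatorConstLp 2 hEm (measure_ne_top _ _) 1)
    rw [L2.inner_def] at h0
    have h1 : ∫ p, inner ℂ ((Vmap hq0 hq1 hsupp m (-k) (-l)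
        (indicatorConstLp 2 hEm (measure_ne_top _ _) 1)) p) (φ p) ∂(nuMeas q μ₀) =
        ∫ p, (strip q m ∩ Prod.snd ⁻¹' D).indicator (fun p => (q : ℂ) ^ m *
          (fourier k p.1.1 * fourier l p.1.2 * φ p)) p ∂(nuMeas q μ₀) := by
      refine integral_congr_ae ?_
      filter_upwards [Vmap_coe hq0 hq1 hsupp m (-k) (-l)
        (indicatorConstLp 2 hEm (measure_ne_top _ _) 1),
        Vfun_congr hq0 hq1 hsupp m (-k) (-l) (indicatorConstLp_coeFn (p := 2) (hs := hEm)
          (hμs := measure_ne_top _ _) (c := (1 : ℂ)))] with p h1 h2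
      rw [h1, h2, Vfun_eq]
      have h3 : q ^ m * p.2 ∈ E ↔ p.2 ∈ D := by
        rw [hE, Set.mem_preimage, ← mul_assoc, ← zpow_add₀ hq0.ne']; simp
      by_cases hp : p ∈ strip q m
      · by_cases hd : p.2 ∈ D
        · simp only [Set.indicator_of_mem hp, Set.indicator_of_mem (h3.2 hd)]
          rw [Set.indicator_of_mem (show p ∈ strip q m ∩ Prod.snd ⁻¹' D from ⟨hp, hd⟩)]
          simp only [RCLike.inner_apply, map_mul, fourier_neg, Complex.conj_conj, map_one,
            map_zpow₀, Complex.conj_ofReal]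
          ring
        · simp only [Set.indicator_of_mem hp, Set.indicator_of_notMem (fun h => hd (h3.1 h))]
          rw [Set.indicator_of_notMem (fun h => hd h.2)]
          simp
      · rw [Set.indicator_of_notMem hp, Set.indicator_of_notMem (fun h => hp h.1)]
        simp
    have hDm : MeasurableSet ((Prod.snd : (AddCircle (1 : ℝ) × AddCircle (1 : ℝ)) × ℝ → ℝ) ⁻¹' D) :=
      measurable_snd hD
    rw [h1, integral_indicator ((measurableSet_strip q m).inter hDm), integral_const_mul] at h0
    rw [Measure.restrict_restrict hDm, Set.inter_comm]
    refine (mul_eq_zero.1 h0).resolve_left ?_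
    exact zpow_ne_zero _ (by exact_mod_cast hq0.ne')
  rw [Lp.eq_zero_iff_ae_eq_zero]
  filter_upwards [ae_strip hq0 hq1 μ₀, ae_all_iff.2 hz] with p ⟨m, hp⟩ h
  exact h m hp

end

/-- Let `0 < q < 1`, let `μ₀` be a finite positive Borel measure on the
interval `(q,1] ⊆ ℝ` and `μ` its extension to `ℝ⁺` with `μ(qᵏM) = qᵏμ₀(M)`.  The map `W`
sending `ζ ∈ H₀ = L²((q,1], r·dμ₀)` placed in the `(m,k,l)`-th summand of
`H = ⊕_{ℤ³} H₀` to the function `(u,v,r) ↦ qᵐ·uᵏ·vˡ·ζ̃(qᵐr)` on `𝕋² × ℝ⁺` (where `ζ̃`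
is the extension of `ζ` by zero and `u, v` are the circle coordinates) is well defined
and extends to a unitary operator `W : H → L²(𝕋² × ℝ⁺, (Haar) ⊗ (r·dμ(r)))`. -/
theorem stmt_18 (q : ℝ) (hq0 : 0 < q) (hq1 : q < 1)
    (μ₀ : Measure ℝ) [IsFiniteMeasure μ₀] (hsupp : μ₀ (Set.Ioc q 1)ᶜ = 0) :
    ∃ W : bigH μ₀ ≃ₗᵢ[ℂ] targetL2 q μ₀,
      ∀ (m k l : ℤ) (ζ : HZero μ₀),
        (W (lp.single 2 (m, k, l) ζ) :
            ((AddCircle (1 : ℝ) × AddCircle (1 : ℝ)) × ℝ) → ℂ)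
          =ᵐ[nuMeas q μ₀] fun p =>
            (q : ℂ) ^ m * (AddCircle.toCircle p.1.1 : ℂ) ^ k
              * (AddCircle.toCircle p.1.2 : ℂ) ^ l
              * Set.indicator (Set.Ioc q 1) (fun r => (ζ : ℝ → ℂ) r) (q ^ m * p.2) := by
  have hV := IsHilbertSum.mk (orth hq0 hq1 hsupp) (total hq0 hq1 hsupp)
  refine ⟨hV.linearIsometryEquiv.symm, fun m k l ζ => ?_⟩
  have h1 : hV.linearIsometryEquiv.symm (lp.single 2 (m, k, l) ζ) =
      Vmap hq0 hq1 hsupp m k l ζ :=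
    hV.linearIsometryEquiv_symm_apply_single (i := (m, k, l)) ζ
  rw [h1]
  exact Vmap_coe hq0 hq1 hsupp m k l ζ

end
end
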